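/- arXiv:1205.0873 — 3 statements merged into one kernel-verified Lean document; each statement's English description precedes it below -/
import Mathlib

section
/- Let X be a geodesic ptolemaic metric space and suppose there is a homeomorphism h : ℝ × [0,1] → X together with two unit-speed geodesic lines c₀, c₁ : ℝ → X that are parallel and whose images are h(ℝ × {0}) and h(ℝ × {1}) respectively. Then there exists a ≥ 0 such that X is isometric to the flat strip ℝ × [0,a] ⊆ ℝ² equipped with the Euclidean metric. -/
open Metric Set Filter Topology

/-- A metric space is ptolemaic if all quadruples satisfy the Ptolemy inequality. -/
def Ptolemaic (X : Type*) [MetricSpace X] : Prop :=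
  ∀ x y z w : X, dist x y * dist z w ≤ dist x z * dist y w + dist x w * dist y z

/-- A metric space is geodesic if every pair of points is joined by a geodesic. -/
def GeodesicMetricSpace (X : Type*) [MetricSpace X] : Prop :=
  ∀ x y : X, ∃ c : ℝ → X, c 0 = x ∧ c 1 = y ∧
    ∀ s ∈ Set.Icc (0:ℝ) 1, ∀ t ∈ Set.Icc (0:ℝ) 1,
      dist (c s) (c t) = dist x y * |s - t|

/-- A unit-speed geodesic line: an isometric embedding of ℝ. -/
def IsGeodesicLine {X : Type*} [MetricSpace X] (c : ℝ → X) : Prop :=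
  ∀ s t : ℝ, dist (c s) (c t) = |s - t|

/-- Two lines are parallel if their distance is sublinear in both directions. -/
def ParallelLines {X : Type*} [MetricSpace X] (c₀ c₁ : ℝ → X) : Prop :=
  Filter.Tendsto (fun t => dist (c₀ t) (c₁ t) / |t|) Filter.atTop (nhds 0) ∧
  Filter.Tendsto (fun t => dist (c₀ t) (c₁ t) / |t|) Filter.atBot (nhds 0)

/-- Busemann function. -/
noncomputable def bus {X : Type*} [MetricSpace X] (c : ℝ → X) (z : X) : ℝ :=
  ⨅ t : ℝ, (dist z (c t) - t)

/-- Reversed line. -/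
def revl {X : Type*} (c : ℝ → X) : ℝ → X := fun t => c (-t)

section BusSec
variable {X : Type*} [MetricSpace X] {c : ℝ → X}

lemma IsGeodesicLine.rev (hc : IsGeodesicLine c) : IsGeodesicLine (revl c) := by
  intro s t
  simp only [revl]
  rw [hc, ← abs_neg]; congr 1; ring

lemma IsGeodesicLine.shift (hc : IsGeodesicLine c) (a : ℝ) :
    IsGeodesicLine (fun s => c (s + a)) := by
  intro s t
  simp only []
  rw [hc]; congr 1; ring

lemma bus_bdd (hc : IsGeodesicLine c) (z : X) :
    BddBelow (range fun t : ℝ => dist z (c t) - t) := by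
  refine ⟨- dist z (c 0), ?_⟩
  rintro _ ⟨t, rfl⟩
  have h1 := hc 0 t
  have h2 := dist_triangle_left (c 0) (c t) z
  have h3 : t ≤ |0 - t| := by rw [zero_sub, abs_neg]; exact le_abs_self t
  simp only
  linarith

lemma bus_anti (hc : IsGeodesicLine c) (z : X) :
    Antitone (fun t : ℝ => dist z (c t) - t) := by
  intro s t hst
  have h1 := hc s t
  have h2 := dist_triangle z (c s) (c t)
  have h3 : |s - t| = t - s := by rw [abs_sub_comm, abs_of_nonneg (by linarith)]
  simp only
  linarith

lemma bus_tendsto (hc : IsGeodesicLine c) (z : X) :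
    Tendsto (fun t : ℝ => dist z (c t) - t) atTop (𝓝 (bus c z)) :=
  tendsto_atTop_ciInf (bus_anti hc z) (bus_bdd hc z)

lemma bus_le (hc : IsGeodesicLine c) (z : X) (t : ℝ) : bus c z ≤ dist z (c t) - t :=
  ciInf_le (bus_bdd hc z) t

lemma bus_self (hc : IsGeodesicLine c) (s : ℝ) : bus c (c s) = - s := by
  refine tendsto_nhds_unique (bus_tendsto hc (c s)) ?_
  refine tendsto_const_nhds.congr' ?_
  filter_upwards [eventually_ge_atTop s] with t ht
  rw [hc, abs_sub_comm, abs_of_nonneg (by linarith)]; ring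

lemma bus_rev_self (hc : IsGeodesicLine c) (s : ℝ) : bus (revl c) (c s) = s := by
  have := bus_self hc.rev (-s)
  simpa [revl] using this

lemma bus_lip (hc : IsGeodesicLine c) (z w : X) : bus c z ≤ bus c w + dist z w := by
  refine le_of_tendsto_of_tendsto' (bus_tendsto hc z) ((bus_tendsto hc w).add_const _) ?_
  intro t
  have := dist_triangle z w (c t)
  linarith

lemma bus_abs (hc : IsGeodesicLine c) (z w : X) : |bus c z - bus c w| ≤ dist z w := by
  rw [abs_le]
  have h1 := bus_lip hc z w
  have h2 := bus_lip hc w z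
  rw [dist_comm w z] at h2
  constructor <;> linarith

lemma bus_convex (hPT : Ptolemaic X) (hc : IsGeodesicLine c) {a m b : X}
    (hm : dist a m + dist m b = dist a b) :
    dist a b * bus c m ≤ dist m b * bus c a + dist a m * bus c b := by
  refine le_of_tendsto_of_tendsto' ((bus_tendsto hc m).const_mul _)
    (((bus_tendsto hc a).const_mul _).add ((bus_tendsto hc b).const_mul _)) ?_
  intro t
  have := hPT m (c t) a b
  have e1 := dist_comm (c t) b
  have e2 := dist_comm (c t) a
  have e3 := dist_comm m a
  rw [e1, e2, e3] at this
  rw [← hm] at *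
  nlinarith

lemma bus_add_rev (hc : IsGeodesicLine c) (z : X) : 0 ≤ bus c z + bus (revl c) z := by
  refine ge_of_tendsto ((bus_tendsto hc z).add (bus_tendsto hc.rev z)) ?_
  filter_upwards [eventually_ge_atTop 0] with t ht
  have h1 := hc t (-t)
  have h2 := dist_triangle_left (c t) (c (-t)) z
  rw [abs_of_nonneg (by linarith)] at h1
  simp only [revl]
  linarith

lemma bus_shift (hc : IsGeodesicLine c) (a : ℝ) (z : X) :
    bus (fun s => c (s + a)) z = bus c z + a := by
  refine tendsto_nhds_unique (bus_tendsto (hc.shift a) z) ?_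
  have := ((bus_tendsto hc z).comp (tendsto_atTop_add_const_right atTop a tendsto_id)).add_const a
  refine this.congr ?_
  intro t
  simp only [Function.comp, id]
  ring

lemma bus_par_le (hPT : Ptolemaic X) {c₀ c₁ : ℝ → X} (h₀ : IsGeodesicLine c₀)
    (h₁ : IsGeodesicLine c₁)
    (hp : Tendsto (fun t => dist (c₀ t) (c₁ t) / |t|) atTop (𝓝 0)) (z w : X) :
    bus c₀ z + bus c₁ w ≤ bus c₁ z + bus c₀ w := by
  have T1 := bus_tendsto h₀ z
  have T2 := bus_tendsto h₁ w
  have T3 := bus_tendsto h₁ z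
  have T4 := bus_tendsto h₀ w
  have inv : Tendsto (fun t : ℝ => t⁻¹) atTop (𝓝 0) := tendsto_inv_atTop_zero
  have L := (T1.add T2).add ((T1.mul T2).mul inv)
  have R := ((T3.add T4).add ((T3.mul T4).mul inv)).add (hp.const_mul (dist z w))
  simp only [mul_zero, add_zero] at L R
  refine le_of_tendsto_of_tendsto L R ?_
  filter_upwards [eventually_gt_atTop 0] with t ht
  have := hPT z (c₀ t) w (c₁ t)
  rw [abs_of_pos ht]
  have e : dist (c₀ t) w = dist w (c₀ t) := dist_comm _ _
  rw [e] at this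
  rw [← sub_nonneg] at this ⊢
  have h2 := div_nonneg this ht.le
  refine h2.trans (le_of_eq ?_)
  field_simp
  ring

lemma bus_parallel (hPT : Ptolemaic X) {c₀ c₁ : ℝ → X} (h₀ : IsGeodesicLine c₀)
    (h₁ : IsGeodesicLine c₁) (hp : ParallelLines c₀ c₁) :
    ∃ a : ℝ, (∀ z, bus (fun s => c₁ (s + a)) z = bus c₀ z) ∧
      (∀ z, bus (revl (fun s => c₁ (s + a))) z = bus (revl c₀) z) := by
  have hp1 : Tendsto (fun t => dist (c₁ t) (c₀ t) / |t|) atTop (𝓝 0) := by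
    simpa only [dist_comm] using hp.1
  have hq : Tendsto (fun t => dist (revl c₀ t) (revl c₁ t) / |t|) atTop (𝓝 0) := by
    have := hp.2.comp tendsto_neg_atTop_atBot
    refine this.congr ?_
    intro t; simp [revl]
  have hq1 : Tendsto (fun t => dist (revl c₁ t) (revl c₀ t) / |t|) atTop (𝓝 0) := by
    simpa only [dist_comm] using hq
  have A : ∀ z w, bus c₀ z + bus c₁ w = bus c₁ z + bus c₀ w := fun z w =>
    le_antisymm (bus_par_le hPT h₀ h₁ hp.1 z w) (by
      have := bus_par_le hPT h₁ h₀ hp1 z w; linarith)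
  have B : ∀ z w, bus (revl c₀) z + bus (revl c₁) w = bus (revl c₁) z + bus (revl c₀) w :=
    fun z w => le_antisymm (bus_par_le hPT h₀.rev h₁.rev hq z w) (by
      have := bus_par_le hPT h₁.rev h₀.rev hq1 z w; linarith)
  have a1 := bus_self h₀ 0
  have a2 := bus_rev_self h₀ 0
  have a3 := bus_self h₁ 0
  have a4 := bus_rev_self h₁ 0
  have a5 := bus_add_rev h₀ (c₁ 0)
  have a6 := bus_add_rev h₁ (c₀ 0)
  have b1 := A (c₀ 0) (c₁ 0)
  have b2 := B (c₀ 0) (c₁ 0)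
  refine ⟨- bus c₁ (c₀ 0), ?_, ?_⟩
  · intro z
    rw [bus_shift h₁]
    have := A z (c₀ 0)
    linarith
  · intro z
    have e : revl (fun s => c₁ (s + - bus c₁ (c₀ 0))) = fun s => revl c₁ (s + bus c₁ (c₀ 0)) := by
      funext s; simp [revl]; congr 1; ring
    rw [e, bus_shift h₁.rev]
    have := B z (c₀ 0)
    linarith

end BusSec

lemma avoid_lt {g : ℝ → ℝ} (hg : Continuous g) {a b v : ℝ} (ha : g a < v)
    (h : ∀ x ∈ uIcc a b, g x ≠ v) : g b < v := by
  by_contra hb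
  push Not at hb
  have := intermediate_value_uIcc (hg.continuousOn (s := uIcc a b))
  obtain ⟨x, hx, hxv⟩ := this (show v ∈ uIcc (g a) (g b) from ⟨by simp [ha.le], by simp [hb]⟩)
  exact h x hx hxv

lemma avoid_gt {g : ℝ → ℝ} (hg : Continuous g) {a b v : ℝ} (ha : v < g a)
    (h : ∀ x ∈ uIcc a b, g x ≠ v) : v < g b := by
  by_contra hb
  push Not at hb
  have := intermediate_value_uIcc (hg.continuousOn (s := uIcc a b))
  obtain ⟨x, hx, hxv⟩ := this (show v ∈ uIcc (g a) (g b) from ⟨by simp [hb], by simp [ha.le]⟩)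
  exact h x hx hxv

lemma winding_aux {θ : ℝ × ℝ → ℝ} (hθ : Continuous θ) {a b c d : ℝ} (hab : a ≤ b) (hcd : c ≤ d)
    (hl : ∀ y ∈ Icc c d, Real.cos (θ (a, y)) < 0) (hr : ∀ y ∈ Icc c d, 0 < Real.cos (θ (b, y)))
    (hb : ∀ x ∈ Icc a b, Real.sin (θ (x, c)) ≤ 0) (ht : ∀ x ∈ Icc a b, 0 ≤ Real.sin (θ (x, d)))
    (h0 : |θ (b, c)| ≤ Real.pi) : False := by
  have pp := Real.pi_pos
  have c1 : Real.cos (Real.pi / 2) = 0 := Real.cos_pi_div_two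
  have c2 : Real.cos (-(Real.pi / 2)) = 0 := by rw [Real.cos_neg, c1]
  have c3 : Real.cos (3 * Real.pi / 2) = 0 := by
    rw [show 3 * Real.pi / 2 = Real.pi / 2 + Real.pi by ring, Real.cos_add_pi, c1, neg_zero]
  have s1 : Real.sin (Real.pi / 2) = 1 := Real.sin_pi_div_two
  have s2 : Real.sin (-(Real.pi / 2)) = -1 := by rw [Real.sin_neg, s1]
  have s3 : Real.sin (3 * Real.pi / 2) = -1 := by
    rw [show 3 * Real.pi / 2 = Real.pi / 2 + Real.pi by ring, Real.sin_add_pi, s1]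
  have gy : ∀ x, Continuous fun y => θ (x, y) := fun x => by fun_prop
  have gx : ∀ y, Continuous fun x => θ (x, y) := fun y => by fun_prop
  have mc : c ∈ Icc c d := ⟨le_rfl, hcd⟩
  have md : d ∈ Icc c d := ⟨hcd, le_rfl⟩
  have k1 : |θ (b, c)| < Real.pi / 2 := by
    by_contra hh
    push Not at hh
    have := Real.cos_nonpos_of_pi_div_two_le_of_le hh (by linarith)
    rw [Real.cos_abs] at this
    linarith [hr c mc]
  obtain ⟨k2, k3⟩ := abs_lt.1 k1
  have r1 : θ (b, d) < Real.pi / 2 := avoid_lt (gy b) k3 (fun y hy e => by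
    rw [uIcc_of_le hcd] at hy
    have := hr y hy; rw [e, c1] at this; linarith)
  have r2 : -(Real.pi / 2) < θ (b, d) := avoid_gt (gy b) k2 (fun y hy e => by
    rw [uIcc_of_le hcd] at hy
    have := hr y hy; rw [e, c2] at this; linarith)
  have t1 : θ (a, d) < 3 * Real.pi / 2 := avoid_lt (gx d) (by linarith : θ (b, d) < _)
    (fun x hx e => by
      rw [uIcc_of_ge hab] at hx
      have := ht x hx; rw [e, s3] at this; linarith)
  have t2 : -(Real.pi / 2) < θ (a, d) := avoid_gt (gx d) r2 (fun x hx e => by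
      rw [uIcc_of_ge hab] at hx
      have := ht x hx; rw [e, s2] at this; linarith)
  have t3 : Real.pi / 2 < θ (a, d) := by
    by_contra hh
    push Not at hh
    have := Real.cos_nonneg_of_neg_pi_div_two_le_of_le t2.le hh
    linarith [hl d md]
  have l1 : θ (a, c) < 3 * Real.pi / 2 := avoid_lt (gy a) t1 (fun y hy e => by
    rw [uIcc_of_ge hcd] at hy
    have := hl y hy; rw [e, c3] at this; linarith)
  have l2 : Real.pi / 2 < θ (a, c) := avoid_gt (gy a) t3 (fun y hy e => by
    rw [uIcc_of_ge hcd] at hy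
    have := hl y hy; rw [e, c1] at this; linarith)
  have b1 : Real.pi / 2 < θ (b, c) := avoid_gt (gx c) l2 (fun x hx e => by
    rw [uIcc_of_le hab] at hx
    have := hb x hx; rw [e, s1] at this; linarith)
  linarith

lemma miranda_global {f : ℝ × ℝ → ℂ} (hf : Continuous f) {a b c d : ℝ} (hab : a ≤ b) (hcd : c ≤ d)
    (hl : ∀ y ∈ Icc c d, (f (a, y)).re < 0) (hr : ∀ y ∈ Icc c d, 0 < (f (b, y)).re)
    (hb : ∀ x ∈ Icc a b, (f (x, c)).im ≤ 0) (ht : ∀ x ∈ Icc a b, 0 ≤ (f (x, d)).im)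
    (hne : ∀ p, f p ≠ 0) : False := by
  have hcov := Complex.isCoveringMapOn_exp
  obtain ⟨L, ⟨-, hL⟩, -⟩ := hcov.existsUnique_continuousMap_lifts (A := ℝ × ℝ) ⟨f, hf⟩
    (a₀ := (0, 0)) (e₀ := Complex.log (f (0,0))) (Complex.exp_log (hne _)) (fun p => hne p)
  have hL' : ∀ p, Complex.exp (L p) = f p := fun p => congrFun hL p
  have re : ∀ p, (f p).re = Real.exp (L p).re * Real.cos (L p).im := fun p => by
    rw [← hL', Complex.exp_re]
  have im : ∀ p, (f p).im = Real.exp (L p).re * Real.sin (L p).im := fun p => by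
    rw [← hL', Complex.exp_im]
  set n : ℤ := round ((L (b, c)).im / (2 * Real.pi))
  have pp := Real.pi_pos
  refine winding_aux (θ := fun p => (L p).im - n * (2 * Real.pi)) (by fun_prop) hab hcd
    ?_ ?_ ?_ ?_ ?_
  · intro y hy
    have := hl y hy
    rw [re] at this
    simp only [Real.cos_sub_int_mul_two_pi]
    by_contra hh
    push Not at hh
    have := mul_nonneg (Real.exp_pos (L (a, y)).re).le hh
    linarith
  · intro y hy
    have := hr y hy
    rw [re] at this
    simp only [Real.cos_sub_int_mul_two_pi]
    exact (pos_iff_pos_of_mul_pos this).1 (Real.exp_pos _)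
  · intro x hx
    have := hb x hx
    rw [im] at this
    simp only [Real.sin_sub_int_mul_two_pi]
    by_contra hh
    push Not at hh
    have := mul_pos (Real.exp_pos (L (x, c)).re) hh
    linarith
  · intro x hx
    have := ht x hx
    rw [im] at this
    simp only [Real.sin_sub_int_mul_two_pi]
    exact nonneg_of_mul_nonneg_right this (Real.exp_pos _)
  · have := abs_sub_round ((L (b, c)).im / (2 * Real.pi))
    have e : (L (b, c)).im - n * (2 * Real.pi) =
      ((L (b, c)).im / (2 * Real.pi) - n) * (2 * Real.pi) := by field_simp
    rw [e, abs_mul, abs_of_pos (by positivity : 0 < 2 * Real.pi)]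
    nlinarith

theorem miranda {P Q : ℝ × ℝ → ℝ} {a b c d : ℝ} (hab : a ≤ b) (hcd : c ≤ d)
    (hP : ContinuousOn P (Icc a b ×ˢ Icc c d)) (hQ : ContinuousOn Q (Icc a b ×ˢ Icc c d))
    (hl : ∀ y ∈ Icc c d, P (a, y) < 0) (hr : ∀ y ∈ Icc c d, 0 < P (b, y))
    (hb : ∀ x ∈ Icc a b, Q (x, c) ≤ 0) (ht : ∀ x ∈ Icc a b, 0 ≤ Q (x, d)) :
    ∃ x ∈ Icc a b, ∃ y ∈ Icc c d, P (x, y) = 0 ∧ Q (x, y) = 0 := by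
  by_contra hno
  push Not at hno
  let r : ℝ × ℝ → ℝ × ℝ := fun p => (max a (min b p.1), max c (min d p.2))
  have hr0 : Continuous r := by fun_prop
  have hrm : ∀ p, r p ∈ Icc a b ×ˢ Icc c d := fun p => by
    refine ⟨⟨le_max_left _ _, max_le hab (min_le_left _ _)⟩,
      ⟨le_max_left _ _, max_le hcd (min_le_left _ _)⟩⟩
  have hre : ∀ x ∈ Icc a b, ∀ y ∈ Icc c d, r (x, y) = (x, y) := fun x hx y hy => by
    simp [r, hx.1, hx.2, hy.1, hy.2]
  have cP := hP.comp_continuous hr0 hrm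
  have cQ := hQ.comp_continuous hr0 hrm
  refine miranda_global (f := fun p => (⟨P (r p), Q (r p)⟩ : ℂ)) ?_ hab hcd ?_ ?_ ?_ ?_ ?_
  · have : (fun p => (⟨P (r p), Q (r p)⟩ : ℂ)) = fun p => ((P (r p) : ℂ) + (Q (r p) : ℂ) * Complex.I) := by
      funext p; exact Complex.mk_eq_add_mul_I _ _
    rw [this]
    have cP' := Complex.continuous_ofReal.comp cP
    have cQ' := Complex.continuous_ofReal.comp cQ
    exact cP'.add (cQ'.mul continuous_const)
  · intro y hy; simp only; rw [hre a ⟨le_rfl, hab⟩ y hy]; exact hl y hy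
  · intro y hy; simp only; rw [hre b ⟨hab, le_rfl⟩ y hy]; exact hr y hy
  · intro x hx; simp only; rw [hre x hx c ⟨le_rfl, hcd⟩]; exact hb x hx
  · intro x hx; simp only; rw [hre x hx d ⟨hcd, le_rfl⟩]; exact ht x hx
  · intro p hp
    have h1 := congrArg Complex.re hp
    have h2 := congrArg Complex.im hp
    exact hno _ (hrm p).1 _ (hrm p).2 h1 h2

/-- Geodesic segment parametrised on `[0,1]`. -/
def IsSeg {X : Type*} [MetricSpace X] (a b : X) (c : ℝ → X) : Prop :=
  c 0 = a ∧ c 1 = b ∧ ∀ s ∈ Icc (0:ℝ) 1, ∀ t ∈ Icc (0:ℝ) 1, dist (c s) (c t) = dist a b * |s - t|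

section SegSec
variable {X : Type*} [MetricSpace X] {a b : X} {c : ℝ → X}

lemma IsSeg.dist_left (h : IsSeg a b c) {s : ℝ} (hs : s ∈ Icc (0:ℝ) 1) :
    dist a (c s) = dist a b * s := by
  have := h.2.2 0 ⟨le_rfl, zero_le_one⟩ s hs
  rw [h.1] at this
  rw [this, zero_sub, abs_neg, abs_of_nonneg hs.1]

lemma IsSeg.dist_right (h : IsSeg a b c) {s : ℝ} (hs : s ∈ Icc (0:ℝ) 1) :
    dist (c s) b = dist a b * (1 - s) := by
  have := h.2.2 s hs 1 ⟨zero_le_one, le_rfl⟩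
  rw [h.2.1] at this
  rw [this, abs_sub_comm, abs_of_nonneg (by linarith [hs.2])]

lemma IsSeg.between (h : IsSeg a b c) {s : ℝ} (hs : s ∈ Icc (0:ℝ) 1) :
    dist a (c s) + dist (c s) b = dist a b := by
  rw [h.dist_left hs, h.dist_right hs]; ring

lemma IsSeg.continuousOn (h : IsSeg a b c) : ContinuousOn c (Icc 0 1) := by
  have : LipschitzOnWith ⟨dist a b, dist_nonneg⟩ c (Icc 0 1) :=
    LipschitzOnWith.of_dist_le_mul (fun s hs t ht => by
      rw [h.2.2 s hs t ht, Real.dist_eq]; rfl)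
  exact this.continuousOn

lemma IsSeg.symm (h : IsSeg a b c) : IsSeg b a (fun s => c (1 - s)) := by
  refine ⟨by simpa using h.2.1, by simpa using h.1, ?_⟩
  intro s hs t ht
  have := h.2.2 (1 - s) ⟨by linarith [hs.2], by linarith [hs.1]⟩ (1 - t)
    ⟨by linarith [ht.2], by linarith [ht.1]⟩
  rw [this, dist_comm a b, abs_sub_comm s t]; congr 2; ring

end SegSec

/-- Topological strip data. -/
structure TS (X : Type*) [MetricSpace X] where
  hPT : Ptolemaic X
  hgeo : GeodesicMetricSpace X
  x : X → ℝ
  y : X → ℝ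
  hx : Continuous x
  hy : Continuous y
  y0 : ∀ z, 0 ≤ y z
  y1 : ∀ z, y z ≤ 1
  inj : ∀ z w, x z = x w → y z = y w → z = w
  cpt : ∀ R, IsCompact {z | |x z| ≤ R}
  c0 : ℝ → X
  c1 : ℝ → X
  hc0 : IsGeodesicLine c0
  hc1 : IsGeodesicLine c1
  yc0 : ∀ s, y (c0 s) = 0
  yc1 : ∀ s, y (c1 s) = 1
  xm : StrictMono (x ∘ c0)
  xs : Function.Surjective (x ∘ c0)
  bp : ∀ z, bus c1 z = bus c0 z
  bm : ∀ z, bus (revl c1) z = bus (revl c0) z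

lemma revl_revl {X : Type*} (c : ℝ → X) : revl (revl c) = c := by
  funext t; simp [revl]

namespace TS
variable {X : Type*} [MetricSpace X] (S : TS X)

/-- Reversal of the strip. -/
def rev : TS X where
  hPT := S.hPT
  hgeo := S.hgeo
  x := fun z => - S.x z
  y := S.y
  hx := S.hx.neg
  hy := S.hy
  y0 := S.y0
  y1 := S.y1
  inj := fun z w h1 h2 => S.inj z w (neg_injective h1) h2
  cpt := fun R => by simpa using S.cpt R
  c0 := revl S.c0
  c1 := revl S.c1
  hc0 := S.hc0.rev
  hc1 := S.hc1.rev
  yc0 := fun s => S.yc0 _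
  yc1 := fun s => S.yc1 _
  xm := fun s t hst => by
    have := S.xm (neg_lt_neg hst)
    simp only [Function.comp, revl] at this ⊢
    linarith
  xs := fun r => by
    obtain ⟨s, hs⟩ := S.xs (-r)
    refine ⟨-s, ?_⟩
    simp only [Function.comp, revl, neg_neg] at hs ⊢
    rw [hs, neg_neg]
  bp := S.bm
  bm := by simpa [revl_revl] using S.bp

lemma seg {X : Type*} [MetricSpace X] (S : TS X) (a b : X) : ∃ c, IsSeg a b c := S.hgeo a b

lemma bus_c1 (s : ℝ) : bus S.c0 (S.c1 s) = - s := by rw [← S.bp, bus_self S.hc1]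
lemma bus_c0 (s : ℝ) : bus S.c0 (S.c0 s) = - s := bus_self S.hc0 s

/-- The flat part. -/
def Zs : Set X := {z | bus S.c0 z + bus (revl S.c0) z = 0}

/-- height -/
noncomputable def T (z : X) : ℝ := - bus S.c0 z

lemma T_abs (z w : X) : |S.T z - S.T w| ≤ dist z w := by
  have := bus_abs S.hc0 z w
  unfold T
  rwa [← abs_neg, show -(-bus S.c0 z - -bus S.c0 w) = bus S.c0 z - bus S.c0 w by ring]

lemma T_cont : Continuous S.T := by
  have : LipschitzWith 1 S.T := LipschitzWith.of_dist_le_mul (fun z w => by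
    simpa [Real.dist_eq] using S.T_abs z w)
  exact this.continuous

lemma rev_T {z : X} (hz : z ∈ S.Zs) : S.rev.T z = - S.T z := by
  simp only [T, Zs, mem_ofPred_eq, rev] at *
  linarith

lemma rev_Zs : S.rev.Zs = S.Zs := by
  ext z; simp only [Zs, rev, revl_revl, mem_ofPred_eq, add_comm]

lemma c0_mem (s : ℝ) : S.c0 s ∈ S.Zs := by
  simp only [Zs, mem_ofPred_eq, bus_self S.hc0, bus_rev_self S.hc0]; ring
lemma c1_mem (s : ℝ) : S.c1 s ∈ S.Zs := by
  simp only [Zs, mem_ofPred_eq]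
  rw [← S.bp, ← S.bm, bus_self S.hc1, bus_rev_self S.hc1]; ring

lemma T_c0 (s : ℝ) : S.T (S.c0 s) = s := by simp [T, bus_c0]
lemma T_c1 (s : ℝ) : S.T (S.c1 s) = s := by simp [T, bus_c1]

lemma Zs_closed : IsClosed S.Zs := by
  have h1 : LipschitzWith 1 (bus S.c0) := LipschitzWith.of_dist_le_mul (fun z w => by
    simpa [Real.dist_eq] using bus_abs S.hc0 z w)
  have h2 : LipschitzWith 1 (bus (revl S.c0)) := LipschitzWith.of_dist_le_mul (fun z w => by
    simpa [Real.dist_eq] using bus_abs S.hc0.rev z w)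
  exact isClosed_eq (h1.continuous.add h2.continuous) continuous_const

lemma Zs_convex {a b m : X} (ha : a ∈ S.Zs) (hb : b ∈ S.Zs)
    (hm : dist a m + dist m b = dist a b) :
    m ∈ S.Zs ∧ dist a b * S.T m = dist m b * S.T a + dist a m * S.T b := by
  have h1 := bus_convex S.hPT S.hc0 hm
  have h2 := bus_convex S.hPT S.hc0.rev hm
  have h3 := bus_add_rev S.hc0 m
  simp only [Zs, mem_ofPred_eq, T] at *
  have e1 : bus (revl S.c0) a = - bus S.c0 a := by linarith
  have e2 : bus (revl S.c0) b = - bus S.c0 b := by linarith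
  rw [e1, e2] at h2
  rcases (dist_nonneg (x := a) (y := b)).eq_or_lt with h0 | h0
  · have hab : a = b := dist_eq_zero.1 h0.symm
    have : dist a m = 0 := by
      have := dist_nonneg (x := a) (y := m)
      have := dist_nonneg (x := m) (y := b)
      linarith
    have hm : a = m := dist_eq_zero.1 this
    subst hm; subst hab
    simp [ha]
  · have : dist a b * (bus S.c0 m + bus (revl S.c0) m) ≤ 0 := by nlinarith
    have h4 : bus S.c0 m + bus (revl S.c0) m = 0 := by nlinarith
    refine ⟨h4, ?_⟩
    have e3 : bus (revl S.c0) m = - bus S.c0 m := by linarith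
    rw [e3] at h2
    linarith

lemma seg_T {a b : X} {c : ℝ → X} (h : IsSeg a b c) (ha : a ∈ S.Zs) (hb : b ∈ S.Zs) {s : ℝ}
    (hs : s ∈ Icc (0:ℝ) 1) : c s ∈ S.Zs ∧ S.T (c s) = (1 - s) * S.T a + s * S.T b := by
  obtain ⟨h1, h2⟩ := S.Zs_convex ha hb (h.between hs)
  refine ⟨h1, ?_⟩
  rw [h.dist_left hs, h.dist_right hs] at h2
  rcases (dist_nonneg (x := a) (y := b)).eq_or_lt with h0 | h0
  · have hab : a = b := dist_eq_zero.1 h0.symm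
    have : dist a (c s) = 0 := by rw [h.dist_left hs, ← h0]; ring
    have hm : a = c s := dist_eq_zero.1 this
    rw [← hab, ← hm]; ring
  · apply mul_left_cancel₀ h0.ne'
    linarith

lemma c0_ne_c1 (s t : ℝ) : S.c0 s ≠ S.c1 t := fun h => by
  have := S.yc0 s
  rw [h, S.yc1] at this
  linarith

lemma f_pos (s : ℝ) : 0 < dist (S.c0 s) (S.c1 s) := dist_pos.2 (S.c0_ne_c1 s s)

lemma cross {G : ℝ → X} {s : ℝ} (hG : IsSeg (S.c0 s) (S.c1 s) G) {E : ℝ → X} {a b : ℝ}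
    (hab : a ≤ b) (hE : ContinuousOn E (Icc a b))
    (hl : ∀ υ ∈ Icc (0:ℝ) 1, S.x (E a) < S.x (G υ)) (hr : ∀ υ ∈ Icc (0:ℝ) 1, S.x (G υ) < S.x (E b)) :
    ∃ r ∈ Icc a b, ∃ υ ∈ Icc (0:ℝ) 1, E r = G υ := by
  have hG' := hG.continuousOn
  have c1 : ContinuousOn (fun p : ℝ × ℝ => E p.1) (Icc a b ×ˢ Icc (0:ℝ) 1) :=
    hE.comp continuousOn_fst (fun p hp => hp.1)
  have c2 : ContinuousOn (fun p : ℝ × ℝ => G p.2) (Icc a b ×ˢ Icc (0:ℝ) 1) :=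
    hG'.comp continuousOn_snd (fun p hp => hp.2)
  obtain ⟨r, hr, υ, hυ, h1, h2⟩ := miranda (P := fun p => S.x (E p.1) - S.x (G p.2))
    (Q := fun p => S.y (G p.2) - S.y (E p.1)) hab (zero_le_one (α := ℝ))
    ((S.hx.comp_continuousOn c1).sub (S.hx.comp_continuousOn c2))
    ((S.hy.comp_continuousOn c2).sub (S.hy.comp_continuousOn c1))
    (fun υ hυ => by simpa using hl υ hυ) (fun υ hυ => by simpa using hr υ hυ)
    (fun r hr => by simp [hG.1, S.yc0, S.y0]) (fun r hr => by simp [hG.2.1, S.yc1, S.y1])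
  exact ⟨r, hr, υ, hυ, S.inj _ _ (by simpa [sub_eq_zero] using h1)
    (by simp only at h2; linarith)⟩

lemma seg_bound {a b : X} {G : ℝ → X} (hG : IsSeg a b G) :
    ∃ R, ∀ υ ∈ Icc (0:ℝ) 1, |S.x (G υ)| < R := by
  have h1 : IsCompact ((fun υ => S.x (G υ)) '' Icc (0:ℝ) 1) :=
    isCompact_Icc.image_of_continuousOn (S.hx.comp_continuousOn hG.continuousOn)
  obtain ⟨R, hR⟩ := h1.isBounded.exists_norm_le
  refine ⟨R + 1, fun υ hυ => ?_⟩
  have := hR _ (mem_image_of_mem _ hυ)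
  rw [Real.norm_eq_abs] at this
  linarith

lemma x0_top (R : ℝ) : ∃ M, ∀ s, M ≤ s → R < S.x (S.c0 s) := by
  obtain ⟨s, hs⟩ := S.xs (R + 1)
  refine ⟨s, fun t ht => ?_⟩
  have := S.xm.monotone ht
  rw [hs] at this
  simp only [Function.comp] at this
  linarith

lemma barrier_left {G : ℝ → X} {s : ℝ} (hG : IsSeg (S.c0 s) (S.c1 s) G) {z : X}
    (hz : ∀ υ ∈ Icc (0:ℝ) 1, S.x z < S.x (G υ)) : - s ≤ bus S.c0 z := by
  obtain ⟨R, hR⟩ := S.seg_bound hG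
  obtain ⟨M, hM⟩ := S.x0_top R
  set τ := max M (s + 1)
  obtain ⟨E, hE⟩ := S.seg z (S.c0 τ)
  obtain ⟨r, hr, υ, hυ, he⟩ := S.cross hG zero_le_one hE.continuousOn
    (by rw [hE.1]; exact hz) (fun υ hυ => by
      rw [hE.2.1]; exact (abs_lt.1 (hR υ hυ)).2.trans (hM τ (le_max_left _ _)))
  have hT := (S.seg_T hG (S.c0_mem s) (S.c1_mem s) hυ).2
  rw [S.T_c0, S.T_c1] at hT
  have hb : bus S.c0 (E r) = - s := by
    rw [he]; unfold T at hT; linarith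
  have hcv := bus_convex S.hPT S.hc0 (hE.between hr)
  rw [← hE.between hr, hb, S.bus_c0] at hcv
  have hτ : s + 1 ≤ τ := le_max_right _ _
  have hq : 0 < dist (E r) (S.c0 τ) := by
    rw [dist_pos]
    intro h
    rw [h, S.bus_c0] at hb
    linarith
  have hp := dist_nonneg (x := z) (y := E r)
  have h0 : 0 ≤ dist z (E r) * (τ - s) := mul_nonneg hp (by linarith)
  by_contra hh
  push Not at hh
  have := mul_lt_mul_of_pos_left hh hq
  nlinarith

lemma barrier_right {G : ℝ → X} {s : ℝ} (hG : IsSeg (S.c0 s) (S.c1 s) G) {z : X}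
    (hz : ∀ υ ∈ Icc (0:ℝ) 1, S.x (G υ) < S.x z) : s ≤ bus (revl S.c0) z := by
  have := S.rev.barrier_left (G := G) (s := -s) (z := z) (by simpa [rev, revl] using hG)
    (fun υ hυ => by simpa [rev] using hz υ hυ)
  simpa [rev] using this

lemma proper {X : Type*} [MetricSpace X] (S : TS X) : ProperSpace X := by
  refine ProperSpace.of_seq_closedBall (x := S.c0 0) (r := fun n : ℕ => (n : ℝ))
    tendsto_natCast_atTop_atTop (Eventually.of_forall fun n => ?_)
  set R : ℝ := (n : ℝ)
  obtain ⟨G, hG⟩ := S.seg (S.c0 (-R-1)) (S.c1 (-R-1))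
  obtain ⟨H, hH⟩ := S.seg (S.c0 (R+1)) (S.c1 (R+1))
  obtain ⟨A, hA⟩ := S.seg_bound hG
  obtain ⟨B, hB⟩ := S.seg_bound hH
  refine (S.cpt (max A B)).of_isClosed_subset isClosed_closedBall ?_
  intro z hz
  rw [mem_closedBall] at hz
  have h1 := bus_lip S.hc0 z (S.c0 0)
  have h2 := bus_lip S.hc0.rev z (S.c0 0)
  rw [S.bus_c0] at h1
  rw [bus_rev_self S.hc0] at h2
  simp only [mem_ofPred_eq]
  by_contra hcon
  push Not at hcon
  rw [lt_abs] at hcon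
  rcases hcon with h | h
  · have := S.barrier_right hH (z := z) (fun υ hυ => by
      have := (abs_lt.1 (hB υ hυ)).2
      have := le_max_right A B
      linarith)
    linarith
  · have := S.barrier_left hG (z := z) (fun υ hυ => by
      have := (abs_lt.1 (hA υ hυ)).1
      have := le_max_left A B
      linarith)
    linarith

lemma x_large (R : ℝ) : ∃ N, ∀ z ∈ S.Zs, N ≤ S.T z → R < S.x z := by
  obtain ⟨G, hG⟩ := S.seg (S.c0 0) (S.c1 0)
  obtain ⟨A, hA⟩ := S.seg_bound hG
  obtain ⟨M, hM⟩ := ((S.cpt (max A R)).image S.T_cont).isBounded.exists_norm_le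
  refine ⟨max M 0 + 1, fun z hz hT => ?_⟩
  have k1 : max A R < |S.x z| := by
    by_contra hh
    push Not at hh
    have := hM _ (mem_image_of_mem _ hh)
    rw [Real.norm_eq_abs] at this
    have := le_abs_self (S.T z)
    have := le_max_left M 0
    linarith
  rw [lt_abs] at k1
  rcases k1 with h | h
  · exact (le_max_right _ _).trans_lt h
  · have := S.barrier_left hG (z := z) (fun υ hυ => by
      have := (abs_lt.1 (hA υ hυ)).1
      have := le_max_left A R
      linarith)
    unfold T at hT
    have := le_max_right M 0
    linarith

lemma x_small (R : ℝ) : ∃ N, ∀ z ∈ S.Zs, S.T z ≤ - N → S.x z < - R := by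
  obtain ⟨N, hN⟩ := S.rev.x_large R
  refine ⟨N, fun z hz hT => ?_⟩
  have := hN z (by rwa [rev_Zs]) (by rw [S.rev_T hz]; linarith)
  simp only [rev] at this
  linarith

end TS

lemma ulim_exists {X : Type*} [MetricSpace X] [ProperSpace X] {u : ℕ → X} (p : X) (R : ℝ)
    (h : ∀ᶠ n in (hyperfilter ℕ : Filter ℕ), dist (u n) p ≤ R) :
    ∃ L, Tendsto u (hyperfilter ℕ : Filter ℕ) (𝓝 L) := by
  obtain ⟨L, -, hL⟩ := (isCompact_closedBall p R).ultrafilter_le_nhds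
    ((hyperfilter ℕ).map u) (by
      rw [Filter.le_principal_iff]
      exact h)
  exact ⟨L, hL⟩

lemma hyper_of_atTop {P : ℕ → Prop} (h : ∀ᶠ n in atTop, P n) :
    ∀ᶠ n in (hyperfilter ℕ : Filter ℕ), P n :=
  Nat.hyperfilter_le_atTop h

/-- The metric structure of the strip. -/
structure Strip (X : Type*) [MetricSpace X] where
  hPT : Ptolemaic X
  T : X → ℝ
  g : ℝ → ℝ → X
  f : ℝ → ℝ
  f_pos : ∀ t, 0 < f t
  T_lip : ∀ z w, |T z - T w| ≤ dist z w
  g_dist : ∀ t, ∀ u ∈ Icc 0 (f t), ∀ u' ∈ Icc 0 (f t), dist (g t u) (g t u') = |u - u'|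
  T_g : ∀ t, ∀ u ∈ Icc 0 (f t), T (g t u) = t
  surj : ∀ z, ∃ u ∈ Icc 0 (f (T z)), g (T z) u = z
  line : ∀ z, ∃ l : ℝ → X, IsGeodesicLine l ∧ (∀ s, T (l s) = s) ∧ l (T z) = z
  geod : ∀ z w, ∃ c : ℝ → X, IsSeg z w c ∧
    ∀ s ∈ Icc (0:ℝ) 1, T (c s) = (1 - s) * T z + s * T w
  line0 : IsGeodesicLine (fun s => g s 0)
  line1 : IsGeodesicLine (fun s => g s (f s))

namespace TS
variable {X : Type*} [MetricSpace X] (S : TS X)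

lemma ray {z : X} (hz : z ∈ S.Zs) : ∃ r : ℝ → X, r 0 = z ∧
    (∀ s, 0 ≤ s → ∀ s', 0 ≤ s' → dist (r s) (r s') ≤ |s - s'|) ∧
    (∀ s, 0 ≤ s → r s ∈ S.Zs ∧ S.T (r s) = S.T z + s) := by
  have := S.proper
  choose E hE using fun n : ℕ => S.seg z (S.c0 n)
  set d : ℕ → ℝ := fun n => dist z (S.c0 n) with hd
  have hdn : Tendsto (fun n : ℕ => d n - n) atTop (𝓝 (bus S.c0 z)) :=
    (bus_tendsto S.hc0 z).comp tendsto_natCast_atTop_atTop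
  have hdT : Tendsto d atTop atTop := by
    have := tendsto_atTop_add_left_of_le' atTop (bus S.c0 z)
      (Eventually.of_forall fun n : ℕ => bus_le S.hc0 z n) tendsto_natCast_atTop_atTop
    refine this.congr fun n => ?_
    simp only [hd]; ring
  have hq : Tendsto (fun n : ℕ => (n : ℝ) / d n) atTop (𝓝 1) := by
    have h1 : Tendsto (fun n : ℕ => 1 - (d n - n) * (d n)⁻¹) atTop (𝓝 (1 - bus S.c0 z * 0)) :=
      (hdn.mul hdT.inv_tendsto_atTop).const_sub 1
    rw [mul_zero, sub_zero] at h1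
    refine h1.congr' ?_
    filter_upwards [hdT.eventually_gt_atTop 0] with n hn
    field_simp; ring
  have hmem : ∀ s, 0 ≤ s → ∀ᶠ n in atTop, s / d n ∈ Icc (0:ℝ) 1 ∧ 0 < d n := by
    intro s hs
    filter_upwards [hdT.eventually_gt_atTop s] with n hn
    have : 0 < d n := hs.trans_lt hn
    exact ⟨⟨by positivity, by rw [div_le_one this]; exact hn.le⟩, this⟩
  have hlim : ∀ s, ∃ L, 0 ≤ s → Tendsto (fun n => E n (s / d n)) (hyperfilter ℕ : Filter ℕ) (𝓝 L) := by
    intro s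
    by_cases hs : 0 ≤ s
    · obtain ⟨L, hL⟩ := ulim_exists (u := fun n => E n (s / d n)) z s (by
        refine hyper_of_atTop ?_
        filter_upwards [hmem s hs] with n hn
        rw [dist_comm, (hE n).dist_left hn.1]
        have := hn.2
        rw [← mul_div_assoc, mul_comm, mul_div_assoc]
        change s * (d n / d n) ≤ s
        rw [div_self this.ne', mul_one])
      exact ⟨L, fun _ => hL⟩
    · exact ⟨z, fun h => absurd h hs⟩
  choose r hr using hlim
  refine ⟨r, ?_, ?_, ?_⟩
  · refine tendsto_nhds_unique (hr 0 le_rfl) ?_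
    refine tendsto_const_nhds.congr fun n => ?_
    rw [zero_div, (hE n).1]
  · intro s hs s' hs'
    refine le_of_tendsto ((hr s hs).dist (hr s' hs')) (hyper_of_atTop ?_)
    filter_upwards [hmem s hs, hmem s' hs'] with n h1 h2
    rw [(hE n).2.2 _ h1.1 _ h2.1]
    change d n * _ ≤ _
    rw [← sub_div, abs_div, abs_of_pos h1.2]
    rw [mul_div_cancel₀ _ h1.2.ne']
  · intro s hs
    have key : ∀ᶠ n in atTop, E n (s / d n) ∈ S.Zs ∧
        S.T (E n (s / d n)) = (1 - s / d n) * S.T z + s / d n * n := by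
      filter_upwards [hmem s hs] with n hn
      have := S.seg_T (hE n) hz (S.c0_mem n) hn.1
      rwa [S.T_c0] at this
    refine ⟨S.Zs_closed.mem_of_tendsto (hr s hs) (hyper_of_atTop (key.mono fun n h => h.1)), ?_⟩
    have h1 := (S.T_cont.tendsto _).comp (hr s hs)
    refine tendsto_nhds_unique h1 ?_
    have h2 : Tendsto (fun n : ℕ => (1 - s * (d n)⁻¹) * S.T z + s * ((n:ℝ) / d n)) atTop
        (𝓝 ((1 - s * 0) * S.T z + s * 1)) :=
      (((hdT.inv_tendsto_atTop.const_mul s).const_sub 1).mul_const _).add (hq.const_mul s)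
    have h3 := h2.mono_left Nat.hyperfilter_le_atTop
    rw [show (1 - s * 0) * S.T z + s * 1 = S.T z + s by ring] at h3
    refine h3.congr' (hyper_of_atTop ?_)
    filter_upwards [key] with n hn
    rw [Function.comp, hn.2]; ring

lemma exists_line {z : X} (hz : z ∈ S.Zs) : ∃ l : ℝ → X, IsGeodesicLine l ∧
    (∀ s, S.T (l s) = s) ∧ l (S.T z) = z ∧ ∀ s, l s ∈ S.Zs := by
  obtain ⟨p, p0, p1, p2⟩ := S.ray hz
  obtain ⟨q, q0, q1, q2⟩ := S.rev.ray (z := z) (by rwa [rev_Zs])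
  simp only [rev_Zs] at q2
  set t := S.T z with ht
  let l : ℝ → X := fun s => if t ≤ s then p (s - t) else q (t - s)
  have hT : ∀ s, S.T (l s) = s ∧ l s ∈ S.Zs := by
    intro s
    by_cases h : t ≤ s
    · simp only [l, if_pos h]
      have := p2 (s - t) (by linarith)
      exact ⟨by rw [this.2]; ring, this.1⟩
    · simp only [l, if_neg h]
      have := q2 (t - s) (by linarith)
      refine ⟨?_, this.1⟩
      have h2 := this.2
      rw [S.rev_T this.1, S.rev_T hz] at h2
      linarith
  have hle : ∀ s s', s ≤ s' → dist (l s) (l s') ≤ s' - s := by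
    intro s s' hss
    by_cases h : t ≤ s
    · have h' : t ≤ s' := h.trans hss
      simp only [l, if_pos h, if_pos h']
      refine (p1 _ (by linarith) _ (by linarith)).trans ?_
      rw [abs_of_nonpos (by linarith)]; linarith
    · by_cases h' : t ≤ s'
      · simp only [l, if_neg h, if_pos h']
        have a1 := p1 0 le_rfl (s' - t) (by linarith)
        have a2 := q1 (t - s) (by linarith) 0 le_rfl
        rw [p0, abs_of_nonpos (by linarith)] at a1
        rw [q0, abs_of_nonneg (by linarith)] at a2
        have := dist_triangle (q (t - s)) z (p (s' - t))
        linarith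
      · simp only [l, if_neg h, if_neg h']
        refine (q1 _ (by linarith) _ (by linarith)).trans ?_
        rw [abs_of_nonneg (by linarith)]; linarith
  refine ⟨l, ?_, fun s => (hT s).1, by simp [l, p0], fun s => (hT s).2⟩
  intro s s'
  refine le_antisymm ?_ ?_
  · rcases le_total s s' with h | h
    · have := hle s s' h
      rwa [abs_of_nonpos (by linarith), neg_sub]
    · have := hle s' s h
      rwa [abs_of_nonneg (by linarith), dist_comm]
  · have := S.T_abs (l s) (l s')
    rwa [(hT s).1, (hT s').1] at this

lemma line_meets {l : ℝ → X} (hl : IsGeodesicLine l) (hT : ∀ s, S.T (l s) = s)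
    (hZ : ∀ s, l s ∈ S.Zs) {t : ℝ} {G : ℝ → X} (hG : IsSeg (S.c0 t) (S.c1 t) G) :
    ∃ υ ∈ Icc (0:ℝ) 1, l t = G υ := by
  obtain ⟨R, hR⟩ := S.seg_bound hG
  obtain ⟨N, hN⟩ := S.x_large R
  obtain ⟨M, hM⟩ := S.x_small R
  have hc : Continuous l := by
    have : LipschitzWith 1 l := LipschitzWith.of_dist_le_mul (fun s t => by
      rw [hl, Real.dist_eq]; simp)
    exact this.continuous
  obtain ⟨r, hr, υ, hυ, e⟩ := S.cross hG (a := min N (-M)) (b := max N (-M)) min_le_max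
    hc.continuousOn (fun υ hυ => by
      have := hM (l (min N (-M))) (hZ _) (by rw [hT]; exact min_le_right _ _)
      exact this.trans (abs_lt.1 (hR υ hυ)).1) (fun υ hυ => by
      have := hN (l (max N (-M))) (hZ _) (by rw [hT]; exact le_max_left _ _)
      exact (abs_lt.1 (hR υ hυ)).2.trans this)
  have h2 := (S.seg_T hG (S.c0_mem t) (S.c1_mem t) hυ).2
  rw [S.T_c0, S.T_c1, ← e, hT] at h2
  have : r = t := by rw [h2]; ring
  exact ⟨υ, hυ, this ▸ e⟩

/-- chosen slices -/
noncomputable def G (t : ℝ) : ℝ → X := (S.seg (S.c0 t) (S.c1 t)).choose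

lemma hG (t : ℝ) : IsSeg (S.c0 t) (S.c1 t) (S.G t) := (S.seg (S.c0 t) (S.c1 t)).choose_spec

/-- width -/
noncomputable def w (t : ℝ) : ℝ := dist (S.c0 t) (S.c1 t)

lemma G_T {t υ : ℝ} (hυ : υ ∈ Icc (0:ℝ) 1) : S.G t υ ∈ S.Zs ∧ S.T (S.G t υ) = t := by
  have h2 := (S.seg_T (S.hG t) (S.c0_mem t) (S.c1_mem t) hυ)
  rw [S.T_c0, S.T_c1] at h2
  exact ⟨h2.1, by rw [h2.2]; ring⟩

lemma w_lip (t t' : ℝ) : |S.w t - S.w t'| ≤ 2 * |t - t'| := by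
  unfold w
  have := dist_dist_dist_le (S.c0 t) (S.c1 t) (S.c0 t') (S.c1 t')
  rw [Real.dist_eq, S.hc0, S.hc1] at this
  linarith

lemma G_cont : ContinuousOn (fun p : ℝ × ℝ => S.G p.1 p.2) (univ ×ˢ Icc (0:ℝ) 1) := by
  have hwc : Continuous S.w := by
    have : LipschitzWith 2 S.w := LipschitzWith.of_dist_le_mul (fun s t => by
      rw [Real.dist_eq, Real.dist_eq]; exact S.w_lip s t)
    exact this.continuous
  have main : ∀ t t' υ υ', υ ∈ Icc (0:ℝ) 1 → υ' ∈ Icc (0:ℝ) 1 →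
      dist (S.G t υ) (S.G t' υ') ≤ 3 * |t - t'| + |υ * S.w t - υ' * S.w t'| := by
    intro t t' υ υ' h h'
    obtain ⟨l, l1, l2, l3, l4⟩ := S.exists_line (S.G_T (t := t) h).1
    rw [(S.G_T h).2] at l3
    obtain ⟨υ'', h'', e⟩ := S.line_meets l1 l2 l4 (S.hG t')
    have a1 := (S.hG t).dist_left h
    have a2 := (S.hG t').dist_left h''
    have a3 := l1 t t'
    rw [l3, e] at a3
    have a4 := dist_dist_dist_le (S.c0 t) (S.G t υ) (S.c0 t') (S.G t' υ'')
    rw [a1, a2, a3, S.hc0, Real.dist_eq] at a4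
    have a5 := (S.hG t').2.2 υ'' h'' υ' h'
    have a6 := dist_triangle (S.G t υ) (S.G t' υ'') (S.G t' υ')
    have wp : 0 < S.w t' := S.f_pos t'
    change _ = S.w t' * _ at a5
    change |S.w t * _ - S.w t' * _| ≤ _ at a4
    rw [← abs_of_pos wp, ← abs_mul] at a5
    have a7 : |S.w t' * (υ'' - υ')| ≤ |S.w t * υ - S.w t' * υ''| + |υ * S.w t - υ' * S.w t'| := by
      rw [show S.w t' * (υ'' - υ') =
        (υ * S.w t - υ' * S.w t') - (S.w t * υ - S.w t' * υ'') by ring]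
      rw [add_comm]
      exact abs_sub _ _
    linarith
  intro p hp
  rw [ContinuousWithinAt, tendsto_iff_dist_tendsto_zero]
  refine squeeze_zero' (Eventually.of_forall fun _ => dist_nonneg)
    (g := fun q : ℝ × ℝ => 3 * |q.1 - p.1| + |q.2 * S.w q.1 - p.2 * S.w p.1|) ?_ ?_
  · filter_upwards [self_mem_nhdsWithin] with q hq
    exact main _ _ _ _ hq.2 hp.2
  · have : Continuous (fun q : ℝ × ℝ => 3 * |q.1 - p.1| + |q.2 * S.w q.1 - p.2 * S.w p.1|) := by
      fun_prop
    have := (this.tendsto p).mono_left (nhdsWithin_le_nhds (s := univ ×ˢ Icc (0:ℝ) 1))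
    simpa using this

lemma G_surj (z : X) : ∃ t, ∃ υ ∈ Icc (0:ℝ) 1, S.G t υ = z := by
  obtain ⟨N, hN⟩ := S.x_large |S.x z|
  obtain ⟨M, hM⟩ := S.x_small |S.x z|
  have hc := S.G_cont.mono (t := Icc (min N (-M)) (max N (-M)) ×ˢ Icc (0:ℝ) 1)
    (fun p hp => ⟨trivial, hp.2⟩)
  obtain ⟨r, hr, υ, hυ, h1, h2⟩ := miranda (P := fun p => S.x (S.G p.1 p.2) - S.x z)
    (Q := fun p => S.y (S.G p.1 p.2) - S.y z) (min_le_max (a := N) (b := -M)) (zero_le_one (α := ℝ))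
    ((S.hx.comp_continuousOn hc).sub continuousOn_const)
    ((S.hy.comp_continuousOn hc).sub continuousOn_const)
    (fun υ hυ => by
      have := hM (S.G (min N (-M)) υ) (S.G_T hυ).1 (by rw [(S.G_T hυ).2]; exact min_le_right _ _)
      have := neg_abs_le (S.x z)
      simp only; linarith)
    (fun υ hυ => by
      have := hN (S.G (max N (-M)) υ) (S.G_T hυ).1 (by rw [(S.G_T hυ).2]; exact le_max_left _ _)
      have := le_abs_self (S.x z)
      simp only; linarith)
    (fun r hr => by simp [(S.hG r).1, S.yc0, S.y0])
    (fun r hr => by simp [(S.hG r).2.1, S.yc1, S.y1])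
  exact ⟨r, υ, hυ, S.inj _ _ (by simp only at h1; linarith) (by simp only at h2; linarith)⟩

lemma Zs_univ (z : X) : z ∈ S.Zs := by
  obtain ⟨t, υ, hυ, rfl⟩ := S.G_surj z
  exact (S.G_T hυ).1

/-- The metric strip. -/
noncomputable def strip : Strip X where
  hPT := S.hPT
  T := S.T
  g := fun t u => S.G t (u / S.w t)
  f := S.w
  f_pos := S.f_pos
  T_lip := S.T_abs
  g_dist := fun t u hu u' hu' => by
    have wp : 0 < S.w t := S.f_pos t
    have := (S.hG t).2.2 (u / S.w t) ⟨div_nonneg hu.1 wp.le, (div_le_one wp).2 hu.2⟩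
      (u' / S.w t) ⟨div_nonneg hu'.1 wp.le, (div_le_one wp).2 hu'.2⟩
    rw [this]
    change S.w t * _ = _
    rw [← sub_div, abs_div, abs_of_pos wp, mul_div_cancel₀ _ wp.ne']
  T_g := fun t u hu => by
    have wp : 0 < S.w t := S.f_pos t
    exact (S.G_T ⟨div_nonneg hu.1 wp.le, (div_le_one wp).2 hu.2⟩).2
  surj := fun z => by
    obtain ⟨t, υ, hυ, rfl⟩ := S.G_surj z
    have wp : 0 < S.w t := S.f_pos t
    rw [(S.G_T hυ).2]
    refine ⟨υ * S.w t, ⟨mul_nonneg hυ.1 wp.le, by nlinarith [hυ.2]⟩, ?_⟩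
    rw [mul_div_assoc, div_self wp.ne', mul_one]
  line := fun z => by
    obtain ⟨l, h1, h2, h3, -⟩ := S.exists_line (S.Zs_univ z)
    exact ⟨l, h1, h2, h3⟩
  geod := fun z w => by
    obtain ⟨c, hc⟩ := S.seg z w
    exact ⟨c, hc, fun s hs => (S.seg_T hc (S.Zs_univ z) (S.Zs_univ w) hs).2⟩
  line0 := fun s t => by
    simp only [zero_div, (S.hG _).1, S.hc0 s t]
  line1 := fun s t => by
    have wp := fun t => (S.f_pos t).ne'
    have : ∀ t, S.w t / S.w t = 1 := fun t => div_self (wp t)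
    simp only [this, (S.hG _).2.1, S.hc1 s t]

end TS

theorem exists_TS (X : Type*) [MetricSpace X]
    (hPT : Ptolemaic X) (hgeo : GeodesicMetricSpace X)
    (h : (ℝ × (Set.Icc (0:ℝ) 1)) ≃ₜ X)
    (c₀ c₁ : ℝ → X)
    (hc₀ : IsGeodesicLine c₀) (hc₁ : IsGeodesicLine c₁)
    (hpar : ParallelLines c₀ c₁)
    (him₀ : Set.range c₀ = ⇑h '' {p : ℝ × (Set.Icc (0:ℝ) 1) | (p.2 : ℝ) = 0})
    (him₁ : Set.range c₁ = ⇑h '' {p : ℝ × (Set.Icc (0:ℝ) 1) | (p.2 : ℝ) = 1}) :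
    Nonempty (TS X) := by
  obtain ⟨a, ha, hb⟩ := bus_parallel hPT hc₀ hc₁ hpar
  have hcc : Continuous c₀ := by
    have : LipschitzWith 1 c₀ := LipschitzWith.of_dist_le_mul (fun s t => by
      rw [hc₀, Real.dist_eq]; simp)
    exact this.continuous
  have hci : Function.Injective c₀ := fun s t e => by
    have := hc₀ s t
    rw [e, dist_self] at this
    exact sub_eq_zero.1 (abs_eq_zero.1 this.symm)
  have hx : Continuous (fun z => (h.symm z).1) := continuous_fst.comp h.symm.continuous
  have hy : Continuous (fun z => ((h.symm z).2 : ℝ)) :=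
    continuous_subtype_val.comp (continuous_snd.comp h.symm.continuous)
  have y0 : ∀ s, ((h.symm (c₀ s)).2 : ℝ) = 0 := fun s => by
    have : c₀ s ∈ range c₀ := ⟨s, rfl⟩
    rw [him₀] at this
    obtain ⟨p, hp, e⟩ := this
    rw [← e, h.symm_apply_apply]; exact hp
  have y1 : ∀ s, ((h.symm (c₁ s)).2 : ℝ) = 1 := fun s => by
    have : c₁ s ∈ range c₁ := ⟨s, rfl⟩
    rw [him₁] at this
    obtain ⟨p, hp, e⟩ := this
    rw [← e, h.symm_apply_apply]; exact hp
  have inj : ∀ z w, (h.symm z).1 = (h.symm w).1 → ((h.symm z).2 : ℝ) = (h.symm w).2 → z = w :=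
    fun z w h1 h2 => h.symm.injective (Prod.ext h1 (Subtype.ext h2))
  have xs : ∀ r, ∃ s, (h.symm (c₀ s)).1 = r := fun r => by
    have : h (r, ⟨0, by simp⟩) ∈ range c₀ := by
      rw [him₀]; exact ⟨_, rfl, rfl⟩
    obtain ⟨s, hs⟩ := this
    exact ⟨s, by rw [hs, h.symm_apply_apply]⟩
  have cpt : ∀ R, IsCompact {z | |(h.symm z).1| ≤ R} := fun R => by
    have : {z | |(h.symm z).1| ≤ R} = h '' (Icc (-R) R ×ˢ univ) := by
      ext z
      constructor
      · intro hz
        exact ⟨h.symm z, ⟨abs_le.1 hz, trivial⟩, h.apply_symm_apply z⟩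
      · rintro ⟨p, hp, rfl⟩
        simp only [mem_ofPred_eq, h.symm_apply_apply]
        exact abs_le.2 hp.1
    rw [this]
    exact (isCompact_Icc.prod isCompact_univ).image h.continuous
  have xi : Function.Injective (fun s => (h.symm (c₀ s)).1) := fun s t e =>
    hci (inj _ _ e (by rw [y0, y0]))
  rcases Continuous.strictMono_of_inj (hx.comp hcc) xi with hm | hm
  · exact ⟨{ hPT := hPT, hgeo := hgeo, x := _, y := _, hx := hx, hy := hy,
             y0 := fun z => (h.symm z).2.2.1, y1 := fun z => (h.symm z).2.2.2, inj := inj,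
             cpt := cpt, c0 := c₀, c1 := fun s => c₁ (s + a), hc0 := hc₀, hc1 := hc₁.shift a,
             yc0 := y0, yc1 := fun s => y1 _, xm := hm, xs := xs, bp := ha, bm := hb }⟩
  · exact ⟨{ hPT := hPT, hgeo := hgeo, x := fun z => - (h.symm z).1, y := _, hx := hx.neg, hy := hy,
             y0 := fun z => (h.symm z).2.2.1, y1 := fun z => (h.symm z).2.2.2,
             inj := fun z w h1 h2 => inj z w (neg_injective h1) h2,
             cpt := fun R => by simpa using cpt R,
             c0 := c₀, c1 := fun s => c₁ (s + a), hc0 := hc₀, hc1 := hc₁.shift a,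
             yc0 := y0, yc1 := fun s => y1 _, xm := fun s t hst => neg_lt_neg (hm hst),
             xs := fun r => by
               obtain ⟨s, hs⟩ := xs (-r)
               exact ⟨s, by simp only [Function.comp]; rw [hs, neg_neg]⟩
             bp := ha, bm := hb }⟩

lemma closed_midpoint {S : Set ℝ} (hS : IsClosed S) {a b : ℝ} (ha : a ∈ S) (hb : b ∈ S)
    (hm : ∀ x ∈ S ∩ Icc a b, ∀ y ∈ S ∩ Icc a b, (x + y) / 2 ∈ S) : Icc a b ⊆ S := by
  intro t ht
  by_contra hts
  have c1 : IsCompact (S ∩ Icc a t) := isCompact_Icc.inter_left hS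
  have c2 : IsCompact (S ∩ Icc t b) := isCompact_Icc.inter_left hS
  obtain ⟨p, hp, hp'⟩ := c1.exists_isMaxOn ⟨a, ha, le_rfl, ht.1⟩ continuousOn_id
  obtain ⟨q, hq, hq'⟩ := c2.exists_isMinOn ⟨b, hb, ht.2, le_rfl⟩ continuousOn_id
  have hpt : p < t := lt_of_le_of_ne hp.2.2 (fun e => hts (e ▸ hp.1))
  have hqt : t < q := lt_of_le_of_ne hq.2.1 (fun e => hts (e ▸ hq.1))
  have hmid := hm p ⟨hp.1, hp.2.1, hp.2.2.trans ht.2⟩ q ⟨hq.1, ht.1.trans hq.2.1, hq.2.2⟩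
  rcases le_total ((p + q) / 2) t with h | h
  · have := hp' (show (p + q) / 2 ∈ S ∩ Icc a t from ⟨hmid, by linarith [hp.2.1], h⟩)
    simp only [id, mem_ofPred_eq] at this
    linarith
  · have := hq' (show (p + q) / 2 ∈ S ∩ Icc t b from ⟨hmid, h, by linarith [hq.2.2]⟩)
    simp only [id, mem_ofPred_eq] at this
    linarith

/-- A ptolemaic norm on the plane, normalised. -/
structure PNorm (N : ℝ → ℝ → ℝ) : Prop where
  hom : ∀ a l w, N (a * l) (a * w) = |a| * N l w
  tri : ∀ l w l' w', N (l + l') (w + w') ≤ N l w + N l' w'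
  pt : ∀ x1 x2 y1 y2 z1 z2 w1 w2, N (x1 - y1) (x2 - y2) * N (z1 - w1) (z2 - w2) ≤
    N (x1 - z1) (x2 - z2) * N (y1 - w1) (y2 - w2) + N (x1 - w1) (x2 - w2) * N (y1 - z1) (y2 - z2)
  n01 : N 0 1 = 1
  n10 : N 1 0 = 1
  ge : ∀ l w, |l| ≤ N l w

namespace PNorm
variable {N : ℝ → ℝ → ℝ}

lemma n0 (H : PNorm N) (w : ℝ) : N 0 w = |w| := by
  have := H.hom w 0 1
  rwa [H.n01, mul_zero, mul_one, mul_one] at this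

lemma n1 (H : PNorm N) (l : ℝ) : N l 0 = |l| := by
  have := H.hom l 1 0
  rwa [H.n10, mul_zero, mul_one, mul_one] at this

lemma neg (H : PNorm N) (l w : ℝ) : N (-l) (-w) = N l w := by
  have := H.hom (-1) l w
  simpa using this

lemma nonneg (H : PNorm N) (l w : ℝ) : 0 ≤ N l w := (abs_nonneg l).trans (H.ge l w)

lemma le_add (H : PNorm N) (l w : ℝ) : N l w ≤ |l| + |w| := by
  have := H.tri l 0 0 w
  rwa [H.n0, H.n1, add_zero, zero_add] at this

lemma R1 (H : PNorm N) (w : ℝ) : N 1 w ≤ 1 + w ^ 2 := by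
  have := H.pt 0 0 1 w 1 0 0 w
  have e := H.ge 1 (-w)
  rw [abs_one] at e
  have e2 := H.neg 1 w
  simp only [zero_sub, sub_zero, sub_self, H.n0, H.n1] at this
  have e3 : |(-1:ℝ)| = 1 := by simp
  have h0 := H.nonneg 1 w
  rw [e2, e3, abs_neg, abs_one, one_mul, ← sq, sq_abs] at this
  nlinarith

lemma R2 (H : PNorm N) (p q : ℝ) (hpq : 0 ≤ p * q) : N 1 (p + q) ≤ N 1 p * N 1 q + p * q := by
  have := H.pt 0 0 1 (p+q) 0 p 1 p
  simp only [zero_sub, sub_zero, sub_self, H.n0, H.n1, add_sub_cancel_left] at this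
  rw [H.neg, H.neg, abs_neg, abs_neg, abs_one, mul_one] at this
  rw [← abs_mul, abs_of_nonneg (by linarith)] at this
  linarith

lemma R3 (H : PNorm N) (n : ℕ) : ∀ w : ℝ, |w| ≤ 1 →
    N 1 w ≤ 1 + w ^ 2 / 2 + w ^ 2 * (1 / 2) ^ n / 2 + w ^ 4 / 14 := by
  induction n with
  | zero =>
    intro w _
    have := H.R1 w
    have : 0 ≤ w ^ 4 := by positivity
    simp only [pow_zero]
    linarith
  | succ n ih =>
    intro w hw
    have h1 := ih (w / 2) (by rw [abs_div, abs_two]; linarith [abs_nonneg w])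
    have h2 := H.R2 (w / 2) (w / 2) (mul_self_nonneg _)
    rw [add_halves] at h2
    have h3 := H.R1 (w / 2)
    have h4 := H.ge 1 (w / 2)
    rw [abs_one] at h4
    set a := N 1 (w / 2)
    rw [pow_succ (1 / 2 : ℝ)]
    set k : ℝ := (1 / 2) ^ n
    have hk : 0 ≤ k := by positivity
    have h5 : (a - 1) ^ 2 ≤ (w / 2) ^ 4 := by
      have : (w / 2) ^ 4 = ((w / 2) ^ 2) ^ 2 := by ring
      rw [this]
      exact pow_le_pow_left₀ (by linarith) (by linarith) 2
    have : 0 ≤ w ^ 4 := by positivity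
    nlinarith

lemma R4 (H : PNorm N) (w : ℝ) (hw : |w| ≤ 1) : N 1 w ^ 2 ≤ 1 + w ^ 2 + 2 * w ^ 4 := by
  have h : N 1 w ≤ 1 + w ^ 2 / 2 + w ^ 2 * 0 / 2 + w ^ 4 / 14 := by
    have t : Tendsto (fun n : ℕ => 1 + w ^ 2 / 2 + w ^ 2 * (1 / 2) ^ n / 2 + w ^ 4 / 14) atTop
        (𝓝 (1 + w ^ 2 / 2 + w ^ 2 * 0 / 2 + w ^ 4 / 14)) := by
      have := tendsto_pow_atTop_nhds_zero_of_lt_one (r := (1 / 2 : ℝ)) (by norm_num) (by norm_num)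
      exact (((this.const_mul _).div_const 2).const_add _).add_const _
    exact ge_of_tendsto' t (fun n => H.R3 n w hw)
  have h2 : w ^ 2 ≤ 1 := by rw [← sq_abs]; exact pow_le_one₀ (abs_nonneg w) hw
  have h3 := H.nonneg 1 w
  have h5 := pow_le_pow_left₀ h3 h 2
  have h6 : 0 ≤ w ^ 2 := sq_nonneg w
  refine h5.trans ?_
  set s := w ^ 2
  rw [show w ^ 4 = s ^ 2 by simp only [s]; ring]
  have : s ^ 3 ≤ s ^ 2 := by nlinarith [sq_nonneg s]
  have : s ^ 4 ≤ s ^ 2 := by nlinarith [sq_nonneg s, sq_nonneg (s ^ 2)]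
  nlinarith [sq_nonneg s]

/-- bound when the slope is at most `k`. -/
lemma R5 (H : PNorm N) {k l w : ℝ} (hl : 0 < l) (hk : k ≤ 1) (hw : |w| ≤ k * l) :
    N l w ^ 2 ≤ l ^ 2 + (1 + 2 * k ^ 2) * w ^ 2 := by
  have h1 := H.hom l 1 (w / l)
  rw [mul_one, mul_div_cancel₀ _ hl.ne', abs_of_pos hl] at h1
  have hs : |w / l| ≤ k := by
    rw [abs_div, abs_of_pos hl, div_le_iff₀ hl]; exact hw
  have h2 := H.R4 (w / l) (hs.trans hk)
  rw [h1, mul_pow]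
  set s := w / l
  have e : w = s * l := by simp only [s]; field_simp
  rw [e]
  have h3 : s ^ 2 ≤ k ^ 2 := by
    rw [← sq_abs s]; exact pow_le_pow_left₀ (abs_nonneg s) hs 2
  have h4 : s ^ 4 ≤ k ^ 2 * s ^ 2 := by nlinarith [sq_nonneg s]
  have h5 : N 1 s ^ 2 ≤ 1 + s ^ 2 + 2 * (k ^ 2 * s ^ 2) := by linarith
  have := mul_le_mul_of_nonneg_left h5 (sq_nonneg l)
  nlinarith

lemma rhombus (H : PNorm N) (l w l' w' : ℝ) :
    4 * N l w * N l' w' ≤ N (l + l') (w + w') ^ 2 + N (l - l') (w - w') ^ 2 := by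
  have := H.pt l w (-l) (-w) l' w' (-l') (-w')
  have e1 := H.hom 2 l w
  have e2 := H.hom 2 l' w'
  rw [abs_two] at e1 e2
  have e3 := H.neg (l - l') (w - w')
  have e4 := H.neg (l + l') (w + w')
  rw [show l - -l = 2 * l by ring, show w - -w = 2 * w by ring, show l' - -l' = 2 * l' by ring,
    show w' - -w' = 2 * w' by ring, e1, e2, show -l - -l' = -(l - l') by ring,
    show -w - -w' = -(w - w') by ring, e3, show -l - l' = -(l + l') by ring,
    show -w - w' = -(w + w') by ring, e4, sub_neg_eq_add, sub_neg_eq_add] at this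
  nlinarith

lemma upper3 (H : PNorm N) (l w : ℝ) (hl : 0 ≤ l) : N l w ^ 2 ≤ l ^ 2 + 3 * w ^ 2 := by
  by_cases h : |w| ≤ l
  · rcases hl.eq_or_lt with h0 | h0
    · rw [← h0] at h ⊢
      have : w = 0 := abs_eq_zero.1 (le_antisymm h (abs_nonneg w))
      rw [this, H.n0]; simp
    · have := H.R5 (k := 1) h0 le_rfl (by linarith)
      norm_num at this ⊢
      exact this
  · push Not at h
    have h1 := H.le_add l w
    rw [abs_of_nonneg hl] at h1
    have h2 := pow_le_pow_left₀ (H.nonneg l w) h1 2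
    have h3 := sq_abs w
    nlinarith

lemma upper (H : PNorm N) (l w : ℝ) (hl : 0 ≤ l) : N l w ^ 2 ≤ l ^ 2 + w ^ 2 := by
  set A : Set ℝ := {c | ∀ l w, 0 ≤ l → N l w ^ 2 ≤ l ^ 2 + c * w ^ 2} with hA
  have h3 : (3:ℝ) ∈ A := fun l w hl => H.upper3 l w hl
  have hbd : BddBelow A := ⟨1, fun c hc => by
    have := hc 0 1 le_rfl
    rw [H.n01] at this
    linarith⟩
  set c := sInf A with hc
  have hcl : IsClosed A := by
    have : A = ⋂ (l : ℝ) (w : ℝ) (_ : 0 ≤ l), {c : ℝ | N l w ^ 2 ≤ l ^ 2 + c * w ^ 2} := by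
      ext c; simp [hA]
    rw [this]
    refine isClosed_iInter fun l => isClosed_iInter fun w => isClosed_iInter fun _ => ?_
    exact isClosed_le continuous_const (by fun_prop)
  have hcA : c ∈ A := hcl.csInf_mem ⟨3, h3⟩ hbd
  suffices hc1 : c ≤ 1 by
    have := hcA l w hl
    nlinarith [sq_nonneg w]
  by_contra hcon
  push Not at hcon
  have step : ∀ δ, ∀ l w, 0 ≤ l → l ^ 2 + (c - δ) * w ^ 2 < N l w ^ 2 →
      (l + N l w) ^ 2 + (c - 2 * δ) * w ^ 2 < N (l + N l w) w ^ 2 := by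
    intro δ l w hl h
    have r := H.rhombus l w (N l w) 0
    rw [H.n1, abs_of_nonneg (H.nonneg l w), add_zero, sub_zero] at r
    have a1 : N (l - N l w) w ^ 2 ≤ (l - N l w) ^ 2 + c * w ^ 2 := by
      have := hcA (N l w - l) (-w) (by linarith [H.ge l w, le_abs_self l])
      rw [← H.neg, neg_sub, neg_neg] at this
      nlinarith
    nlinarith
  have base : ∀ δ, 0 < δ → ∃ l w, 0 ≤ l ∧ l ^ 2 + (c - δ) * w ^ 2 < N l w ^ 2 := by
    intro δ hδ
    by_contra hh
    push Not at hh
    have : c - δ ∈ A := fun l w hl => hh l w hl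
    linarith [csInf_le hbd this]
  have iter : ∀ k : ℕ, ∀ δ, 0 < δ → ∃ l w, 0 < l ∧ |w| ≤ (1 / 2) ^ k * l ∧
      l ^ 2 + (c - δ) * w ^ 2 < N l w ^ 2 := by
    intro k
    induction k with
    | zero =>
      intro δ hδ
      obtain ⟨l, w, hl, h⟩ := base (δ / 2) (by linarith)
      have h1 := step _ l w hl h
      rw [mul_div_cancel₀ _ (two_ne_zero)] at h1
      have hw : |w| ≤ l + N l w := by
        have := H.tri l w (-l) 0
        rw [add_neg_cancel, add_zero, H.n0, H.n1, abs_neg, abs_of_nonneg hl] at this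
        linarith
      refine ⟨l + N l w, w, ?_, by simpa using hw, h1⟩
      rcases (abs_nonneg w).eq_or_lt with h0 | h0
      · have : w = 0 := abs_eq_zero.1 h0.symm
        rw [this, H.n1, sq_abs] at h
        simp at h
      · linarith
    | succ k ih =>
      intro δ hδ
      obtain ⟨l, w, hl, hw, h⟩ := ih (δ / 2) (by linarith)
      have h1 := step _ l w hl.le h
      rw [mul_div_cancel₀ _ (two_ne_zero)] at h1
      have hn : l ≤ N l w := (le_abs_self l).trans (H.ge l w)
      refine ⟨l + N l w, w, by linarith, ?_, h1⟩
      rw [pow_succ]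
      have : (0:ℝ) < (1 / 2) ^ k := by positivity
      nlinarith
  obtain ⟨k, hk⟩ := exists_pow_lt_of_lt_one (show 0 < min 1 ((c - 1) / 4) by
    apply lt_min <;> linarith) (show (1 / 2 : ℝ) < 1 by norm_num)
  obtain ⟨l, w, hl, hw, h⟩ := iter k ((c - 1) / 4) (by linarith)
  have hk1 : (1 / 2 : ℝ) ^ k ≤ 1 := (hk.trans_le (min_le_left _ _)).le
  have hk2 : (1 / 2 : ℝ) ^ k ≤ (c - 1) / 4 := (hk.trans_le (min_le_right _ _)).le
  have h5 := H.R5 hl hk1 hw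
  have hk3 : (0:ℝ) < (1 / 2) ^ k := by positivity
  set κ : ℝ := (1 / 2) ^ k
  have : κ ^ 2 ≤ (c - 1) / 4 := by nlinarith
  nlinarith [sq_nonneg w]

lemma upper' (H : PNorm N) (l w : ℝ) : N l w ^ 2 ≤ l ^ 2 + w ^ 2 := by
  rcases le_total 0 l with h | h
  · exact H.upper l w h
  · have := H.upper (-l) (-w) (by linarith)
    rw [H.neg] at this
    linarith

lemma exact_circle (H : PNorm N) {θ : ℝ} (hθ : θ ∈ Icc (-(Real.pi / 2)) (Real.pi / 2)) :
    N (Real.cos θ) (Real.sin θ) = 1 := by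
  have pp := Real.pi_pos
  set S : Set ℝ := {θ | N (Real.cos θ) (Real.sin θ) = 1} with hS
  have ncont : Continuous (fun θ => N (Real.cos θ) (Real.sin θ)) := by
    have key : ∀ a b a' b', N a b - N a' b' ≤ |a - a'| + |b - b'| := fun a b a' b' => by
      have h1 := H.tri a' b' (a - a') (b - b')
      have h2 := H.le_add (a - a') (b - b')
      rw [add_sub_cancel, add_sub_cancel] at h1
      linarith
    rw [continuous_iff_continuousAt]
    intro θ
    rw [ContinuousAt, tendsto_iff_dist_tendsto_zero]
    refine squeeze_zero (fun _ => dist_nonneg)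
      (g := fun φ => |Real.cos φ - Real.cos θ| + |Real.sin φ - Real.sin θ|) (fun φ => ?_) ?_
    · rw [Real.dist_eq, abs_le]
      have h1 := key (Real.cos φ) (Real.sin φ) (Real.cos θ) (Real.sin θ)
      have h2 := key (Real.cos θ) (Real.sin θ) (Real.cos φ) (Real.sin φ)
      rw [abs_sub_comm (Real.cos θ), abs_sub_comm (Real.sin θ)] at h2
      constructor <;> linarith
    · have : Continuous (fun φ => |Real.cos φ - Real.cos θ| + |Real.sin φ - Real.sin θ|) := by
        fun_prop
      have := this.tendsto θ
      simpa using this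
  have hcl : IsClosed S := isClosed_eq ncont continuous_const
  have mid : ∀ x ∈ S, ∀ y ∈ S, |x - y| ≤ Real.pi / 2 → (x + y) / 2 ∈ S := by
    intro x hx y hy hxy
    simp only [hS, mem_ofPred_eq] at hx hy ⊢
    have r := H.rhombus (Real.cos x) (Real.sin x) (Real.cos y) (Real.sin y)
    rw [hx, hy] at r
    have u := H.upper' (Real.cos x - Real.cos y) (Real.sin x - Real.sin y)
    have e1 : Real.cos x + Real.cos y = (2 * Real.cos ((x - y) / 2)) * Real.cos ((x + y) / 2) := by
      rw [Real.cos_add_cos]; ring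
    have e2 : Real.sin x + Real.sin y = (2 * Real.cos ((x - y) / 2)) * Real.sin ((x + y) / 2) := by
      rw [Real.sin_add_sin]; ring
    have s1 := Real.sin_sq_add_cos_sq x
    have s2 := Real.sin_sq_add_cos_sq y
    have s3 := Real.sin_sq_add_cos_sq ((x + y) / 2)
    have hsum : (Real.cos x + Real.cos y) ^ 2 + (Real.sin x + Real.sin y) ^ 2 =
      (2 * Real.cos ((x - y) / 2)) ^ 2 := by
      rw [e1, e2, mul_pow, mul_pow]
      nlinarith
    rw [e1, e2] at r
    rw [H.hom, mul_pow, sq_abs] at r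
    have hcp : 0 < Real.cos ((x - y) / 2) := by
      rw [abs_le] at hxy
      apply Real.cos_pos_of_mem_Ioo
      constructor <;> linarith
    have u2 := H.upper' (Real.cos ((x + y) / 2)) (Real.sin ((x + y) / 2))
    set n := N (Real.cos ((x + y) / 2)) (Real.sin ((x + y) / 2))
    set k := (2 * Real.cos ((x - y) / 2)) ^ 2
    have kp : 0 < k := by positivity
    have : k ≤ k * n ^ 2 := by nlinarith
    have h1 : 1 ≤ n ^ 2 := by
      by_contra hh
      push Not at hh
      nlinarith
    have h2 : n ^ 2 = 1 := by linarith
    have h3 : 0 ≤ n := H.nonneg _ _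
    nlinarith
  have m0 : (0:ℝ) ∈ S := by simp [hS, H.n10]
  have m1 : Real.pi / 2 ∈ S := by simp [hS, H.n01]
  have m2 : -(Real.pi / 2) ∈ S := by
    simp only [hS, mem_ofPred_eq, Real.cos_neg, Real.sin_neg, Real.cos_pi_div_two,
      Real.sin_pi_div_two, H.n0]
    simp
  rcases le_total 0 θ with h | h
  · refine closed_midpoint hcl m0 m1 (fun x hx y hy => mid x hx.1 y hy.1 ?_) ⟨h, hθ.2⟩
    rw [abs_le]; constructor <;> linarith [hx.2.1, hx.2.2, hy.2.1, hy.2.2]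
  · refine closed_midpoint hcl m2 m0 (fun x hx y hy => mid x hx.1 y hy.1 ?_) ⟨hθ.1, h⟩
    rw [abs_le]; constructor <;> linarith [hx.2.1, hx.2.2, hy.2.1, hy.2.2]

theorem euclid (H : PNorm N) (l w : ℝ) : N l w ^ 2 = l ^ 2 + w ^ 2 := by
  have key : ∀ l w, 0 < l → N l w ^ 2 = l ^ 2 + w ^ 2 := by
    intro l w hl
    have h1 := H.exact_circle (θ := Real.arctan (w / l))
      ⟨(Real.neg_pi_div_two_lt_arctan _).le, (Real.arctan_lt_pi_div_two _).le⟩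
    rw [Real.cos_arctan, Real.sin_arctan] at h1
    set r := Real.sqrt (1 + (w / l) ^ 2) with hr
    have r2 : r ^ 2 = 1 + (w / l) ^ 2 := Real.sq_sqrt (by positivity)
    have rp : 0 < r := by positivity
    have h2 := H.hom (l * r) (1 / r) (w / l / r)
    rw [h1, abs_of_pos (by positivity), mul_one] at h2
    have e1 : l * r * (1 / r) = l := by field_simp
    have e2 : l * r * (w / l / r) = w := by field_simp
    rw [e1, e2] at h2
    rw [h2, mul_pow, r2]
    field_simp
  rcases lt_trichotomy l 0 with h | h | h
  · have := key (-l) (-w) (by linarith)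
    rw [H.neg] at this
    linarith
  · rw [h, H.n0, sq_abs]; ring
  · exact key l w h

end PNorm

/-- Distance functions of plane type. -/
structure PlaneD (D : ℝ × ℝ → ℝ × ℝ → ℝ) : Prop where
  symm : ∀ p q, D p q = D q p
  tri : ∀ p q r, D p r ≤ D p q + D q r
  pt : ∀ x y z w, D x y * D z w ≤ D x z * D y w + D x w * D y z
  slice : ∀ t u u', D (t, u) (t, u') = |u - u'|
  ge : ∀ p q : ℝ × ℝ, |p.1 - q.1| ≤ D p q
  le : ∀ t t' u, D (t, u) (t', u) ≤ 3 * |t - t'|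
  seg : ∀ p q : ℝ × ℝ, ∀ s ∈ Icc (0:ℝ) 1, ∃ m : ℝ × ℝ, m.1 = (1 - s) * p.1 + s * q.1 ∧
    D p m = s * D p q ∧ D m q = (1 - s) * D p q
  perp : ∀ (p : ℝ × ℝ) t', ∃ u', D p (t', u') = |p.1 - t'|

/-- Type synonym for the plane. -/
def Pl : Type := ℝ × ℝ

/-- The metric attached to a plane distance. -/
@[reducible]
noncomputable def PlaneD.metric {D : ℝ × ℝ → ℝ × ℝ → ℝ} (H : PlaneD D) : MetricSpace Pl where
  dist := D
  dist_self := fun p => by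
    obtain ⟨t, u⟩ := p
    change D (t, u) (t, u) = 0
    rw [H.slice]; simp
  dist_comm := H.symm
  dist_triangle := H.tri
  eq_of_dist_eq_zero := fun {p q} h => by
    obtain ⟨t, u⟩ := p
    obtain ⟨t', u'⟩ := q
    change D (t, u) (t', u') = 0 at h
    have h1 := H.ge (t, u) (t', u')
    rw [h] at h1
    have h2 : t = t' := sub_eq_zero.1 (abs_eq_zero.1 (le_antisymm h1 (abs_nonneg _)))
    subst h2
    rw [H.slice] at h
    have h3 : u = u' := sub_eq_zero.1 (abs_eq_zero.1 h)
    rw [h3]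

namespace PlaneD
variable {D : ℝ × ℝ → ℝ × ℝ → ℝ}

lemma exists_bus (H : PlaneD D) : ∃ κ : ℝ → ℝ, ∃ b b' : ℝ × ℝ → ℝ,
    (∀ t u, b (t, u) = κ t - u) ∧ (∀ t u, b' (t, u) = u - κ t) ∧
    (∀ p q, |b p - b q| ≤ D p q) ∧
    (∀ p m q, D p m + D m q = D p q → D p q * b m ≤ D m q * b p + D p m * b q) ∧
    (∀ p m q, D p m + D m q = D p q → D p q * b' m ≤ D m q * b' p + D p m * b' q) := by
  let inst : MetricSpace Pl := H.metric
  have hd : ∀ p q : Pl, dist p q = D p q := fun p q => rfl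
  have hPT : Ptolemaic Pl := fun x y z w => H.pt x y z w
  let s : ℝ → ℝ → Pl := fun t u => ((t, u) : ℝ × ℝ)
  have hs : ∀ t, IsGeodesicLine (s t) := fun t u u' => H.slice t u u'
  have hpar : ∀ t, ParallelLines (s 0) (s t) := by
    intro t
    have bd : ∀ u, dist (s 0 u) (s t u) ≤ 3 * |0 - t| := fun u => H.le 0 t u
    have l1 : Tendsto (fun u : ℝ => 3 * |0 - t| / |u|) atTop (𝓝 0) :=
      tendsto_const_nhds.div_atTop tendsto_abs_atTop_atTop
    have l2 : Tendsto (fun u : ℝ => 3 * |0 - t| / |u|) atBot (𝓝 0) :=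
      tendsto_const_nhds.div_atTop tendsto_abs_atBot_atTop
    exact ⟨squeeze_zero (fun u => by positivity)
        (fun u => div_le_div_of_nonneg_right (bd u) (abs_nonneg u)) l1,
      squeeze_zero (fun u => by positivity)
        (fun u => div_le_div_of_nonneg_right (bd u) (abs_nonneg u)) l2⟩
  choose κ hκ hκ' using fun t => bus_parallel hPT (hs 0) (hs t) (hpar t)
  let B : Pl → ℝ := bus (s 0)
  let B' : Pl → ℝ := bus (revl (s 0))
  refine ⟨κ, B, B', ?_, ?_, ?_, ?_, ?_⟩
  · intro t u
    have := bus_self ((hs t).shift (κ t)) (u - κ t)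
    rw [hκ, sub_add_cancel] at this
    change bus (s 0) (s t u) = _
    rw [this]; ring
  · intro t u
    have := bus_rev_self ((hs t).shift (κ t)) (u - κ t)
    rw [hκ', sub_add_cancel] at this
    exact this
  · intro p q
    exact bus_abs (hs 0) p q
  · intro p m q h
    exact bus_convex hPT (hs 0) (a := p) (m := m) (b := q) h
  · intro p m q h
    exact bus_convex hPT (hs 0).rev (a := p) (m := m) (b := q) h

theorem euclid (H : PlaneD D) : ∃ κ : ℝ → ℝ, ∀ t u t' u',
    D (t, u) (t', u') ^ 2 = (t - t') ^ 2 + ((u - κ t) - (u' - κ t')) ^ 2 := by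
  obtain ⟨κ, b, b', hb, hb', blip, bc, bc'⟩ := H.exists_bus
  have κlip : ∀ t t', |κ t - κ t'| ≤ 3 * |t - t'| := by
    intro t t'
    have h1 := blip (t, 0) (t', 0)
    rw [hb, hb, sub_zero, sub_zero] at h1
    exact h1.trans (H.le t t' 0)
  have dnn : ∀ p q, 0 ≤ D p q := fun p q => (abs_nonneg _).trans (H.ge p q)
  set E : ℝ → ℝ → ℝ → ℝ → ℝ := fun a c a' c' => D (a, c + κ a) (a', c' + κ a') with hE
  have Enn : ∀ a c a' c', 0 ≤ E a c a' c' := fun a c a' c' => dnn _ _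
  have Esymm : ∀ a c a' c', E a c a' c' = E a' c' a c := fun a c a' c' => H.symm _ _
  have Etri : ∀ a c a' c' a'' c'', E a c a'' c'' ≤ E a c a' c' + E a' c' a'' c'' :=
    fun a c a' c' a'' c'' => H.tri _ _ _
  have Ele : ∀ a c a' c', E a c a' c' ≤ 6 * |a - a'| + |c - c'| := by
    intro a c a' c'
    have h1 := H.tri (a, c + κ a) (a', c + κ a) (a', c' + κ a')
    have h2 := H.le a a' (c + κ a)
    have h3 := H.slice a' (c + κ a) (c' + κ a')
    have h4 : |c + κ a - (c' + κ a')| ≤ |c - c'| + |κ a - κ a'| := by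
      rw [show c + κ a - (c' + κ a') = (c - c') + (κ a - κ a') by ring]; exact abs_add_le _ _
    have h5 := κlip a a'
    simp only [hE]
    linarith
  have Ege : ∀ a c a' c', |c - c'| ≤ E a c a' c' := by
    intro a c a' c'
    have := blip (a, c + κ a) (a', c' + κ a')
    rw [hb, hb, abs_sub_comm] at this
    simp only [hE]
    rwa [show κ a' - (c' + κ a') - (κ a - (c + κ a)) = c - c' by ring] at this
  have Eseg : ∀ a c a' c', ∀ s ∈ Icc (0:ℝ) 1,
      E a c ((1 - s) * a + s * a') ((1 - s) * c + s * c') = s * E a c a' c' := by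
    intro a c a' c' s hs
    obtain ⟨m, m1, m2, m3⟩ := H.seg (a, c + κ a) (a', c' + κ a') s hs
    obtain ⟨t, u⟩ := m
    simp only at m1
    rcases (dnn (a, c + κ a) (a', c' + κ a')).eq_or_lt with h0 | h0
    · have e1 := H.ge (a, c + κ a) (a', c' + κ a')
      have e2 := Ege a c a' c'
      simp only [hE] at e2 ⊢
      rw [← h0] at e1 e2 ⊢
      have e3 : a = a' := sub_eq_zero.1 (abs_eq_zero.1 (le_antisymm e1 (abs_nonneg _)))
      have e4 : c = c' := sub_eq_zero.1 (abs_eq_zero.1 (le_antisymm e2 (abs_nonneg _)))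
      subst e3; subst e4
      rw [show (1 - s) * a + s * a = a by ring, show (1 - s) * c + s * c = c by ring, H.slice]
      simp
    · have hsum : D (a, c + κ a) (t, u) + D (t, u) (a', c' + κ a') =
          D (a, c + κ a) (a', c' + κ a') := by rw [m2, m3]; ring
      have k1 := bc _ _ _ hsum
      have k2 := bc' _ _ _ hsum
      rw [m2, m3, hb, hb, hb] at k1
      rw [m2, m3, hb', hb', hb'] at k2
      set d := D (a, c + κ a) (a', c' + κ a')
      have : d * (u - κ t) = d * ((1 - s) * c + s * c') := by
        apply le_antisymm
        · nlinarith
        · nlinarith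
      have hu := mul_left_cancel₀ h0.ne' this
      have hu' : u = (1 - s) * c + s * c' + κ t := by linarith
      simp only [hE]
      rw [← m1, ← hu', m2]
  -- scaling
  have Escale : ∀ a c l w r, 1 ≤ r → E a c (a + r * l) (c + r * w) = r * E a c (a + l) (c + w) := by
    intro a c l w r hr
    have rp : 0 < r := by linarith
    have := Eseg a c (a + r * l) (c + r * w) r⁻¹ ⟨by positivity, inv_le_one_of_one_le₀ hr⟩
    rw [show (1 - r⁻¹) * a + r⁻¹ * (a + r * l) = a + l by field_simp; ring,
      show (1 - r⁻¹) * c + r⁻¹ * (c + r * w) = c + w by field_simp; ring] at this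
    rw [this]; field_simp
  have Etrans : ∀ a c l w, E a c (a + l) (c + w) = E 0 0 l w := by
    intro a c l w
    have key : ∀ r, 1 ≤ r → r * |E a c (a + l) (c + w) - E 0 0 (0 + l) (0 + w)| ≤
        2 * (6 * |a| + |c|) := by
      intro r hr
      have rp : 0 < r := by linarith
      have ra : ∀ x : ℝ, r * |x| = |r * x| := fun x => by rw [abs_mul, abs_of_pos rp]
      rw [ra, mul_sub, ← Escale _ _ _ _ r hr,
        ← Escale _ _ _ _ r hr]
      have t1 := Ele a c 0 0
      have t2 := Ele (a + r * l) (c + r * w) (0 + r * l) (0 + r * w)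
      rw [show a + r * l - (0 + r * l) = a by ring, show c + r * w - (0 + r * w) = c by ring] at t2
      rw [sub_zero, sub_zero] at t1
      have t3 := Etri a c 0 0 (a + r * l) (c + r * w)
      have t4 := Etri 0 0 (0 + r * l) (0 + r * w) (a + r * l) (c + r * w)
      have t5 := Etri 0 0 a c (0 + r * l) (0 + r * w)
      have t6 := Etri a c (a + r * l) (c + r * w) (0 + r * l) (0 + r * w)
      have t7 := Esymm 0 0 a c
      have t8 := Esymm (0 + r * l) (0 + r * w) (a + r * l) (c + r * w)
      rw [abs_le]
      constructor <;> linarith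
    rw [zero_add, zero_add] at key
    by_contra hne
    have hpos : 0 < |E a c (a + l) (c + w) - E 0 0 l w| := abs_pos.2 (sub_ne_zero.2 hne)
    set δ := |E a c (a + l) (c + w) - E 0 0 l w|
    have := key (2 * (6 * |a| + |c|) / δ + 1) (by
      have : 0 ≤ 2 * (6 * |a| + |c|) / δ := by positivity
      linarith)
    rw [add_mul, div_mul_cancel₀ _ hpos.ne'] at this
    linarith
  set M : ℝ → ℝ → ℝ := fun l w => E 0 0 l w with hM
  have EM : ∀ a c a' c', E a c a' c' = M (a' - a) (c' - c) := by
    intro a c a' c'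
    have := Etrans a c (a' - a) (c' - c)
    rwa [add_sub_cancel, add_sub_cancel] at this
  have Mneg : ∀ l w, M (-l) (-w) = M l w := by
    intro l w
    have h1 := EM l w 0 0
    rw [zero_sub, zero_sub, Esymm] at h1
    exact h1.symm
  have Mpos : ∀ a l w, 0 ≤ a → M (a * l) (a * w) = a * M l w := by
    intro a l w ha
    rcases le_total 1 a with h | h
    · have := Escale 0 0 l w a h
      simpa using this
    · have := Eseg 0 0 l w a ⟨ha, h⟩
      simpa using this
  have Mhom : ∀ a l w, M (a * l) (a * w) = |a| * M l w := by
    intro a l w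
    rcases le_total 0 a with h | h
    · rw [Mpos a l w h, abs_of_nonneg h]
    · rw [← Mneg, ← neg_mul, ← neg_mul, Mpos _ _ _ (by linarith), abs_of_nonpos h]
  have Mtri : ∀ l w l' w', M (l + l') (w + w') ≤ M l w + M l' w' := by
    intro l w l' w'
    have h1 := Etri 0 0 l w (l + l') (w + w')
    rw [EM l w, add_sub_cancel_left, add_sub_cancel_left] at h1
    exact h1
  have Mpt : ∀ x1 x2 y1 y2 z1 z2 w1 w2, M (x1 - y1) (x2 - y2) * M (z1 - w1) (z2 - w2) ≤
    M (x1 - z1) (x2 - z2) * M (y1 - w1) (y2 - w2) +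
      M (x1 - w1) (x2 - w2) * M (y1 - z1) (y2 - z2) := by
    intro x1 x2 y1 y2 z1 z2 w1 w2
    have h1 := H.pt (y1, y2 + κ y1) (x1, x2 + κ x1) (w1, w2 + κ w1) (z1, z2 + κ z1)
    have ee : ∀ a c a' c', D (a, c + κ a) (a', c' + κ a') = M (a' - a) (c' - c) :=
      fun a c a' c' => EM a c a' c'
    rw [ee, ee, ee, ee, ee, ee] at h1
    rw [← Mneg (w1 - y1), ← Mneg (z1 - x1), ← Mneg (z1 - y1), ← Mneg (w1 - x1)] at h1
    simp only [neg_sub] at h1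
    linarith
  have M01 : M 0 1 = 1 := by
    have := H.slice 0 (0 + κ 0) (1 + κ 0)
    change E 0 0 0 1 = _ at this
    rw [show 0 + κ 0 - (1 + κ 0) = -1 by ring, abs_neg, abs_one] at this
    exact this
  have Mge : ∀ l w, |l| ≤ M l w := by
    intro l w
    have := H.ge (0, 0 + κ 0) (l, w + κ l)
    simp only [zero_sub, abs_neg] at this
    exact this
  have Mge2 : ∀ l w, |w| ≤ M l w := by
    intro l w
    have := Ege 0 0 l w
    rwa [zero_sub, abs_neg] at this
  obtain ⟨ys, hys⟩ : ∃ ys, M 1 ys = 1 := by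
    obtain ⟨u', hu'⟩ := H.perp (0, 0 + κ 0) 1
    refine ⟨u' - κ 1, ?_⟩
    simp only [hM, hE, sub_add_cancel]
    rw [hu']; simp
  have HN : PNorm (fun l w => M l (w + ys * l)) :=
    { hom := fun a l w => by
        rw [show a * w + ys * (a * l) = a * (w + ys * l) by ring]; exact Mhom _ _ _
      tri := fun l w l' w' => by
        rw [show w + w' + ys * (l + l') = (w + ys * l) + (w' + ys * l') by ring]
        exact Mtri _ _ _ _
      pt := fun x1 x2 y1 y2 z1 z2 w1 w2 => by
        have := Mpt x1 (x2 + ys * x1) y1 (y2 + ys * y1) z1 (z2 + ys * z1) w1 (w2 + ys * w1)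
        have e : ∀ a c a' c', c + ys * a - (c' + ys * a') = c - c' + ys * (a - a') := by
          intros; ring
        simpa only [e] using this
      n01 := by simpa using M01
      n10 := by simpa using hys
      ge := fun l w => Mge _ _ }
  have hN : ∀ l w, M l w ^ 2 = l ^ 2 + (w - ys * l) ^ 2 := by
    intro l w
    have := HN.euclid l (w - ys * l)
    simpa using this
  have hys0 : ys = 0 := by
    have key : ∀ w, w ^ 2 ≤ 1 + (w - ys) ^ 2 := by
      intro w
      have h1 := pow_le_pow_left₀ (abs_nonneg w) (Mge2 1 w) 2
      rw [sq_abs, hN] at h1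
      linarith
    by_contra h
    have h2 := key ((2 + ys ^ 2) / (2 * ys))
    have : (2 + ys ^ 2) / (2 * ys) * ys = (2 + ys ^ 2) / 2 := by field_simp
    nlinarith
  refine ⟨κ, fun t u t' u' => ?_⟩
  have h1 := EM t (u - κ t) t' (u' - κ t')
  simp only [hE, sub_add_cancel] at h1
  rw [h1, hN, hys0]; ring

end PlaneD

namespace Strip
variable {X : Type*} [MetricSpace X]

/-- The height coordinate. -/
noncomputable def U (S : Strip X) (z : X) : ℝ := dist z (S.g (S.T z) 0)

variable (S : Strip X)

lemma zero_mem (t : ℝ) : (0:ℝ) ∈ Icc 0 (S.f t) := ⟨le_rfl, (S.f_pos t).le⟩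
lemma f_mem (t : ℝ) : S.f t ∈ Icc 0 (S.f t) := ⟨(S.f_pos t).le, le_rfl⟩

lemma U_g (t u : ℝ) (hu : u ∈ Icc 0 (S.f t)) : S.U (S.g t u) = u := by
  rw [U, S.T_g t u hu, S.g_dist t u hu 0 (S.zero_mem t), sub_zero, abs_of_nonneg hu.1]

lemma g_TU (z : X) : S.g (S.T z) (S.U z) = z := by
  obtain ⟨u, hu, h⟩ := S.surj z
  have := S.U_g _ _ hu
  rw [h] at this
  rw [this, h]

lemma U_mem (z : X) : S.U z ∈ Icc 0 (S.f (S.T z)) := by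
  obtain ⟨u, hu, h⟩ := S.surj z
  have := S.U_g _ _ hu
  rw [h] at this
  rwa [this]

lemma dist_same {z w : X} (h : S.T z = S.T w) : dist z w = |S.U z - S.U w| := by
  rw [← S.g_dist (S.T z) _ (S.U_mem z) _ (h ▸ S.U_mem w), S.g_TU, h, S.g_TU]

lemma ext_TU {z w : X} (h : S.T z = S.T w) (h' : S.U z = S.U w) : z = w := by
  rw [← S.g_TU z, ← S.g_TU w, h, h']

lemma f_lip (t t' : ℝ) : |S.f t - S.f t'| ≤ 2 * |t - t'| := by
  have e : ∀ t, S.f t = dist (S.g t 0) (S.g t (S.f t)) := fun t => by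
    rw [S.g_dist t _ (S.zero_mem t) _ (S.f_mem t), zero_sub, abs_neg, abs_of_pos (S.f_pos t)]
  have h0 : dist (S.g t 0) (S.g t' 0) = |t - t'| := S.line0 t t'
  have h1 : dist (S.g t (S.f t)) (S.g t' (S.f t')) = |t - t'| := S.line1 t t'
  rw [e t, e t']
  have := dist_triangle4 (S.g t 0) (S.g t' 0) (S.g t' (S.f t')) (S.g t (S.f t))
  have := dist_triangle4 (S.g t' 0) (S.g t 0) (S.g t (S.f t)) (S.g t' (S.f t'))
  rw [dist_comm (S.g t' (S.f t')) (S.g t (S.f t))] at *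
  rw [dist_comm (S.g t' 0) (S.g t 0)] at *
  rw [abs_le]; constructor <;> linarith

lemma U_lip (z w : X) : |S.U z - S.U w| ≤ dist z w + |S.T z - S.T w| := by
  have h0 : dist (S.g (S.T z) 0) (S.g (S.T w) 0) = |S.T z - S.T w| := S.line0 _ _
  have h := dist_dist_dist_le z (S.g (S.T z) 0) w (S.g (S.T w) 0)
  rw [h0, Real.dist_eq] at h
  exact h

lemma U_lip2 (z w : X) : |S.U z - S.U w| ≤ 2 * dist z w := by
  have := S.U_lip z w
  have := S.T_lip z w
  linarith

lemma dist_le (z w : X) : dist z w ≤ 3 * |S.T z - S.T w| + |S.U z - S.U w| := by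
  obtain ⟨l, hl, hT, hz⟩ := S.line z
  have h1 := hl (S.T z) (S.T w)
  rw [hz] at h1
  have h2 := S.U_lip z (l (S.T w))
  rw [hT, h1] at h2
  have h3 := S.dist_same (hT (S.T w))
  have h4 := dist_triangle z (l (S.T w)) w
  have h5 := abs_sub_le (S.U (l (S.T w))) (S.U z) (S.U w)
  rw [abs_sub_comm (S.U (l (S.T w))) (S.U z)] at h5
  rw [h1] at h4
  linarith

lemma f_cont : Continuous S.f := by
  have : LipschitzWith 2 S.f := LipschitzWith.of_dist_le_mul fun x y => by
    simpa [Real.dist_eq] using S.f_lip x y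
  exact this.continuous

lemma T_cont : Continuous S.T := by
  have : LipschitzWith 1 S.T := LipschitzWith.of_dist_le_mul fun x y => by
    simpa [Real.dist_eq] using S.T_lip x y
  exact this.continuous

lemma U_cont : Continuous S.U := by
  have : LipschitzWith 2 S.U := LipschitzWith.of_dist_le_mul fun x y => by
    simpa [Real.dist_eq] using S.U_lip2 x y
  exact this.continuous

/-- Lines along which `T` is the parameter. -/
structure TLine (l : ℝ → X) : Prop where
  geo : IsGeodesicLine l
  T_eq : ∀ s, S.T (l s) = s

lemma exists_TLine (z : X) : ∃ l, S.TLine l ∧ l (S.T z) = z := by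
  obtain ⟨l, hl, hT, hz⟩ := S.line z
  exact ⟨l, ⟨hl, hT⟩, hz⟩

/-- Interior points. -/
def Int (z : X) : Prop := 0 < S.U z ∧ S.U z < S.f (S.T z)

variable {S}

lemma TLine.cont {l : ℝ → X} (hl : S.TLine l) : Continuous l := by
  have : LipschitzWith 1 l := LipschitzWith.of_dist_le_mul fun x y => by
    rw [hl.geo x y]; simp [Real.dist_eq]
  exact this.continuous

lemma TLine.U_lip {l : ℝ → X} (hl : S.TLine l) (s t : ℝ) :
    |S.U (l s) - S.U (l t)| ≤ 2 * |s - t| := by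
  have := S.U_lip2 (l s) (l t)
  rwa [hl.geo s t] at this

lemma isSeg_T {z w : X} : ∃ c : ℝ → X, IsSeg z w c ∧
    ∀ s ∈ Icc (0:ℝ) 1, S.T (c s) = (1 - s) * S.T z + s * S.T w := S.geod z w

end Strip

namespace Strip
variable {X : Type*} [MetricSpace X]

/-- Convergence of rescaled coordinates. -/
structure BConv (S : Strip X) (p : X) (h : ℕ → ℝ) (z : ℕ → X) (q : ℝ × ℝ) : Prop where
  t : Tendsto (fun n => (S.T (z n) - S.T p) / h n) (hyperfilter ℕ : Filter ℕ) (𝓝 q.1)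
  u : Tendsto (fun n => (S.U (z n) - S.U p) / h n) (hyperfilter ℕ : Filter ℕ) (𝓝 q.2)

variable {S : Strip X} {p : X} {h : ℕ → ℝ}

lemma BConv.bdd (hh : ∀ n, 0 < h n) {z : ℕ → X} {R : ℝ}
    (hz : ∀ᶠ n in (hyperfilter ℕ : Filter ℕ), dist (z n) p ≤ R * h n) :
    ∃ q, BConv S p h z q := by
  obtain ⟨a, ha⟩ := ulim_exists (u := fun n => (S.T (z n) - S.T p) / h n) 0 R (by
    filter_upwards [hz] with n hn
    rw [Real.dist_eq, sub_zero, abs_div, abs_of_pos (hh n), div_le_iff₀ (hh n)]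
    exact (S.T_lip _ _).trans hn)
  obtain ⟨b, hb⟩ := ulim_exists (u := fun n => (S.U (z n) - S.U p) / h n) 0 (2 * R) (by
    filter_upwards [hz] with n hn
    rw [Real.dist_eq, sub_zero, abs_div, abs_of_pos (hh n), div_le_iff₀ (hh n)]
    have := S.U_lip2 (z n) p
    linarith)
  exact ⟨(a, b), ha, hb⟩

lemma BConv.exists_seq (hp : S.Int p) (hh : ∀ n, 0 < h n) (h0 : Tendsto h atTop (𝓝 0))
    (q : ℝ × ℝ) : ∃ z : ℕ → X,
      (∀ᶠ n in (hyperfilter ℕ : Filter ℕ), S.T (z n) = S.T p + h n * q.1 ∧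
        S.U (z n) = S.U p + h n * q.2) ∧ BConv S p h z q := by
  have c1 : Tendsto (fun n => S.U p + h n * q.2) atTop (𝓝 (S.U p)) := by
    simpa using (h0.mul_const q.2).const_add (S.U p)
  have c2 : Tendsto (fun n => S.T p + h n * q.1) atTop (𝓝 (S.T p)) := by
    simpa using (h0.mul_const q.1).const_add (S.T p)
  have c3 := (S.f_cont.tendsto (S.T p)).comp c2
  have e1 : ∀ᶠ n in atTop, 0 < S.U p + h n * q.2 := c1.eventually (lt_mem_nhds hp.1)
  have e2 : ∀ᶠ n in atTop, S.U p + h n * q.2 < S.f (S.T p + h n * q.1) :=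
    c1.eventually_lt c3 hp.2
  let z : ℕ → X := fun n => S.g (S.T p + h n * q.1) (S.U p + h n * q.2)
  have e3 : ∀ᶠ n in (hyperfilter ℕ : Filter ℕ), S.T (z n) = S.T p + h n * q.1 ∧
        S.U (z n) = S.U p + h n * q.2 := by
    apply hyper_of_atTop
    filter_upwards [e1, e2] with n h1 h2
    exact ⟨S.T_g _ _ ⟨h1.le, h2.le⟩, S.U_g _ _ ⟨h1.le, h2.le⟩⟩
  refine ⟨z, e3, ?_, ?_⟩
  · refine tendsto_const_nhds.congr' ?_
    filter_upwards [e3] with n hn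
    rw [hn.1, add_sub_cancel_left, mul_div_cancel_left₀ _ (hh n).ne']
  · refine tendsto_const_nhds.congr' ?_
    filter_upwards [e3] with n hn
    rw [hn.2, add_sub_cancel_left, mul_div_cancel_left₀ _ (hh n).ne']

lemma BConv.dist_zero (hh : ∀ n, 0 < h n) {z w : ℕ → X} {q : ℝ × ℝ}
    (hz : BConv S p h z q) (hw : BConv S p h w q) :
    Tendsto (fun n => dist (z n) (w n) / h n) (hyperfilter ℕ : Filter ℕ) (𝓝 0) := by
  have l := (((hz.t.sub hw.t).abs).const_mul 3).add (hz.u.sub hw.u).abs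
  rw [sub_self, sub_self, abs_zero, mul_zero, add_zero] at l
  refine squeeze_zero (fun n => div_nonneg dist_nonneg (hh n).le) (fun n => ?_) l
  have := S.dist_le (z n) (w n)
  rw [div_sub_div_same, div_sub_div_same, abs_div, abs_div, abs_of_pos (hh n), ← mul_div_assoc,
    ← add_div]
  apply div_le_div_of_nonneg_right _ (hh n).le
  rw [show S.T (z n) - S.T p - (S.T (w n) - S.T p) = S.T (z n) - S.T (w n) by ring,
    show S.U (z n) - S.U p - (S.U (w n) - S.U p) = S.U (z n) - S.U (w n) by ring]
  exact this

/-- The blow-up distance. -/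
lemma blowup (hp : S.Int p) (hh : ∀ n, 0 < h n) (h0 : Tendsto h atTop (𝓝 0)) :
    ∃ D, PlaneD D ∧ ∀ z w q r, BConv S p h z q → BConv S p h w r →
      Tendsto (fun n => dist (z n) (w n) / h n) (hyperfilter ℕ : Filter ℕ) (𝓝 (D q r)) := by
  choose G hG1 hG using BConv.exists_seq hp hh h0
  have ex : ∀ q r, ∃ L, Tendsto (fun n => dist (G q n) (G r n) / h n)
      (hyperfilter ℕ : Filter ℕ) (𝓝 L) := by
    intro q r
    refine ulim_exists 0 (3 * |q.1 - r.1| + |q.2 - r.2|) ?_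
    filter_upwards [hG1 q, hG1 r] with n h1 h2
    have := S.dist_le (G q n) (G r n)
    rw [h1.1, h1.2, h2.1, h2.2, add_sub_add_left_eq_sub, add_sub_add_left_eq_sub, ← mul_sub,
      ← mul_sub, abs_mul, abs_mul, abs_of_pos (hh n)] at this
    rw [Real.dist_eq, sub_zero, abs_of_nonneg (div_nonneg dist_nonneg (hh n).le),
      div_le_iff₀ (hh n)]
    linarith
  choose D hD using ex
  have conv : ∀ z w q r, BConv S p h z q → BConv S p h w r →
      Tendsto (fun n => dist (z n) (w n) / h n) (hyperfilter ℕ : Filter ℕ) (𝓝 (D q r)) := by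
    intro z w q r hz hw
    have l1 := BConv.dist_zero hh hz (hG q)
    have l2 := BConv.dist_zero hh hw (hG r)
    have l3 : Tendsto (fun n => dist (z n) (w n) / h n - dist (G q n) (G r n) / h n)
        (hyperfilter ℕ : Filter ℕ) (𝓝 0) := by
      have l12 := l1.add l2
      rw [add_zero] at l12
      refine squeeze_zero_norm (fun n => ?_) l12
      rw [Real.norm_eq_abs, div_sub_div_same, abs_div, abs_of_pos (hh n), ← add_div]
      apply div_le_div_of_nonneg_right _ (hh n).le
      have := dist_dist_dist_le (z n) (w n) (G q n) (G r n)
      rwa [Real.dist_eq] at this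
    have l4 := l3.add (hD q r)
    simpa using l4
  have tl : ∀ q r, ∀ᶠ n in (hyperfilter ℕ : Filter ℕ),
      |q.1 - r.1| = |S.T (G q n) - S.T (G r n)| / h n := by
    intro q r
    filter_upwards [hG1 q, hG1 r] with n h1 h2
    rw [h1.1, h2.1, add_sub_add_left_eq_sub, ← mul_sub, abs_mul, abs_of_pos (hh n),
      mul_div_cancel_left₀ _ (hh n).ne']
  have ul : ∀ q r, ∀ᶠ n in (hyperfilter ℕ : Filter ℕ),
      |q.2 - r.2| = |S.U (G q n) - S.U (G r n)| / h n := by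
    intro q r
    filter_upwards [hG1 q, hG1 r] with n h1 h2
    rw [h1.2, h2.2, add_sub_add_left_eq_sub, ← mul_sub, abs_mul, abs_of_pos (hh n),
      mul_div_cancel_left₀ _ (hh n).ne']
  -- points at bounded rescaled distance from G q
  have bd : ∀ (z : ℕ → X) q R, (∀ᶠ n in (hyperfilter ℕ : Filter ℕ),
      dist (G q n) (z n) / h n ≤ R) → ∃ r, BConv S p h z r := by
    intro z q R hz
    refine BConv.bdd hh (R := R + (3 * |q.1| + |q.2|)) ?_
    filter_upwards [hz, hG1 q] with n h1 h2
    have := S.dist_le (G q n) p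
    rw [h2.1, h2.2, add_sub_cancel_left, add_sub_cancel_left, abs_mul, abs_mul,
      abs_of_pos (hh n)] at this
    rw [div_le_iff₀ (hh n)] at h1
    have h3 := dist_triangle (z n) (G q n) p
    rw [dist_comm (z n) (G q n)] at h3
    linarith
  refine ⟨D, ?_, conv⟩
  refine ⟨?_, ?_, ?_, ?_, ?_, ?_, ?_, ?_⟩
  · intro q r
    refine tendsto_nhds_unique (hD q r) ((hD r q).congr fun n => ?_)
    rw [dist_comm]
  · intro q r s
    refine le_of_tendsto_of_tendsto' (hD q s) ((hD q r).add (hD r s)) fun n => ?_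
    rw [← add_div]
    exact div_le_div_of_nonneg_right (dist_triangle _ _ _) (hh n).le
  · intro x y z w
    refine le_of_tendsto_of_tendsto' ((hD x y).mul (hD z w))
      (((hD x z).mul (hD y w)).add ((hD x w).mul (hD y z))) fun n => ?_
    rw [div_mul_div_comm, div_mul_div_comm, div_mul_div_comm, ← add_div]
    exact div_le_div_of_nonneg_right (S.hPT _ _ _ _) (mul_pos (hh n) (hh n)).le
  · intro t u u'
    refine tendsto_nhds_unique (hD _ _) (tendsto_const_nhds.congr' ?_)
    filter_upwards [ul (t, u) (t, u'), hG1 (t, u), hG1 (t, u')] with n h1 h2 h3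
    rw [S.dist_same (by rw [h2.1, h3.1]), ← h1]
  · intro q r
    refine le_of_tendsto_of_tendsto tendsto_const_nhds (hD q r) ?_
    filter_upwards [tl q r] with n h1
    rw [h1]
    exact div_le_div_of_nonneg_right (S.T_lip _ _) (hh n).le
  · intro t t' u
    refine le_of_tendsto (hD _ _) ?_
    filter_upwards [tl (t, u) (t', u), hG1 (t, u), hG1 (t', u)] with n h1 h2 h3
    change |t - t'| = _ at h1
    rw [h1, ← mul_div_assoc]
    apply div_le_div_of_nonneg_right _ (hh n).le
    have := S.dist_le (G (t, u) n) (G (t', u) n)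
    rw [h2.2, h3.2, sub_self, abs_zero, add_zero] at this
    exact this
  · intro q r s hs
    choose c hc hcT using fun n => S.geod (G q n) (G r n)
    have d1 : ∀ n, dist (G q n) (c n s) / h n = s * (dist (G q n) (G r n) / h n) := by
      intro n; rw [(hc n).dist_left hs]; ring
    have d2 : ∀ n, dist (c n s) (G r n) / h n = (1 - s) * (dist (G q n) (G r n) / h n) := by
      intro n; rw [(hc n).dist_right hs]; ring
    obtain ⟨m, hm⟩ := bd (fun n => c n s) q (s * D q r + 1) (by
      have := (hD q r).const_mul s
      filter_upwards [this.eventually (gt_mem_nhds (lt_add_one _))] with n hn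
      rw [d1]; exact hn.le)
    refine ⟨m, ?_, ?_, ?_⟩
    · refine tendsto_nhds_unique hm.t (tendsto_const_nhds.congr' ?_)
      filter_upwards [hG1 q, hG1 r] with n h1 h2
      rw [hcT n s hs, h1.1, h2.1]
      have := (hh n).ne'
      field_simp; ring
    · refine tendsto_nhds_unique (conv _ _ _ _ (hG q) hm) (((hD q r).const_mul s).congr ?_)
      intro n; exact (d1 n).symm
    · refine tendsto_nhds_unique (conv _ _ _ _ hm (hG r)) (((hD q r).const_mul (1 - s)).congr ?_)
      intro n; exact (d2 n).symm
  · intro q t'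
    choose l hl hl2 using fun n => S.exists_TLine (G q n)
    have d1 : ∀ᶠ n in (hyperfilter ℕ : Filter ℕ),
        dist (G q n) (l n (S.T p + h n * t')) / h n = |q.1 - t'| := by
      filter_upwards [hG1 q] with n h1
      nth_rewrite 1 [← hl2 n]
      rw [(hl n).geo, h1.1, add_sub_add_left_eq_sub, ← mul_sub, abs_mul, abs_of_pos (hh n),
        mul_div_cancel_left₀ _ (hh n).ne']
    obtain ⟨m, hm⟩ := bd (fun n => l n (S.T p + h n * t')) q _ (d1.mono fun n hn => hn.le)
    obtain ⟨m1, m2⟩ := m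
    have hm1 : m1 = t' := by
      refine tendsto_nhds_unique hm.t (tendsto_const_nhds.congr' (Eventually.of_forall fun n => ?_))
      simp only
      rw [(hl n).T_eq, add_sub_cancel_left, mul_div_cancel_left₀ _ (hh n).ne']
    subst hm1
    refine ⟨m2, tendsto_nhds_unique (conv _ _ _ _ (hG q) hm) (tendsto_const_nhds.congr' ?_)⟩
    filter_upwards [d1] with n hn
    exact hn.symm

/-- Master lemma: at interior points the metric is infinitesimally Euclidean. -/
theorem master (hp : S.Int p) {σ : ℝ → X} (hσ : S.TLine σ) (hσp : σ (S.T p) = p) {ε : ℝ}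
    (hε : 0 < ε) : ∃ δ > 0, ∀ h, 0 < h → h < δ → ∀ z w, dist z p ≤ h → dist w p ≤ h →
    |dist z w ^ 2 - (S.T z - S.T w) ^ 2 -
      ((S.U z - S.U (σ (S.T z))) - (S.U w - S.U (σ (S.T w)))) ^ 2| ≤ ε * h ^ 2 := by
  by_contra hcon
  push Not at hcon
  choose h hh hhδ z w hz hw hzw using fun n : ℕ => hcon (1 / (n + 1)) (by positivity)
  have h0 : Tendsto h atTop (𝓝 0) :=
    squeeze_zero (fun n => (hh n).le) (fun n => (hhδ n).le) tendsto_one_div_add_atTop_nhds_zero_nat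
  obtain ⟨D, HD, conv⟩ := blowup hp hh h0
  obtain ⟨κ, hκ⟩ := HD.euclid
  obtain ⟨⟨q1, q2⟩, hq⟩ := BConv.bdd (S := S) hh (z := z) (R := 1)
    (Eventually.of_forall fun n => by rw [one_mul]; exact hz n)
  obtain ⟨⟨r1, r2⟩, hr⟩ := BConv.bdd (S := S) hh (z := w) (R := 1)
    (Eventually.of_forall fun n => by rw [one_mul]; exact hw n)
  have hpc : BConv S p h (fun _ => p) (0, 0) := by constructor <;> simp
  have key : ∀ (z : ℕ → X) (q1 q2 : ℝ), (∀ n, dist (z n) p ≤ h n) → BConv S p h z (q1, q2) →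
      Tendsto (fun n => (S.U (z n) - S.U (σ (S.T (z n)))) / h n) (hyperfilter ℕ : Filter ℕ)
        (𝓝 (q2 - (κ q1 - κ 0))) := by
    intro z q1 q2 hz hq
    have d1 : ∀ n, dist (σ (S.T (z n))) p = |S.T (z n) - S.T p| := by
      intro n
      have := hσ.geo (S.T (z n)) (S.T p)
      rwa [hσp] at this
    obtain ⟨⟨v1, v⟩, hv⟩ := BConv.bdd (S := S) (p := p) hh (z := fun n => σ (S.T (z n))) (R := 1)
      (Eventually.of_forall fun n => by
        rw [one_mul, d1]; exact (S.T_lip _ _).trans (hz n))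
    have hv1 : v1 = q1 := by
      refine tendsto_nhds_unique hv.t ?_
      simp only [hσ.T_eq]
      exact hq.t
    subst hv1
    have e1 : D (v1, v) (0, 0) = |v1| := by
      refine tendsto_nhds_unique (conv _ _ _ _ hv hpc) (hq.t.abs.congr fun n => ?_)
      rw [d1, abs_div, abs_of_pos (hh n)]
    have e2 := hκ v1 v 0 0
    rw [e1, sq_abs, sub_zero] at e2
    have e3 : v = κ v1 - κ 0 := by
      have : (v - κ v1 - (0 - κ 0)) ^ 2 = 0 := by linarith
      have := pow_eq_zero_iff (two_ne_zero) |>.1 this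
      linarith
    rw [← e3]
    refine (hq.u.sub hv.u).congr fun n => ?_
    ring
  have l1 := (key z q1 q2 hz hq).sub (key w r1 r2 hw hr)
  have l2 := ((conv _ _ _ _ hq hr).pow 2).sub ((hq.t.sub hr.t).pow 2) |>.sub (l1.pow 2)
  rw [hκ] at l2
  have l3 := l2.abs
  rw [show (q1 - r1) ^ 2 + (q2 - κ q1 - (r2 - κ r1)) ^ 2 - ((q1, q2).1 - (r1, r2).1) ^ 2 -
    (q2 - (κ q1 - κ 0) - (r2 - (κ r1 - κ 0))) ^ 2 = 0 by simp only; ring, abs_zero] at l3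
  obtain ⟨n, hn⟩ := (l3.eventually (gt_mem_nhds hε)).exists
  have := hzw n
  have hn2 : 0 < h n ^ 2 := pow_pos (hh n) 2
  have e : (dist (z n) (w n) / h n) ^ 2 -
      ((S.T (z n) - S.T p) / h n - (S.T (w n) - S.T p) / h n) ^ 2 -
      ((S.U (z n) - S.U (σ (S.T (z n)))) / h n - (S.U (w n) - S.U (σ (S.T (w n)))) / h n) ^ 2 =
      (dist (z n) (w n) ^ 2 - (S.T (z n) - S.T (w n)) ^ 2 -
      ((S.U (z n) - S.U (σ (S.T (z n)))) - (S.U (w n) - S.U (σ (S.T (w n))))) ^ 2) / h n ^ 2 := by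
    have := (hh n).ne'
    field_simp; ring
  rw [e, abs_div, abs_of_pos hn2, div_lt_iff₀ hn2] at hn
  linarith

end Strip

lemma dini {G : ℝ → ℝ} {a b K : ℝ} (hab : a ≤ b) (hc : ContinuousOn G (Icc a b))
    (hG : ∀ s ∈ Ioo a b, ∀ ε > 0, ∃ δ > 0, ∀ h, 0 < h → h < δ → G (s + h) ≤ G s + (K + ε) * h) :
    G b ≤ G a + K * (b - a) := by
  rcases hab.eq_or_lt with h0 | hab'
  · subst h0; simp
  have key : ∀ a' ∈ Ioo a b, G b ≤ G a' + K * (b - a') := by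
    intro a' ha'
    have := image_le_of_liminf_slope_right_le_deriv_boundary (f := G) (a := a') (b := b)
      (hc.mono (Icc_subset_Icc_left ha'.1.le)) (B := fun x => G a' + K * (x - a'))
      (B' := fun _ => K) (by simp) (by fun_prop) (by
        intro x hx
        have : HasDerivAt (fun x => G a' + K * (x - a')) (K * 1) x :=
          (((hasDerivAt_id x).sub_const a').const_mul K).const_add (G a')
        rw [mul_one] at this
        exact this.hasDerivWithinAt) (by
        intro x hx r hr
        obtain ⟨δ, hδ, h⟩ := hG x ⟨ha'.1.trans_le hx.1, hx.2⟩ ((r - K) / 2) (by linarith)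
        apply Eventually.frequently
        filter_upwards [Ioo_mem_nhdsGT (show x < x + δ by linarith)] with z hz
        have h1 := h (z - x) (by linarith [hz.1]) (by linarith [hz.2])
        rw [add_sub_cancel] at h1
        have hp : 0 < z - x := by linarith [hz.1]
        rw [slope_def_field, div_lt_iff₀ hp]
        have : (r - (K + (r - K) / 2)) * (z - x) > 0 := mul_pos (by linarith) hp
        linarith) (right_mem_Icc.2 ha'.2.le)
    exact this
  have l1 : Tendsto (fun a' => G a' + K * (b - a')) (𝓝[>] a) (𝓝 (G a + K * (b - a))) := by
    have c1 : Tendsto G (𝓝[>] a) (𝓝 (G a)) := by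
      have := hc a (left_mem_Icc.2 hab)
      refine this.mono_left ?_
      rw [← nhdsWithin_Ioo_eq_nhdsGT hab']
      exact nhdsWithin_mono _ Ioo_subset_Icc_self
    have c2 : Tendsto (fun a' => K * (b - a')) (𝓝[>] a) (𝓝 (K * (b - a))) :=
      (Continuous.tendsto (by fun_prop) a).mono_left nhdsWithin_le_nhds
    exact c1.add c2
  refine ge_of_tendsto l1 ?_
  filter_upwards [Ioo_mem_nhdsGT hab'] with a' ha' using key a' ha'

namespace Strip
variable {X : Type*} [MetricSpace X] {S : Strip X}

lemma lines_local_aux {σ τ : ℝ → X} (hσ : S.TLine σ) (hτ : S.TLine τ) {s : ℝ}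
    (iσ : S.Int (σ s)) (iτ : S.Int (τ s)) (hle : S.U (σ s) ≤ S.U (τ s)) {ε : ℝ} (hε : 0 < ε) :
    ∃ δ > 0, ∀ h, |h| < δ →
      dist (σ (s + h)) (τ (s + h)) ≤ dist (σ s) (τ s) + ε * |h| := by
  rcases hle.eq_or_lt with h0 | h0
  · have e0 : σ s = τ s := S.ext_TU (by rw [hσ.T_eq, hτ.T_eq]) h0
    obtain ⟨δ, hδ, H⟩ := master iσ hσ (by rw [hσ.T_eq]) (ε := ε ^ 2) (by positivity)
    refine ⟨δ, hδ, fun h hh => ?_⟩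
    rcases (abs_nonneg h).eq_or_lt with hz | hz
    · have : h = 0 := abs_eq_zero.1 hz.symm
      subst this; simp
    have d1 : dist (τ (s + h)) (σ s) = |h| := by
      rw [e0, hτ.geo, add_sub_cancel_left]
    have := H |h| hz hh (τ (s + h)) (σ s) d1.le (by simp)
    rw [d1, hτ.T_eq, hσ.T_eq, add_sub_cancel_left, sq_abs, sub_self, zero_sub, sub_self, sub_zero,
      abs_neg, abs_of_nonneg (sq_nonneg _)] at this
    have d2 := S.dist_same (z := σ (s + h)) (w := τ (s + h)) (by rw [hσ.T_eq, hτ.T_eq])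
    have h3 := abs_le_of_sq_le_sq (b := ε * |h|) (a := S.U (τ (s + h)) - S.U (σ (s + h)))
      (by rw [mul_pow, sq_abs]; exact this) (by positivity)
    rw [d2, abs_sub_comm]
    linarith [dist_nonneg (x := σ s) (y := τ s)]
  · set R : ℝ := 2 / ε + 1 with hR
    have R1 : 1 ≤ R := by
      have : 0 < 2 / ε := by positivity
      linarith
    have R0 : 0 < R := by linarith
    have hRε : 2 / R ≤ ε := by
      rw [div_le_iff₀ R0, hR]
      have : ε * (2 / ε + 1) = 2 + ε := by field_simp
      linarith
    obtain ⟨δ₁, hδ₁, H₁⟩ := master iσ hσ (by rw [hσ.T_eq]) (ε := 1 / R ^ 2) (by positivity)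
    obtain ⟨δ₂, hδ₂, H₂⟩ := master iτ hτ (by rw [hτ.T_eq]) (ε := 1 / R ^ 2) (by positivity)
    refine ⟨min (min δ₁ δ₂) (S.U (τ s) - S.U (σ s)) / (2 * R), by
      have : 0 < S.U (τ s) - S.U (σ s) := by linarith
      positivity, fun h hh => ?_⟩
    rw [lt_div_iff₀ (by positivity), lt_min_iff, lt_min_iff] at hh
    obtain ⟨⟨hh1, hh2⟩, hh3⟩ := hh
    rcases (abs_nonneg h).eq_or_lt with hz | hz
    · have : h = 0 := abs_eq_zero.1 hz.symm
      subst this; simp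
    have Rh : 0 < R * |h| := by positivity
    have hRh : |h| ≤ R * |h| := by nlinarith
    have uσ := S.U_mem (σ s)
    have uτ := S.U_mem (τ s)
    rw [hσ.T_eq] at uσ
    rw [hτ.T_eq] at uτ
    have m1 : S.U (σ s) + R * |h| ∈ Icc 0 (S.f s) := ⟨by linarith [uσ.1], by linarith [uτ.2]⟩
    have m2 : S.U (τ s) - R * |h| ∈ Icc 0 (S.f s) := ⟨by linarith [uσ.1], by linarith [uτ.2]⟩
    set p' := S.g s (S.U (σ s) + R * |h|) with hp'
    set q' := S.g s (S.U (τ s) - R * |h|) with hq'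
    have Tp : S.T p' = s := S.T_g _ _ m1
    have Tq : S.T q' = s := S.T_g _ _ m2
    have Up : S.U p' = S.U (σ s) + R * |h| := S.U_g _ _ m1
    have Uq : S.U q' = S.U (τ s) - R * |h| := S.U_g _ _ m2
    have d0 : dist p' q' = S.U (τ s) - S.U (σ s) - 2 * (R * |h|) := by
      rw [S.dist_same (by rw [Tp, Tq]), Up, Uq, abs_sub_comm, abs_of_nonneg (by linarith)]; ring
    have dp : dist p' (σ s) = R * |h| := by
      rw [S.dist_same (by rw [Tp, hσ.T_eq]), Up, add_sub_cancel_left, abs_of_pos Rh]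
    have dq : dist q' (τ s) = R * |h| := by
      rw [S.dist_same (by rw [Tq, hτ.T_eq]), Uq, sub_sub_cancel_left, abs_neg, abs_of_pos Rh]
    have ds : dist (σ (s + h)) (σ s) = |h| := by rw [hσ.geo, add_sub_cancel_left]
    have dt : dist (τ (s + h)) (τ s) = |h| := by rw [hτ.geo, add_sub_cancel_left]
    have k1 := H₁ (R * |h|) Rh (by linarith) (σ (s + h)) p' (by rw [ds]; exact hRh) dp.le
    have k2 := H₂ (R * |h|) Rh (by linarith) (τ (s + h)) q' (by rw [dt]; exact hRh) dq.le
    rw [hσ.T_eq, Tp, Up] at k1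
    rw [hτ.T_eq, Tq, Uq] at k2
    have hR2 : 1 / R ^ 2 * (R * |h|) ^ 2 = h ^ 2 := by
      rw [mul_pow, sq_abs]; field_simp
    rw [hR2] at k1 k2
    have sqe : (|h| * (R + 1 / R)) ^ 2 = h ^ 2 * (R ^ 2 + 2 + 1 / R ^ 2) := by
      rw [mul_pow, sq_abs]; field_simp; ring
    have hpos : 0 ≤ h ^ 2 * (1 / R ^ 2) := by positivity
    have ha : |h| ^ 2 = h ^ 2 := sq_abs h
    have b1 : dist (σ (s + h)) p' ≤ |h| * (R + 1 / R) := by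
      refine le_of_abs_le (abs_le_of_sq_le_sq ?_ (by positivity))
      rw [sqe]
      have h1 := (abs_le.1 k1).2
      have h2 : (S.U (σ (s + h)) - S.U (σ (s + h)) - (S.U (σ s) + R * |h| - S.U (σ s))) ^ 2 =
        R ^ 2 * |h| ^ 2 := by ring
      have h3 : (s + h - s) ^ 2 = h ^ 2 := by ring
      rw [h2, h3, ha] at h1
      linarith
    have b2 : dist (τ (s + h)) q' ≤ |h| * (R + 1 / R) := by
      refine le_of_abs_le (abs_le_of_sq_le_sq ?_ (by positivity))
      rw [sqe]
      have h1 := (abs_le.1 k2).2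
      have h2 : (S.U (τ (s + h)) - S.U (τ (s + h)) - (S.U (τ s) - R * |h| - S.U (τ s))) ^ 2 =
        R ^ 2 * |h| ^ 2 := by ring
      have h3 : (s + h - s) ^ 2 = h ^ 2 := by ring
      rw [h2, h3, ha] at h1
      linarith
    have d3 : dist (σ s) (τ s) = S.U (τ s) - S.U (σ s) := by
      rw [S.dist_same (by rw [hσ.T_eq, hτ.T_eq]), abs_sub_comm, abs_of_nonneg (by linarith)]
    have t1 := dist_triangle4 (σ (s + h)) p' q' (τ (s + h))
    rw [dist_comm q', d0] at t1
    rw [d3]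
    have : 2 / R * |h| ≤ ε * |h| := mul_le_mul_of_nonneg_right hRε hz.le
    have e2 : |h| * (R + 1 / R) = R * |h| + (2 / R * |h|) / 2 := by ring
    linarith

lemma lines_local {σ τ : ℝ → X} (hσ : S.TLine σ) (hτ : S.TLine τ) {s : ℝ}
    (iσ : S.Int (σ s)) (iτ : S.Int (τ s)) {ε : ℝ} (hε : 0 < ε) :
    ∃ δ > 0, ∀ h, |h| < δ →
      dist (σ (s + h)) (τ (s + h)) ≤ dist (σ s) (τ s) + ε * |h| := by
  rcases le_total (S.U (σ s)) (S.U (τ s)) with h | h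
  · exact lines_local_aux hσ hτ iσ iτ h hε
  · obtain ⟨δ, hδ, H⟩ := lines_local_aux hτ hσ iτ iσ h hε
    refine ⟨δ, hδ, fun h hh => ?_⟩
    rw [dist_comm, dist_comm (σ s)]
    exact H h hh

lemma lines_dist_const {σ τ : ℝ → X} (hσ : S.TLine σ) (hτ : S.TLine τ) {a b : ℝ} (hab : a ≤ b)
    (iσ : ∀ s ∈ Icc a b, S.Int (σ s)) (iτ : ∀ s ∈ Icc a b, S.Int (τ s)) :
    dist (σ a) (τ a) = dist (σ b) (τ b) := by
  have c : Continuous fun s => dist (σ s) (τ s) := hσ.cont.dist hτ.cont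
  apply le_antisymm
  · have := dini (G := fun s => dist (σ (-s)) (τ (-s))) (a := -b) (b := -a) (K := 0) (by linarith)
      ((c.comp continuous_neg).continuousOn) (by
        intro s hs ε hε
        have hs' : -s ∈ Icc a b := ⟨by linarith [hs.2], by linarith [hs.1]⟩
        obtain ⟨δ, hδ, H⟩ := lines_local hσ hτ (iσ _ hs') (iτ _ hs') hε
        refine ⟨δ, hδ, fun h h1 h2 => ?_⟩
        have := H (-h) (by rwa [abs_neg, abs_of_pos h1])
        rw [abs_neg, abs_of_pos h1] at this
        rwa [neg_add, zero_add])
    simpa using this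
  · have := dini (G := fun s => dist (σ s) (τ s)) (K := 0) hab c.continuousOn (by
        intro s hs ε hε
        have hs' : s ∈ Icc a b := ⟨hs.1.le, hs.2.le⟩
        obtain ⟨δ, hδ, H⟩ := lines_local hσ hτ (iσ _ hs') (iτ _ hs') hε
        refine ⟨δ, hδ, fun h h1 h2 => ?_⟩
        have := H h (by rwa [abs_of_pos h1])
        rw [abs_of_pos h1] at this
        rwa [zero_add])
    simpa using this

lemma lines_U_const {σ τ : ℝ → X} (hσ : S.TLine σ) (hτ : S.TLine τ) {a b : ℝ} (hab : a ≤ b)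
    (iσ : ∀ s ∈ Icc a b, S.Int (σ s)) (iτ : ∀ s ∈ Icc a b, S.Int (τ s)) :
    S.U (τ a) - S.U (σ a) = S.U (τ b) - S.U (σ b) := by
  set y : ℝ → ℝ := fun s => S.U (τ s) - S.U (σ s) with hy
  have yc : Continuous y := (S.U_cont.comp hτ.cont).sub (S.U_cont.comp hσ.cont)
  have hd : ∀ s, dist (σ s) (τ s) = |y s| := fun s => by
    rw [S.dist_same (by rw [hσ.T_eq, hτ.T_eq]), abs_sub_comm]
  have hcon : ∀ s ∈ Icc a b, |y a| = |y s| := by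
    intro s hs
    have := lines_dist_const hσ hτ hs.1 (fun r hr => iσ r ⟨hr.1, hr.2.trans hs.2⟩)
      (fun r hr => iτ r ⟨hr.1, hr.2.trans hs.2⟩)
    rwa [hd, hd] at this
  change y a = y b
  have hb := hcon b ⟨hab, le_rfl⟩
  rcases abs_eq_abs.1 hb with h | h
  · exact h
  have h0 : (0:ℝ) ∈ uIcc (y a) (y b) := by
    rw [h]
    rcases le_total 0 (y b) with h | h
    · exact mem_uIcc.2 (Or.inl ⟨by linarith, h⟩)
    · exact mem_uIcc.2 (Or.inr ⟨h, by linarith⟩)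
  obtain ⟨s, hs, hs0⟩ := intermediate_value_uIcc (yc.continuousOn (s := uIcc a b)) h0
  rw [uIcc_of_le hab] at hs
  have h1 := hcon s hs
  rw [hs0, abs_zero] at h1
  rw [h1] at hb
  rw [abs_eq_zero.1 h1, abs_eq_zero.1 hb.symm]

/-- Height relative to a line. -/
noncomputable def y (S : Strip X) (σ : ℝ → X) (z : X) : ℝ := S.U z - S.U (σ (S.T z))

lemma int_nhds {τ : ℝ → X} (hτ : S.TLine τ) {s : ℝ} (i : S.Int (τ s)) :
    ∀ᶠ r in 𝓝 s, S.Int (τ r) := by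
  have c1 : Continuous fun r => S.U (τ r) := S.U_cont.comp hτ.cont
  have e1 : ∀ᶠ r in 𝓝 s, 0 < S.U (τ r) := c1.continuousAt.eventually (lt_mem_nhds i.1)
  have i2 := i.2
  rw [hτ.T_eq] at i2
  have e2 : ∀ᶠ r in 𝓝 s, S.U (τ r) < S.f r :=
    c1.continuousAt.eventually_lt S.f_cont.continuousAt i2
  filter_upwards [e1, e2] with r h1 h2
  exact ⟨h1, by rwa [hτ.T_eq]⟩

/-- Master lemma relative to a line which is interior on an interval. -/
theorem master' {σ : ℝ → X} (hσ : S.TLine σ) {a b : ℝ} (iσ : ∀ s ∈ Ioo a b, S.Int (σ s))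
    {p : X} (hp : S.Int p) (hpab : S.T p ∈ Ioo a b) {ε : ℝ}
    (hε : 0 < ε) : ∃ δ > 0, ∀ h, 0 < h → h < δ → ∀ z w, dist z p ≤ h → dist w p ≤ h →
    |dist z w ^ 2 - (S.T z - S.T w) ^ 2 - (S.y σ z - S.y σ w) ^ 2| ≤ ε * h ^ 2 := by
  obtain ⟨τ, hτ, hτp⟩ := S.exists_TLine p
  have iτ := int_nhds hτ (s := S.T p) (by rwa [hτp])
  obtain ⟨δ₀, hδ₀, hb⟩ := Metric.eventually_nhds_iff.1
    (iτ.and (Ioo_mem_nhds hpab.1 hpab.2))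
  obtain ⟨δ, hδ, H⟩ := master hp hτ hτp hε
  refine ⟨min δ δ₀, lt_min hδ hδ₀, fun h h1 h2 z w hz hw => ?_⟩
  rw [lt_min_iff] at h2
  have yy : ∀ z, dist z p ≤ h → S.U (τ (S.T z)) - S.U (σ (S.T z)) =
      S.U (τ (S.T p)) - S.U (σ (S.T p)) := by
    intro z hz
    have hTz : |S.T z - S.T p| ≤ h := (S.T_lip z p).trans hz
    have hin : ∀ r, |r - S.T p| ≤ h → S.Int (τ r) ∧ r ∈ Ioo a b := fun r hr =>
      hb (by rw [Real.dist_eq]; linarith)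
    rcases le_total (S.T z) (S.T p) with hle | hle
    · rw [abs_of_nonpos (by linarith)] at hTz
      have hr : ∀ r ∈ Icc (S.T z) (S.T p), |r - S.T p| ≤ h := fun r hr => by
        rw [abs_of_nonpos (by linarith [hr.2])]; linarith [hr.1]
      exact lines_U_const hσ hτ hle (fun r hr' => iσ r (hin r (hr r hr')).2)
        (fun r hr' => (hin r (hr r hr')).1)
    · rw [abs_of_nonneg (by linarith)] at hTz
      have hr : ∀ r ∈ Icc (S.T p) (S.T z), |r - S.T p| ≤ h := fun r hr => by
        rw [abs_of_nonneg (by linarith [hr.1])]; linarith [hr.2]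
      exact (lines_U_const hσ hτ hle (fun r hr' => iσ r (hin r (hr r hr')).2)
        (fun r hr' => (hin r (hr r hr')).1)).symm
  have k := H h h1 h2.1 z w hz hw
  have e : (S.U z - S.U (τ (S.T z))) - (S.U w - S.U (τ (S.T w))) = S.y σ z - S.y σ w := by
    have := yy z hz
    have := yy w hw
    simp only [y]; linarith
  rwa [e] at k

end Strip

namespace Strip
variable {X : Type*} [MetricSpace X] {S : Strip X}

lemma y_cont {σ : ℝ → X} (hσ : S.TLine σ) : Continuous (S.y σ) :=
  S.U_cont.sub (S.U_cont.comp (hσ.cont.comp S.T_cont))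

lemma exists_pt (S : Strip X) (σ : ℝ → X) {t v : ℝ} (h0 : 0 ≤ v + S.U (σ t))
    (h1 : v + S.U (σ t) ≤ S.f t) :
    ∃ z, S.T z = t ∧ S.y σ z = v ∧ S.U z = v + S.U (σ t) := by
  have hT := S.T_g t _ ⟨h0, h1⟩
  have hU := S.U_g t _ ⟨h0, h1⟩
  refine ⟨_, hT, ?_, hU⟩
  rw [y, hT, hU]; ring

lemma y_dist_le {σ : ℝ → X} (hσ : S.TLine σ) (z w : X) :
    dist z w ≤ 5 * |S.T z - S.T w| + |S.y σ z - S.y σ w| := by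
  have h1 := S.dist_le z w
  have h2 := hσ.U_lip (S.T z) (S.T w)
  have h3 : S.U z - S.U w = (S.y σ z - S.y σ w) + (S.U (σ (S.T z)) - S.U (σ (S.T w))) := by
    simp only [y]; ring
  have h4 := abs_add_le (S.y σ z - S.y σ w) (S.U (σ (S.T z)) - S.U (σ (S.T w)))
  rw [← h3] at h4
  linarith

theorem up {σ : ℝ → X} (hσ : S.TLine σ) {a b : ℝ} (iσ : ∀ s ∈ Ioo a b, S.Int (σ s))
    {z w : X} (hz : S.T z ∈ Ioo a b) (hw : S.T w ∈ Ioo a b)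
    (hseg : ∀ r ∈ Ioo (0:ℝ) 1,
      0 < ((1 - r) * S.y σ z + r * S.y σ w) + S.U (σ ((1 - r) * S.T z + r * S.T w)) ∧
      ((1 - r) * S.y σ z + r * S.y σ w) + S.U (σ ((1 - r) * S.T z + r * S.T w)) <
        S.f ((1 - r) * S.T z + r * S.T w)) :
    dist z w ≤ √((S.T z - S.T w) ^ 2 + (S.y σ z - S.y σ w) ^ 2) := by
  have ex : ∀ r, ∃ q : X, r ∈ Icc (0:ℝ) 1 → S.T q = (1 - r) * S.T z + r * S.T w ∧
      S.y σ q = (1 - r) * S.y σ z + r * S.y σ w ∧ (r = 0 → q = z) ∧ (r = 1 → q = w) ∧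
      (r ∈ Ioo (0:ℝ) 1 → S.Int q) := by
    intro r
    by_cases h0 : r = 0
    · subst h0
      refine ⟨z, fun _ => ⟨by simp, by simp, by simp, by simp, ?_⟩⟩
      intro h; exact absurd h.1 (lt_irrefl _)
    by_cases h1 : r = 1
    · subst h1
      refine ⟨w, fun _ => ⟨by simp, by simp, by simp, by simp, ?_⟩⟩
      intro h; exact absurd h.2 (lt_irrefl _)
    by_cases hr : r ∈ Icc (0:ℝ) 1
    · have hr' : r ∈ Ioo (0:ℝ) 1 := ⟨lt_of_le_of_ne hr.1 (Ne.symm h0), lt_of_le_of_ne hr.2 h1⟩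
      obtain ⟨k1, k2⟩ := hseg r hr'
      obtain ⟨q, q1, q2, q3⟩ := S.exists_pt σ k1.le k2.le
      refine ⟨q, fun _ => ⟨q1, q2, fun h => absurd h h0, fun h => absurd h h1, fun _ => ?_⟩⟩
      rw [Int, q3, q1]
      exact ⟨k1, k2⟩
    · exact ⟨z, fun h => absurd h hr⟩
  choose q hq using ex
  set L := √((S.T z - S.T w) ^ 2 + (S.y σ z - S.y σ w) ^ 2) with hL
  have L0 : 0 ≤ L := Real.sqrt_nonneg _
  have L2 : L ^ 2 = (S.T z - S.T w) ^ 2 + (S.y σ z - S.y σ w) ^ 2 := Real.sq_sqrt (by positivity)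
  set C := 5 * |S.T z - S.T w| + |S.y σ z - S.y σ w| + 1 with hC
  have C0 : 0 < C := by positivity
  have dT : ∀ r ∈ Icc (0:ℝ) 1, ∀ r' ∈ Icc (0:ℝ) 1,
      S.T (q r) - S.T (q r') = (r' - r) * (S.T z - S.T w) := by
    intro r hr r' hr'
    rw [(hq r hr).1, (hq r' hr').1]; ring
  have dy : ∀ r ∈ Icc (0:ℝ) 1, ∀ r' ∈ Icc (0:ℝ) 1,
      S.y σ (q r) - S.y σ (q r') = (r' - r) * (S.y σ z - S.y σ w) := by
    intro r hr r' hr'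
    rw [(hq r hr).2.1, (hq r' hr').2.1]; ring
  have lip : ∀ r ∈ Icc (0:ℝ) 1, ∀ r' ∈ Icc (0:ℝ) 1, dist (q r) (q r') ≤ C * |r - r'| := by
    intro r hr r' hr'
    have := y_dist_le hσ (q r) (q r')
    rw [dT r hr r' hr', dy r hr r' hr', abs_mul, abs_mul, abs_sub_comm r' r] at this
    rw [hC]
    linarith [abs_nonneg (r - r')]
  have qc : ContinuousOn q (Icc 0 1) := by
    have : LipschitzOnWith ⟨C, C0.le⟩ q (Icc 0 1) :=
      LipschitzOnWith.of_dist_le_mul (fun s hs t ht => by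
        rw [Real.dist_eq]; exact lip s hs t ht)
    exact this.continuousOn
  have := dini (G := fun r => dist z (q r)) (K := L) zero_le_one
    ((continuous_const.dist continuous_id).comp_continuousOn qc) (by
      intro r hr ε hε
      have hrI : r ∈ Icc (0:ℝ) 1 := ⟨hr.1.le, hr.2.le⟩
      obtain ⟨q1, q2, -, -, q5⟩ := hq r hrI
      have hT : S.T (q r) ∈ Ioo a b := by
        rw [q1]
        have := hr.1
        have := hr.2
        constructor
        · nlinarith [hz.1, hw.1]
        · nlinarith [hz.2, hw.2]
      obtain ⟨δ, hδ, H⟩ := master' hσ iσ (q5 hr) hT (ε := (ε / C) ^ 2) (by positivity)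
      refine ⟨min (δ / C) (1 - r), lt_min (by positivity) (by linarith [hr.2]), ?_⟩
      intro h h0 h1
      rw [lt_min_iff, lt_div_iff₀ C0] at h1
      have hrh : r + h ∈ Icc (0:ℝ) 1 := ⟨by linarith [hr.1], by linarith⟩
      have l1 := lip (r + h) hrh r hrI
      rw [add_sub_cancel_left, abs_of_pos h0] at l1
      have := H (C * h) (by positivity) (by linarith) (q (r + h)) (q r) l1
        (by rw [dist_self]; positivity)
      rw [dT _ hrh _ hrI, dy _ hrh _ hrI] at this
      have k := (abs_le.1 this).2
      have e1 : (ε / C) ^ 2 * (C * h) ^ 2 = ε ^ 2 * h ^ 2 := by field_simp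
      rw [e1] at k
      have k2 : dist (q (r + h)) (q r) ≤ (L + ε) * h := by
        refine le_of_abs_le (abs_le_of_sq_le_sq ?_ (by positivity))
        have : ((L + ε) * h) ^ 2 = L ^ 2 * h ^ 2 + ε ^ 2 * h ^ 2 + 2 * L * ε * h ^ 2 := by ring
        rw [this, L2]
        have : 0 ≤ 2 * L * ε * h ^ 2 := by positivity
        have e2 : (r - (r + h)) ^ 2 = h ^ 2 := by ring
        rw [mul_pow, mul_pow, e2] at k
        linarith
      have := dist_triangle z (q r) (q (r + h))
      rw [dist_comm (q r)] at this
      linarith)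
  rw [(hq 0 ⟨le_rfl, zero_le_one⟩).2.2.1 rfl, (hq 1 ⟨zero_le_one, le_rfl⟩).2.2.2.1 rfl,
    dist_self] at this
  linarith

theorem low {σ : ℝ → X} (hσ : S.TLine σ) {a b : ℝ} (iσ : ∀ s ∈ Ioo a b, S.Int (σ s))
    {z w : X} (hz : S.T z ∈ Ioo a b) (hw : S.T w ∈ Ioo a b) (hyy : S.y σ z ≤ S.y σ w)
    (hInterior : ∀ x, S.T x ∈ uIcc (S.T z) (S.T w) → S.y σ z < S.y σ x → S.y σ x < S.y σ w → S.Int x) :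
    (S.T z - S.T w) ^ 2 + (S.y σ z - S.y σ w) ^ 2 ≤ dist z w ^ 2 := by
  have hTd := pow_le_pow_left₀ (abs_nonneg _) (S.T_lip z w) 2
  rw [sq_abs] at hTd
  rcases hyy.eq_or_lt with h0 | hlt
  · rw [h0, sub_self]; linarith
  obtain ⟨G, hG, hGT⟩ := S.geod z w
  have d0 : 0 < dist z w := dist_pos.2 fun h => by rw [h] at hlt; exact lt_irrefl _ hlt
  set d := dist z w with hd
  set l := S.T z - S.T w with hl
  set v : ℝ → ℝ := fun s => S.y σ (G s) with hv
  have vc : ContinuousOn v (Icc 0 1) := (y_cont hσ).comp_continuousOn hG.continuousOn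
  have v0 : v 0 = S.y σ z := by simp only [hv, hG.1]
  have v1 : v 1 = S.y σ w := by simp only [hv, hG.2.1]
  obtain ⟨r1, ⟨hr1, hr1v⟩, hr1g⟩ : ∃ r1, IsGreatest (Icc (0:ℝ) 1 ∩ {s | v s ≤ S.y σ z}) r1 := by
    refine IsCompact.exists_isGreatest ?_ ⟨0, ⟨le_rfl, zero_le_one⟩, v0.le⟩
    exact isCompact_Icc.of_isClosed_subset
      (vc.preimage_isClosed_of_isClosed isClosed_Icc isClosed_Iic) inter_subset_left
  have vc' : ContinuousOn v (Icc r1 1) := vc.mono (Icc_subset_Icc_left hr1.1)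
  obtain ⟨r2, ⟨hr2, hr2v⟩, hr2g⟩ : ∃ r2, IsLeast (Icc r1 1 ∩ {s | S.y σ w ≤ v s}) r2 := by
    refine IsCompact.exists_isLeast ?_ ⟨1, ⟨hr1.2, le_rfl⟩, v1.ge⟩
    exact isCompact_Icc.of_isClosed_subset
      (vc'.preimage_isClosed_of_isClosed isClosed_Icc isClosed_Ici) inter_subset_left
  have K0 : 0 ≤ d ^ 2 - l ^ 2 := by linarith
  set K := √(d ^ 2 - l ^ 2) with hK
  have Kn : 0 ≤ K := Real.sqrt_nonneg _
  have K2 : K ^ 2 = d ^ 2 - l ^ 2 := Real.sq_sqrt K0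
  have main := dini (G := v) (a := r1) (b := r2) (K := K) hr2.1
    (vc'.mono (Icc_subset_Icc_right hr2.2)) (by
      intro s hs ε hε
      have hs01 : s ∈ Icc (0:ℝ) 1 := ⟨by linarith [hr1.1, hs.1], by linarith [hr2.2, hs.2]⟩
      have hsz : S.y σ z < v s := by
        by_contra hc
        exact absurd (hr1g ⟨hs01, not_lt.1 hc⟩) (not_le.2 hs.1)
      have hsw : v s < S.y σ w := by
        by_contra hc
        exact absurd (hr2g ⟨⟨hs.1.le, hs01.2⟩, not_lt.1 hc⟩) (not_le.2 hs.2)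
      have hT := hGT s hs01
      have hTm : S.T (G s) ∈ uIcc (S.T z) (S.T w) := by
        rw [hT]
        rcases le_total (S.T z) (S.T w) with h | h
        · exact mem_uIcc.2 (Or.inl ⟨by nlinarith [hs01.1, hs01.2], by nlinarith [hs01.1, hs01.2]⟩)
        · exact mem_uIcc.2 (Or.inr ⟨by nlinarith [hs01.1, hs01.2], by nlinarith [hs01.1, hs01.2]⟩)
      have hTab : S.T (G s) ∈ Ioo a b := by
        rcases mem_uIcc.1 hTm with h | h
        · exact ⟨hz.1.trans_le h.1, h.2.trans_lt hw.2⟩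
        · exact ⟨hw.1.trans_le h.1, h.2.trans_lt hz.2⟩
      obtain ⟨δ, hδ, H⟩ := master' hσ iσ (hInterior (G s) hTm hsz hsw) hTab (ε := (ε / d) ^ 2)
        (by positivity)
      refine ⟨min (δ / d) (1 - s), lt_min (by positivity) (by linarith [hs.2, hr2.2]), ?_⟩
      intro h h0 h1
      rw [lt_min_iff, lt_div_iff₀ d0] at h1
      have hsh : s + h ∈ Icc (0:ℝ) 1 := ⟨by linarith [hs01.1], by linarith⟩
      have dd : dist (G (s + h)) (G s) = d * h := by
        rw [hG.2.2 _ hsh _ hs01, add_sub_cancel_left, abs_of_pos h0]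
      have k := H (d * h) (by positivity) (by linarith) (G (s + h)) (G s) dd.le
        (by rw [dist_self]; positivity)
      rw [dd, hGT _ hsh, hT] at k
      have e1 : (ε / d) ^ 2 * (d * h) ^ 2 = ε ^ 2 * h ^ 2 := by field_simp
      have e2 : ((1 - (s + h)) * S.T z + (s + h) * S.T w - ((1 - s) * S.T z + s * S.T w)) ^ 2 =
        h ^ 2 * l ^ 2 := by rw [hl]; ring
      rw [e1, e2] at k
      have k1 := (abs_le.1 k).1
      have k2 : v (s + h) - v s ≤ (K + ε) * h := by
        refine le_of_abs_le (abs_le_of_sq_le_sq ?_ (by positivity))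
        have : ((K + ε) * h) ^ 2 = K ^ 2 * h ^ 2 + ε ^ 2 * h ^ 2 + 2 * K * ε * h ^ 2 := by ring
        rw [this, K2]
        have : 0 ≤ 2 * K * ε * h ^ 2 := by positivity
        change (S.y σ (G (s + h)) - S.y σ (G s)) ^ 2 ≤ _
        linarith
      linarith)
  have hr1v' : v r1 ≤ S.y σ z := hr1v
  have hr2v' : S.y σ w ≤ v r2 := hr2v
  have hKr : K * (r2 - r1) ≤ K := by nlinarith [hr1.1, hr2.2]
  have : S.y σ w - S.y σ z ≤ K := by linarith
  have h3 := pow_le_pow_left₀ (by linarith) this 2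
  rw [K2] at h3
  have e : (S.y σ z - S.y σ w) ^ 2 = (S.y σ w - S.y σ z) ^ 2 := by ring
  rw [e]; linarith

end Strip

namespace Strip
variable {X : Type*} [MetricSpace X] {S : Strip X}

set_option maxHeartbeats 1000000 in
/-- The geometric core: Ptolemy inequality excludes a drifting boundary. -/
lemma drift_core {σ : ℝ → X} (hσ : S.TLine σ) {a b : ℝ} (iσ : ∀ s ∈ Ioo a b, S.Int (σ s))
    {α s s' m : ℝ} (hα : a < α) (hs' : s' < b) (hss : s < s') (hΔ : α ≤ s - 4 * (s' - s))
    (hm : 0 < m) (hm2 : m ≤ 2) (hφ : S.U (σ s) - S.U (σ s') = m * (s' - s))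
    (h1 : ∀ t, α ≤ t → t < s → S.U (σ s) < S.U (σ t))
    (h2 : ∀ t, α ≤ t → t < s' → S.U (σ s') < S.U (σ t))
    (h3 : 4 * (s' - s) / m < S.U (σ s')) : False := by
  set Δ := s' - s with hΔd
  have Δ0 : 0 < Δ := by linarith
  have hsJ : ∀ t, α ≤ t → t ≤ s' → t ∈ Ioo a b := fun t h h' =>
    ⟨by linarith, by linarith⟩
  set κ := 4 * Δ / m with hκ
  have κ0 : 0 < κ := by positivity
  have κm : κ * m = 4 * Δ := by rw [hκ]; field_simp
  have κ2 : 2 * Δ ≤ κ := by rw [hκ, le_div_iff₀ hm]; nlinarith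
  have hmΔ : 0 < m * Δ := by positivity
  have hmΔ2 : m * Δ ≤ 2 * Δ := by nlinarith
  have Uσf : ∀ t, α ≤ t → t ≤ s' → S.U (σ t) < S.f t := fun t h h' => by
    have := (iσ t (hsJ t h h')).2
    rwa [hσ.T_eq] at this
  have h1' : ∀ t, α ≤ t → t ≤ s → S.U (σ s) ≤ S.U (σ t) := fun t h h' => by
    rcases h'.eq_or_lt with e | e
    · rw [e]
    · exact (h1 t h e).le
  have h2' : ∀ t, α ≤ t → t ≤ s' → S.U (σ s') ≤ S.U (σ t) := fun t h h' => by
    rcases h'.eq_or_lt with e | e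
    · rw [e]
    · exact (h2 t h e).le
  -- the four points
  obtain ⟨A, A1, A2, A3⟩ := S.exists_pt σ (t := s) (v := -S.U (σ s)) (by simp)
    (by simpa using (S.f_pos s).le)
  obtain ⟨A', B1, B2, B3⟩ := S.exists_pt σ (t := s') (v := -S.U (σ s')) (by simp)
    (by simpa using (S.f_pos s').le)
  obtain ⟨w, w1, w2, w3⟩ := S.exists_pt σ (t := s - 4 * Δ) (v := -S.U (σ s) + κ)
    (by linarith [h1' (s - 4 * Δ) hΔ (by linarith)])
    (by linarith [Uσf (s - 4 * Δ) hΔ (by linarith)])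
  obtain ⟨z, z1, z2, z3⟩ := S.exists_pt σ (t := s - 3 * Δ) (v := -S.U (σ s') + κ)
    (by linarith [h2' (s - 3 * Δ) (by linarith) (by linarith)])
    (by linarith [Uσf (s - 3 * Δ) (by linarith) (by linarith)])
  have JA : S.T A ∈ Ioo a b := by rw [A1]; exact hsJ _ (by linarith) (by linarith)
  have JA' : S.T A' ∈ Ioo a b := by rw [B1]; exact hsJ _ (by linarith) (by linarith)
  have Jw : S.T w ∈ Ioo a b := by rw [w1]; exact hsJ _ (by linarith) (by linarith)
  have Jz : S.T z ∈ Ioo a b := by rw [z1]; exact hsJ _ (by linarith) (by linarith)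
  -- lower bounds
  have L1 := low hσ iσ JA Jz (by rw [A2, z2]; linarith) (by
    intro x hx hy1 hy2
    rw [A1, z1, uIcc_of_ge (by linarith)] at hx
    rw [A2] at hy1
    rw [z2] at hy2
    have := h1' (S.T x) (by linarith [hx.1]) hx.2
    have := Uσf (S.T x) (by linarith [hx.1]) (by linarith [hx.2])
    simp only [y] at hy1 hy2
    exact ⟨by linarith, by linarith⟩)
  have L2 := low hσ iσ JA' Jw (by rw [B2, w2]; linarith) (by
    intro x hx hy1 hy2
    rw [B1, w1, uIcc_of_ge (by linarith)] at hx
    rw [B2] at hy1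
    rw [w2] at hy2
    have := h2' (S.T x) (by linarith [hx.1]) hx.2
    have := Uσf (S.T x) (by linarith [hx.1]) hx.2
    simp only [y] at hy1 hy2
    exact ⟨by linarith, by linarith⟩)
  -- upper bounds
  have U1 := up hσ iσ Jz Jw (by
    intro r hr
    have hr1 := hr.1
    have hr2 := hr.2
    rw [z1, z2, w1, w2]
    have eT : (1 - r) * (s - 3 * Δ) + r * (s - 4 * Δ) = s - 3 * Δ - r * Δ := by ring
    have ey : (1 - r) * (-S.U (σ s') + κ) + r * (-S.U (σ s) + κ) =
      -S.U (σ s') + κ - r * (m * Δ) := by rw [← hφ]; ring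
    have b1 : r * Δ < Δ := mul_lt_of_lt_one_left Δ0 hr2
    have b2 : 0 < r * Δ := by positivity
    have b3 : r * (m * Δ) < m * Δ := mul_lt_of_lt_one_left hmΔ hr2
    have b4 : 0 < r * (m * Δ) := by positivity
    rw [eT, ey]
    have := h1' (s - 3 * Δ - r * Δ) (by linarith) (by linarith)
    have := Uσf (s - 3 * Δ - r * Δ) (by linarith) (by linarith)
    constructor <;> linarith)
  have U2 := up hσ iσ JA Jw (by
    intro r hr
    have hr1 := hr.1
    have hr2 := hr.2
    rw [A1, A2, w1, w2]
    have eT : (1 - r) * s + r * (s - 4 * Δ) = s - 4 * (r * Δ) := by ring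
    have ey : (1 - r) * (-S.U (σ s)) + r * (-S.U (σ s) + κ) = -S.U (σ s) + r * κ := by ring
    have b1 : r * Δ < Δ := mul_lt_of_lt_one_left Δ0 hr2
    have b2 : 0 < r * Δ := by positivity
    have b3 : r * κ < κ := mul_lt_of_lt_one_left κ0 hr2
    have b4 : 0 < r * κ := by positivity
    rw [eT, ey]
    have := h1' (s - 4 * (r * Δ)) (by linarith) (by linarith)
    have := Uσf (s - 4 * (r * Δ)) (by linarith) (by linarith)
    constructor <;> linarith)
  have U3 := up hσ iσ JA' Jz (by
    intro r hr
    have hr1 := hr.1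
    have hr2 := hr.2
    rw [B1, B2, z1, z2]
    have eT : (1 - r) * s' + r * (s - 3 * Δ) = s' - 4 * (r * Δ) := by
      rw [show s - 3 * Δ = s' - 4 * Δ by rw [hΔd]; ring]; ring
    have ey : (1 - r) * (-S.U (σ s')) + r * (-S.U (σ s') + κ) = -S.U (σ s') + r * κ := by ring
    have b1 : r * Δ < Δ := mul_lt_of_lt_one_left Δ0 hr2
    have b2 : 0 < r * Δ := by positivity
    have b3 : r * κ < κ := mul_lt_of_lt_one_left κ0 hr2
    have b4 : 0 < r * κ := by positivity
    rw [eT, ey]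
    have := h2' (s' - 4 * (r * Δ)) (by linarith) (by linarith)
    have := Uσf (s' - 4 * (r * Δ)) (by linarith) (by linarith)
    constructor <;> linarith)
  have dAA : dist A A' = Δ := by
    have hA : A = S.g s 0 := by
      rw [← S.g_TU A, A1, A3]; simp
    have hA' : A' = S.g s' 0 := by
      rw [← S.g_TU A', B1, B3]; simp
    have := S.line0 s s'
    rw [hA, hA', this, abs_sub_comm, abs_of_pos Δ0]
  -- values
  rw [A1, A2, z1, z2, show s - (s - 3 * Δ) = 3 * Δ by ring,
    show -S.U (σ s) - (-S.U (σ s') + κ) = -(m * Δ + κ) by rw [← hφ]; ring] at L1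
  rw [B1, B2, w1, w2, show s' - (s - 4 * Δ) = 5 * Δ by rw [hΔd]; ring,
    show -S.U (σ s') - (-S.U (σ s) + κ) = m * Δ - κ by rw [← hφ]; ring] at L2
  rw [z1, z2, w1, w2, show s - 3 * Δ - (s - 4 * Δ) = Δ by ring,
    show -S.U (σ s') + κ - (-S.U (σ s) + κ) = m * Δ by rw [← hφ]; ring] at U1
  rw [A1, A2, w1, w2, show s - (s - 4 * Δ) = 4 * Δ by ring,
    show -S.U (σ s) - (-S.U (σ s) + κ) = -κ by ring] at U2
  rw [B1, B2, z1, z2, show s' - (s - 3 * Δ) = 4 * Δ by rw [hΔd]; ring,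
    show -S.U (σ s') - (-S.U (σ s') + κ) = -κ by ring] at U3
  set Q := (m * Δ) ^ 2 + Δ ^ 2 + 16 * Δ ^ 2 + κ ^ 2 with hQ
  have eκ : m * Δ * κ = 4 * Δ ^ 2 := by linear_combination Δ * κm
  have L1' : Q ≤ dist A z ^ 2 := by
    refine le_trans (le_of_eq ?_) L1
    rw [hQ]; linear_combination -2 * eκ
  have L2' : Q ≤ dist A' w ^ 2 := by
    refine le_trans (le_of_eq ?_) L2
    rw [hQ]; linear_combination 2 * eκ
  have Q0 : 0 ≤ Q := by positivity
  have LL : Q ≤ dist A z * dist A' w := by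
    have h4 : Q ^ 2 ≤ (dist A z * dist A' w) ^ 2 := by
      rw [mul_pow, sq Q]
      exact mul_le_mul L1' L2' Q0 (sq_nonneg _)
    exact le_of_abs_le (by
      have := abs_le_of_sq_le_sq h4 (by positivity)
      exact this)
  have UU : dist A w * dist A' z ≤ 16 * Δ ^ 2 + κ ^ 2 := by
    have := mul_le_mul U2 U3 dist_nonneg (Real.sqrt_nonneg _)
    rw [Real.mul_self_sqrt (by positivity)] at this
    linarith
  have P := S.hPT A z A' w
  rw [dAA] at P
  have k1 : (m * Δ) ^ 2 + Δ ^ 2 ≤ Δ * dist z w := by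
    rw [dist_comm z A'] at P
    linarith
  have k2 : dist z w ^ 2 ≤ Δ ^ 2 + (m * Δ) ^ 2 := by
    have := pow_le_pow_left₀ dist_nonneg U1 2
    rwa [Real.sq_sqrt (by positivity)] at this
  set D := dist z w
  have D0 : 0 ≤ D := dist_nonneg
  have k3 : Δ < D := by
    have : Δ * Δ < Δ * D := by nlinarith [pow_pos hmΔ 2]
    exact lt_of_mul_lt_mul_left this Δ0.le
  nlinarith

lemma no_drop {σ : ℝ → X} (hσ : S.TLine σ) {a b : ℝ} (iσ : ∀ s ∈ Ioo a b, S.Int (σ s))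
    {α β : ℝ} (hα : α ∈ Ioo a b) (hβ : β ∈ Ioo a b) (hαβ : α ≤ β) :
    S.U (σ α) ≤ S.U (σ β) := by
  by_contra hcon
  push Not at hcon
  have hlt : α < β := lt_of_le_of_ne hαβ fun h => by rw [h] at hcon; exact lt_irrefl _ hcon
  set ψ : ℝ → ℝ := fun t => S.U (σ t) with hψ
  have ψc : Continuous ψ := S.U_cont.comp hσ.cont
  have ψl : ∀ t t', |ψ t - ψ t'| ≤ 2 * |t - t'| := fun t t' => hσ.U_lip t t'
  change ψ β < ψ α at hcon
  set m0 := (ψ α - ψ β) / (2 * (β - α)) with hm0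
  have hβα : 0 < β - α := by linarith
  have m0p : 0 < m0 := div_pos (by linarith) (by linarith)
  have m0e : m0 * (2 * (β - α)) = ψ α - ψ β := by rw [hm0]; field_simp
  have m01 : m0 ≤ 1 := by
    rw [hm0, div_le_one (by linarith)]
    have := le_of_abs_le (ψl α β)
    rw [abs_sub_comm, abs_of_pos hβα] at this
    exact this
  obtain ⟨s', hs', hmin⟩ := isCompact_Icc.exists_isMinOn (nonempty_Icc.2 hαβ)
    (f := fun t => ψ t + m0 * t) (by fun_prop)
  have hmin' : ∀ t ∈ Icc α β, ψ s' + m0 * s' ≤ ψ t + m0 * t := fun t ht => hmin ht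
  have hs'α : α < s' := by
    refine lt_of_le_of_ne hs'.1 fun h => ?_
    have := hmin' β ⟨hαβ, le_rfl⟩
    rw [← h] at this
    nlinarith
  have hJ : s' ∈ Ioo a b := ⟨hα.1.trans hs'α, hs'.2.trans_lt hβ.2⟩
  have up0 : 0 < ψ s' := (iσ s' hJ).1
  set η := min ((s' - α) / 5) (m0 * ψ s' / 4) with hη
  have η0 : 0 < η := lt_min (by linarith) (by positivity)
  have η1 : η ≤ (s' - α) / 5 := min_le_left _ _
  have η2 : η ≤ m0 * ψ s' / 4 := min_le_right _ _
  obtain ⟨s, ⟨hs, hsv⟩, hsl⟩ : ∃ s, IsLeast (Icc α s' ∩ {t | ψ t ≤ ψ s' + m0 * η / 4}) s := by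
    refine IsCompact.exists_isLeast ?_ ⟨s', ⟨hs'α.le, le_rfl⟩, ?_⟩
    · exact isCompact_Icc.inter_right (isClosed_le ψc continuous_const)
    · change ψ s' ≤ ψ s' + m0 * η / 4
      have : 0 < m0 * η := by positivity
      linarith
  have hsv' : ψ s ≤ ψ s' + m0 * η / 4 := hsv
  have hss : s < s' := by
    have hρ : s' - m0 * η / 8 ∈ Icc α s' := by
      have : 0 < m0 * η := by positivity
      have : m0 * η ≤ η := by nlinarith
      constructor <;> linarith
    have := hsl ⟨hρ, by
      have := le_of_abs_le (ψl (s' - m0 * η / 8) s')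
      rw [sub_sub_cancel_left, abs_neg, abs_of_pos (by positivity)] at this
      change ψ _ ≤ _
      linarith⟩
    have : 0 < m0 * η := by positivity
    linarith
  have hk := hmin' s ⟨hs.1, hs.2.trans hs'.2⟩
  have hΔη : s' - s < η := by
    have : m0 * (s' - s) < m0 * η := by nlinarith [mul_pos m0p η0]
    exact lt_of_mul_lt_mul_left this m0p.le
  have hΔ0 : 0 < s' - s := by linarith
  have hm : m0 ≤ (ψ s - ψ s') / (s' - s) := by
    rw [le_div_iff₀ hΔ0]; linarith
  refine drift_core hσ iσ (α := α) (s := s) (s' := s') (m := (ψ s - ψ s') / (s' - s)) hα.1 hJ.2 hss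
    (by linarith) (by linarith) ?_ ?_ ?_ ?_ ?_
  · rw [div_le_iff₀ hΔ0]
    have := le_of_abs_le (ψl s s')
    rwa [abs_sub_comm, abs_of_pos hΔ0] at this
  · rw [div_mul_cancel₀ _ hΔ0.ne']
  · intro t h1 h2
    change ψ s < ψ t
    by_contra hc
    have := hsl ⟨⟨h1, h2.le.trans hs.2⟩, (not_lt.1 hc).trans hsv'⟩
    linarith
  · intro t h1 h2
    have := hmin' t ⟨h1, h2.le.trans hs'.2⟩
    change ψ s' < ψ t
    nlinarith
  · change _ < ψ s'
    have mp : 0 < (ψ s - ψ s') / (s' - s) := by linarith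
    rw [div_lt_iff₀ mp]
    have : ψ s' * m0 ≤ ψ s' * ((ψ s - ψ s') / (s' - s)) := mul_le_mul_of_nonneg_left hm up0.le
    linarith

/-- Time reversal. -/
def rev (S : Strip X) : Strip X where
  hPT := S.hPT
  T := fun z => - S.T z
  g := fun t u => S.g (-t) u
  f := fun t => S.f (-t)
  f_pos := fun t => S.f_pos _
  T_lip := fun z w => by
    rw [neg_sub_neg, abs_sub_comm]; exact S.T_lip z w
  g_dist := fun t => S.g_dist (-t)
  T_g := fun t u hu => by rw [S.T_g _ u hu, neg_neg]
  surj := fun z => by simpa using S.surj z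
  line := fun z => by
    obtain ⟨l, h1, h2, h3⟩ := S.line z
    refine ⟨fun s => l (-s), fun s t => ?_, fun s => ?_, ?_⟩
    · rw [h1, neg_sub_neg, abs_sub_comm]
    · rw [h2, neg_neg]
    · change l (- - S.T z) = z
      rw [neg_neg, h3]
  geod := fun z w => by
    obtain ⟨c, h1, h2⟩ := S.geod z w
    refine ⟨c, h1, fun s hs => ?_⟩
    rw [h2 s hs]; ring
  line0 := fun s t => by
    have := S.line0 (-s) (-t)
    rw [this, neg_sub_neg, abs_sub_comm]
  line1 := fun s t => by
    have := S.line1 (-s) (-t)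
    rw [this, neg_sub_neg, abs_sub_comm]

/-- Exchanging the two boundary lines. -/
def flip (S : Strip X) : Strip X where
  hPT := S.hPT
  T := S.T
  g := fun t u => S.g t (S.f t - u)
  f := S.f
  f_pos := S.f_pos
  T_lip := S.T_lip
  g_dist := fun t u hu u' hu' => by
    rw [S.g_dist t _ ⟨by linarith [hu.2], by linarith [hu.1]⟩ _
      ⟨by linarith [hu'.2], by linarith [hu'.1]⟩, sub_sub_sub_cancel_left, abs_sub_comm]
  T_g := fun t u hu => S.T_g t _ ⟨by linarith [hu.2], by linarith [hu.1]⟩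
  surj := fun z => by
    obtain ⟨u, hu, h⟩ := S.surj z
    exact ⟨S.f (S.T z) - u, ⟨by linarith [hu.2], by linarith [hu.1]⟩, by rwa [sub_sub_cancel]⟩
  line := S.line
  geod := S.geod
  line0 := by simpa using S.line1
  line1 := by simpa using S.line0

lemma rev_U (S : Strip X) (z : X) : S.rev.U z = S.U z := by
  simp [U, rev]

lemma flip_U (S : Strip X) (z : X) : S.flip.U z = S.f (S.T z) - S.U z := by
  have h : S.flip.U z = dist z (S.g (S.T z) (S.f (S.T z))) := by simp [U, flip]
  have h2 := S.dist_same (z := z) (w := S.g (S.T z) (S.f (S.T z)))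
    (by rw [S.T_g _ _ (S.f_mem _)])
  rw [S.U_g _ _ (S.f_mem _), abs_sub_comm, abs_of_nonneg (by linarith [(S.U_mem z).2])] at h2
  rw [h, h2]

lemma U_const {σ : ℝ → X} (hσ : S.TLine σ) {a b : ℝ} (iσ : ∀ s ∈ Ioo a b, S.Int (σ s))
    {α β : ℝ} (hα : α ∈ Ioo a b) (hβ : β ∈ Ioo a b) (hαβ : α ≤ β) :
    S.U (σ α) = S.U (σ β) := by
  refine le_antisymm (no_drop hσ iσ hα hβ hαβ) ?_
  have hσ' : S.rev.TLine (fun s => σ (-s)) := by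
    refine ⟨fun s t => ?_, fun s => ?_⟩
    · rw [hσ.geo, neg_sub_neg, abs_sub_comm]
    · change - S.T _ = s
      rw [hσ.T_eq, neg_neg]
  have := no_drop hσ' (a := -b) (b := -a) (by
    intro s hs
    have hi := iσ (-s) ⟨by linarith [hs.2], by linarith [hs.1]⟩
    refine ⟨by rw [rev_U]; exact hi.1, ?_⟩
    rw [rev_U]
    have h2 := hi.2
    change S.U (σ (-s)) < S.f (- - S.T (σ (-s)))
    rwa [neg_neg]) (α := -β) (β := -α) ⟨by linarith [hβ.2], by linarith [hβ.1]⟩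
    ⟨by linarith [hα.2], by linarith [hα.1]⟩ (by linarith)
  simpa [rev_U] using this

lemma f_const {σ : ℝ → X} (hσ : S.TLine σ) {a b : ℝ} (iσ : ∀ s ∈ Ioo a b, S.Int (σ s))
    {α β : ℝ} (hα : α ∈ Ioo a b) (hβ : β ∈ Ioo a b) (hαβ : α ≤ β) :
    S.f α = S.f β := by
  have h1 := U_const hσ iσ hα hβ hαβ
  have hσ' : S.flip.TLine σ := ⟨hσ.geo, hσ.T_eq⟩
  have h2 := U_const hσ' (a := a) (b := b) (by
    intro s hs
    have hi := iσ s hs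
    refine ⟨by rw [flip_U]; linarith [hi.2], ?_⟩
    rw [flip_U]
    change _ < S.f (S.T (σ s))
    linarith [hi.1]) hα hβ hαβ
  rw [flip_U, flip_U, hσ.T_eq, hσ.T_eq] at h2
  linarith

end Strip

namespace Strip
variable {X : Type*} [MetricSpace X]

lemma exists_const (S : Strip X) : ∃ A u0 : ℝ, ∃ σ : ℝ → X, 0 < u0 ∧ u0 < A ∧ S.TLine σ ∧
    (∀ s, S.U (σ s) = u0) ∧ ∀ s, S.f s = A := by
  have f0 := S.f_pos 0
  have hm : S.f 0 / 2 ∈ Icc 0 (S.f 0) := ⟨by linarith, by linarith⟩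
  obtain ⟨σ, hσ, hσp⟩ := S.exists_TLine (S.g 0 (S.f 0 / 2))
  rw [S.T_g 0 _ hm] at hσp
  have hU0 : S.U (σ 0) = S.f 0 / 2 := by rw [hσp, S.U_g 0 _ hm]
  set V : Set ℝ := {s | S.U (σ s) = S.f 0 / 2 ∧ S.f s = S.f 0} with hV
  have cl : IsClosed V :=
    (isClosed_eq (S.U_cont.comp hσ.cont) continuous_const).inter
      (isClosed_eq S.f_cont continuous_const)
  have op : IsOpen V := by
    rw [Metric.isOpen_iff]
    rintro s ⟨h1, h2⟩
    have hi : S.Int (σ s) := by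
      rw [Int, hσ.T_eq, h1, h2]; constructor <;> linarith
    obtain ⟨δ, hδ, hb⟩ := Metric.eventually_nhds_iff.1 (int_nhds hσ hi)
    have iσ : ∀ r ∈ Ioo (s - δ) (s + δ), S.Int (σ r) := fun r hr => hb (by
      rw [Real.dist_eq, abs_lt]; constructor <;> linarith [hr.1, hr.2])
    refine ⟨δ, hδ, fun r hr => ?_⟩
    rw [Metric.mem_ball, Real.dist_eq, abs_lt] at hr
    have hr' : r ∈ Ioo (s - δ) (s + δ) := ⟨by linarith [hr.1], by linarith [hr.2]⟩
    have hs' : s ∈ Ioo (s - δ) (s + δ) := ⟨by linarith, by linarith⟩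
    rcases le_total r s with h | h
    · exact ⟨(U_const hσ iσ hr' hs' h).trans h1, (f_const hσ iσ hr' hs' h).trans h2⟩
    · exact ⟨(U_const hσ iσ hs' hr' h).symm.trans h1, (f_const hσ iσ hs' hr' h).symm.trans h2⟩
  have hu : V = univ := IsClopen.eq_univ ⟨cl, op⟩ ⟨0, hU0, rfl⟩
  have hall : ∀ s, s ∈ V := fun s => by rw [hu]; trivial
  exact ⟨S.f 0, S.f 0 / 2, σ, by linarith, by linarith, hσ, fun s => (hall s).1,
    fun s => (hall s).2⟩

lemma dist_formula (S : Strip X) {A u0 : ℝ} {σ : ℝ → X} (h0 : 0 < u0) (h1 : u0 < A)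
    (hσ : S.TLine σ) (hU : ∀ s, S.U (σ s) = u0) (hf : ∀ s, S.f s = A) {z w : X}
    (hzw : S.U z ≤ S.U w) :
    dist z w ^ 2 = (S.T z - S.T w) ^ 2 + (S.U z - S.U w) ^ 2 := by
  have iσ : ∀ s ∈ Ioo (min (S.T z) (S.T w) - 1) (max (S.T z) (S.T w) + 1), S.Int (σ s) :=
    fun s _ => by rw [Int, hU, hf]; exact ⟨h0, h1⟩
  have hz : S.T z ∈ Ioo (min (S.T z) (S.T w) - 1) (max (S.T z) (S.T w) + 1) :=
    ⟨by linarith [min_le_left (S.T z) (S.T w)], by linarith [le_max_left (S.T z) (S.T w)]⟩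
  have hw : S.T w ∈ Ioo (min (S.T z) (S.T w) - 1) (max (S.T z) (S.T w) + 1) :=
    ⟨by linarith [min_le_right (S.T z) (S.T w)], by linarith [le_max_right (S.T z) (S.T w)]⟩
  have hy : ∀ x, S.y σ x = S.U x - u0 := fun x => by rw [y, hU]
  have uz := S.U_mem z
  have uw := S.U_mem w
  rw [hf] at uz uw
  have e : S.U z - u0 - (S.U w - u0) = S.U z - S.U w := by ring
  apply le_antisymm
  · by_cases hb0 : S.U w = 0
    · have hz0 : S.U z = 0 := le_antisymm (hb0 ▸ hzw) uz.1
      have := S.line0 (S.T z) (S.T w)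
      have ez := S.g_TU z
      have ew := S.g_TU w
      rw [hz0] at ez
      rw [hb0] at ew
      simp only [ez, ew] at this
      rw [this, sq_abs, hz0, hb0]; simp
    by_cases hb1 : S.U z = A
    · have hw1 : S.U w = A := le_antisymm uw.2 (hb1 ▸ hzw)
      have := S.line1 (S.T z) (S.T w)
      have ez := S.g_TU z
      have ew := S.g_TU w
      rw [hb1] at ez
      rw [hw1] at ew
      simp only [hf, ez, ew] at this
      rw [this, sq_abs, hb1, hw1]; simp
    have w0 : 0 < S.U w := lt_of_le_of_ne uw.1 (Ne.symm hb0)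
    have z1 : S.U z < A := lt_of_le_of_ne uz.2 hb1
    have k := up hσ iσ hz hw (by
      intro r hr
      rw [hy, hy, hU, hf]
      have b1 : 0 < r * S.U w := mul_pos hr.1 w0
      have b2 : 0 ≤ (1 - r) * S.U z := mul_nonneg (by linarith [hr.2]) uz.1
      have b3 : 0 < (1 - r) * (A - S.U z) := mul_pos (by linarith [hr.2]) (by linarith)
      have b4 : 0 ≤ r * (A - S.U w) := mul_nonneg hr.1.le (by linarith [uw.2])
      constructor <;> linarith)
    rw [hy, hy, e] at k
    have k2 := pow_le_pow_left₀ dist_nonneg k 2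
    rwa [Real.sq_sqrt (by positivity)] at k2
  · have k := low hσ iσ hz hw (by rw [hy, hy]; linarith) (by
      intro x _ x1 x2
      rw [hy, hy] at x1 x2
      rw [Int, hf]
      constructor <;> linarith [uz.1, uw.2])
    rwa [hy, hy, e] at k

theorem conclusion (S : Strip X) : ∃ a : ℝ, 0 ≤ a ∧
      Nonempty (X ≃ᵢ {p : EuclideanSpace ℝ (Fin 2) | p 1 ∈ Set.Icc 0 a}) := by
  obtain ⟨A, u0, σ, h0, h1, hσ, hU, hf⟩ := S.exists_const
  have hd : ∀ z w, dist z w ^ 2 = (S.T z - S.T w) ^ 2 + (S.U z - S.U w) ^ 2 := by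
    intro z w
    rcases le_total (S.U z) (S.U w) with h | h
    · exact S.dist_formula h0 h1 hσ hU hf h
    · rw [dist_comm, S.dist_formula h0 h1 hσ hU hf h]; ring
  refine ⟨A, by linarith, ?_⟩
  let F : X → {p : EuclideanSpace ℝ (Fin 2) | p 1 ∈ Set.Icc 0 A} := fun z =>
    ⟨!₂[S.T z, S.U z], by
      have := S.U_mem z
      rw [hf] at this
      simpa using this⟩
  have hF : Isometry F := by
    refine Isometry.of_dist_eq fun z w => ?_
    rw [Subtype.dist_eq, EuclideanSpace.dist_eq]
    simp only [F, Fin.sum_univ_two, Real.dist_eq, sq_abs]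
    have : dist z w = √(dist z w ^ 2) := (Real.sqrt_sq dist_nonneg).symm
    rw [this, hd]
    simp
  have hs : Function.Surjective F := by
    rintro ⟨p, hp⟩
    have hp' : p 1 ∈ Icc 0 (S.f (p 0)) := by rw [hf]; exact hp
    refine ⟨S.g (p 0) (p 1), Subtype.ext ?_⟩
    ext i
    fin_cases i
    · simpa [F] using S.T_g _ _ hp'
    · simpa [F] using S.U_g _ _ hp'
  exact ⟨⟨Equiv.ofBijective F ⟨hF.injective, hs⟩, hF⟩⟩

end Strip

/-- **Flat strip theorem for ptolemaic spaces.** -/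
theorem flat_strip_theorem (X : Type*) [MetricSpace X]
    (hPT : Ptolemaic X) (hgeo : GeodesicMetricSpace X)
    (h : (ℝ × (Set.Icc (0:ℝ) 1)) ≃ₜ X)
    (c₀ c₁ : ℝ → X)
    (hc₀ : IsGeodesicLine c₀) (hc₁ : IsGeodesicLine c₁)
    (hpar : ParallelLines c₀ c₁)
    (him₀ : Set.range c₀ = ⇑h '' {p : ℝ × (Set.Icc (0:ℝ) 1) | (p.2 : ℝ) = 0})
    (him₁ : Set.range c₁ = ⇑h '' {p : ℝ × (Set.Icc (0:ℝ) 1) | (p.2 : ℝ) = 1}) :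
    ∃ a : ℝ, 0 ≤ a ∧
      Nonempty (X ≃ᵢ {p : EuclideanSpace ℝ (Fin 2) | p 1 ∈ Set.Icc 0 a}) := by
  obtain ⟨S⟩ := exists_TS X hPT hgeo h c₀ c₁ hc₀ hc₁ hpar him₀ him₁
  exact S.strip.conclusion
end

section
/- Let X be a proper geodesic ptolemaic metric space. Then X is strictly distance convex: for every p ∈ X and every geodesic c : [0,1] → X (with d(c(s),c(t)) = λ|s−t| for some λ > 0) such that d(c(s),c(t)) > |d(p,c(s)) − d(p,c(t))| for all s ≠ t in [0,1], the function t ↦ d(p, c(t)) is strictly convex on [0,1]. -/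
open Metric Set Filter Topology

/-- Distance functions are convex along (ratio) geodesic points. -/
theorem pt_convex {X : Type*} [MetricSpace X] (hPT : Ptolemaic X) (p x z r : X) (t : ℝ)
    (hs : 0 < dist x z) (hxr : dist x r = t * dist x z) (hrz : dist r z = (1 - t) * dist x z) :
    dist p r ≤ (1 - t) * dist p x + t * dist p z := by
  have h := hPT p r x z
  rw [hrz, dist_comm r x, hxr] at h
  have : dist p r * dist x z ≤ ((1 - t) * dist p x + t * dist p z) * dist x z := by linarith
  exact le_of_mul_le_mul_right this hs

/-- Ratio points in geodesic spaces. -/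
theorem geo_point {X : Type*} [MetricSpace X] (hgeo : GeodesicMetricSpace X) (x z : X) (t : ℝ)
    (h0 : 0 ≤ t) (h1 : t ≤ 1) :
    ∃ r, dist x r = t * dist x z ∧ dist r z = (1 - t) * dist x z := by
  obtain ⟨c, c0, c1, hc⟩ := hgeo x z
  refine ⟨c t, ?_, ?_⟩
  · have := hc 0 (by simp) t ⟨h0, h1⟩
    rw [c0] at this
    rw [this, zero_sub, abs_neg, abs_of_nonneg h0, mul_comm]
  · have := hc t ⟨h0, h1⟩ 1 (by simp)
    rw [c1] at this
    rw [this, abs_sub_comm, abs_of_nonneg (by linarith), mul_comm]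

/-- The pure inequality part of the key lemma. -/
theorem key_ineq (t s h F f e w y k b : ℝ) (ht0 : 0 < t) (ht1 : t < 1) (hs : 0 < s)
    (hF : 0 ≤ F) (he : 0 < e) (hw : |w| ≤ e) (hy0 : 0 ≤ y) (hy : |y - t * s| ≤ e)
    (hk : 0 ≤ k) (hsw : 0 ≤ s + w)
    (hb : t * s - (1 - t) * w ≤ b)
    (P1 : b * y ≤ t * (s + w) * (t * s) + e * k)
    (P2 : f * (s + w) ≤ F * y + (h - e) * ((1 - t) * s))
    (hf : (1 - t) * h + t * F ≤ f) :
    (1 - t) * (t * s) * (s - |h - F|) ≤ F * (e + k) := by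
  have hts : 0 < t * s := by positivity
  have a1 : w * (y - t * s) ≤ e * e := by
    calc w * (y - t * s) ≤ |w * (y - t * s)| := le_abs_self _
      _ = |w| * |y - t * s| := abs_mul _ _
      _ ≤ e * e := by gcongr
  have a2 : (1 - t) * (w * (y - t * s)) ≤ e * e := by
    calc (1 - t) * (w * (y - t * s)) ≤ (1 - t) * (e * e) := by
          apply mul_le_mul_of_nonneg_left a1; linarith
      _ ≤ e * e := by nlinarith [mul_self_nonneg e]
  have a3 := mul_le_mul_of_nonneg_right hb hy0
  have a4 : (t * s) * y ≤ (t * s) * (t * s) + t * s * w + e * (e + k) := by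
    nlinarith
  have a5 := mul_le_mul_of_nonneg_right hf hsw
  have a6 := mul_le_mul_of_nonneg_left a4 hF
  have a7 := mul_le_mul_of_nonneg_left (a5.trans P2) hts.le
  have a8 : (1 - t) * (t * s) * ((h - F) * w + e * s) ≤ e * (F * (e + k)) := by
    nlinarith
  have a9 : -(|h - F| * e) ≤ (h - F) * w := by
    have : |(h - F) * w| ≤ |h - F| * e := by rw [abs_mul]; gcongr
    exact (abs_le.mp this).1
  have a10 : 0 ≤ (1 - t) * (t * s) := mul_nonneg (by linarith) hts.le
  have a11 : (1 - t) * (t * s) * (e * (s - |h - F|)) ≤ (1 - t) * (t * s) * ((h - F) * w + e * s) :=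
    mul_le_mul_of_nonneg_left (by linarith) a10
  refine le_of_mul_le_mul_left ?_ he
  linarith

/-- Key lemma: some ratio point is strictly closer to `p` than the affine bound. -/
theorem key_lemma {X : Type*} [MetricSpace X] [ProperSpace X]
    (hPT : Ptolemaic X) (hgeo : GeodesicMetricSpace X) (p x z : X) (t : ℝ)
    (ht0 : 0 < t) (ht1 : t < 1) (hlt : |dist p x - dist p z| < dist x z) :
    ∃ r, dist x r = t * dist x z ∧ dist r z = (1 - t) * dist x z ∧
      dist p r < (1 - t) * dist p x + t * dist p z := by
  have hs : 0 < dist x z := lt_of_le_of_lt (abs_nonneg _) hlt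
  have hh : 0 < dist p x := by
    rcases (dist_nonneg (x := p) (y := x)).eq_or_lt with h | h
    · have : p = x := dist_eq_zero.mp h.symm
      subst this
      simp at hlt
    · exact h
  have hn : ∀ n : ℕ, (0:ℝ) < 1 / ((n:ℝ) + 1) ∧ 1 / ((n:ℝ) + 1) ≤ 1 := fun n =>
    ⟨Nat.one_div_pos_of_nat, by
      rw [div_le_one (by positivity)]; linarith [(Nat.cast_nonneg n : (0:ℝ) ≤ n)]⟩
  choose σ hσ1 hσ2 using fun n : ℕ => geo_point hgeo x p (1 / ((n:ℝ) + 1)) (hn n).1.le (hn n).2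
  choose r hr1 hr2 using fun n : ℕ => geo_point hgeo (σ n) z t ht0.le ht1.le
  have hσlim : Tendsto σ atTop (𝓝 x) := by
    rw [tendsto_iff_dist_tendsto_zero]
    have := (tendsto_one_div_add_atTop_nhds_zero_nat (𝕜 := ℝ)).mul_const (dist x p)
    rw [zero_mul] at this
    exact this.congr fun n => by rw [← hσ1 n, dist_comm]
  have hmem : ∀ n, r n ∈ closedBall z (dist x p + dist x z) := by
    intro n
    rw [mem_closedBall, hr2]
    have h1 : dist (σ n) z ≤ dist x p + dist x z := by
      have := dist_triangle (σ n) x z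
      have h2 : dist (σ n) x ≤ dist x p := by
        rw [dist_comm, hσ1]; nlinarith [(hn n).2, dist_nonneg (x := x) (y := p)]
      linarith
    nlinarith [dist_nonneg (x := σ n) (y := z)]
  obtain ⟨ρ, -, φ, hφ, hlim⟩ := (isCompact_closedBall z _).tendsto_subseq hmem
  have hσφ : Tendsto (σ ∘ φ) atTop (𝓝 x) := hσlim.comp hφ.tendsto_atTop
  have e1 : dist x ρ = t * dist x z := by
    have l1 := hσφ.dist hlim
    have l2 := (hσφ.dist (tendsto_const_nhds (x := z))).const_mul t
    exact tendsto_nhds_unique l1 (l2.congr fun n => (hr1 (φ n)).symm)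
  have e2 : dist ρ z = (1 - t) * dist x z := by
    have l1 := hlim.dist (tendsto_const_nhds (x := z))
    have l2 := (hσφ.dist (tendsto_const_nhds (x := z))).const_mul (1 - t)
    exact tendsto_nhds_unique l1 (l2.congr fun n => (hr2 (φ n)).symm)
  refine ⟨ρ, e1, e2, ?_⟩
  by_contra hcon
  push Not at hcon
  have main : ∀ n, (1 - t) * (t * dist x z) * (dist x z - |dist p x - dist p z|) ≤
      dist p z * (dist x ((σ ∘ φ) n) + dist ρ ((r ∘ φ) n)) := by
    intro n
    simp only [Function.comp]
    set q := σ (φ n) with hq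
    set rn := r (φ n) with hrn
    have hr1' := hr1 (φ n)
    have hr2' := hr2 (φ n)
    have hσ1' := hσ1 (φ n)
    have hσ2' := hσ2 (φ n)
    rw [← hq, ← hrn] at hr1' hr2'
    rw [← hq] at hσ1' hσ2'
    have hxp : 0 < dist x p := by rwa [dist_comm]
    refine key_ineq t (dist x z) (dist p x) (dist p z) (dist p ρ) (dist x q)
      (dist q z - dist x z) (dist ρ q) (dist ρ rn) (dist rn x) ht0 ht1 hs dist_nonneg ?_ ?_
      dist_nonneg ?_ dist_nonneg ?_ ?_ ?_ ?_ hcon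
    · rw [hσ1']; exact mul_pos (hn _).1 hxp
    · rw [dist_comm x q]; exact abs_dist_sub_le q x z
    · rw [← e1, dist_comm ρ q, dist_comm x q]; exact abs_dist_sub_le q x ρ
    · linarith [dist_nonneg (x := q) (y := z)]
    · have := dist_triangle x rn z
      rw [hr2', dist_comm x rn] at this
      linarith
    · have := hPT rn x ρ q
      rw [e1, dist_comm rn q, hr1', dist_comm rn ρ] at this
      linarith
    · have := hPT p ρ q z
      rw [e2, dist_comm p q, hσ2'] at this
      have h3 : dist p x - dist x q = (1 - 1 / ((φ n : ℝ) + 1)) * dist x p := by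
        rw [hσ1', dist_comm p x]; ring
      rw [h3]
      linarith
  have lim : Tendsto (fun n => dist p z * (dist x ((σ ∘ φ) n) + dist ρ ((r ∘ φ) n))) atTop
      (𝓝 (dist p z * (dist x x + dist ρ ρ))) :=
    ((tendsto_const_nhds.dist hσφ).add (tendsto_const_nhds.dist hlim)).const_mul _
  have := ge_of_tendsto' lim main
  simp only [dist_self, add_zero, mul_zero] at this
  have : 0 < (1 - t) * (t * dist x z) * (dist x z - |dist p x - dist p z|) :=
    mul_pos (mul_pos (by linarith) (by positivity)) (by linarith)
  linarith

/-- Ratio points are unique. -/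
theorem point_unique {X : Type*} [MetricSpace X] [ProperSpace X]
    (hPT : Ptolemaic X) (hgeo : GeodesicMetricSpace X) (x y m m' : X) (t : ℝ)
    (hm1 : dist x m = t * dist x y) (hm2 : dist m y = (1 - t) * dist x y)
    (hm1' : dist x m' = t * dist x y) (hm2' : dist m' y = (1 - t) * dist x y) : m = m' := by
  by_contra hne
  have hd : 0 < dist m m' := dist_pos.mpr hne
  obtain ⟨r, h1, h2, h3⟩ := key_lemma hPT hgeo x m m' (1/2) (by norm_num) (by norm_num)
    (by rw [hm1, hm1']; simpa using hne)
  have h4 := pt_convex hPT y m m' r (1/2) hd h1 h2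
  rw [dist_comm y m, dist_comm y m', hm2, hm2'] at h4
  rw [hm1, hm1'] at h3
  have := dist_triangle x r y
  rw [dist_comm r y] at this
  linarith

/-- **A proper geodesic PT space is strictly distance convex.** -/
theorem proper_geodesic_ptolemaic_strictly_distance_convex
    (X : Type*) [MetricSpace X] [ProperSpace X]
    (hPT : Ptolemaic X) (hgeo : GeodesicMetricSpace X)
    (p : X) (c : ℝ → X) (l : ℝ) (hl : 0 < l)
    (hc : ∀ s ∈ Set.Icc (0:ℝ) 1, ∀ t ∈ Set.Icc (0:ℝ) 1,
      dist (c s) (c t) = l * |s - t|)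
    (hstrict : ∀ s ∈ Set.Icc (0:ℝ) 1, ∀ t ∈ Set.Icc (0:ℝ) 1, s ≠ t →
      |dist p (c s) - dist p (c t)| < dist (c s) (c t)) :
    StrictConvexOn ℝ (Set.Icc (0:ℝ) 1) (fun t => dist p (c t)) := by
  refine ⟨convex_Icc 0 1, ?_⟩
  intro x hx y hy hxy a b ha hb hab
  have hm : a • x + b • y ∈ Set.Icc (0:ℝ) 1 := convex_Icc 0 1 hx hy ha.le hb.le hab
  have ha' : a = 1 - b := by linarith
  simp only [smul_eq_mul] at hm ⊢
  obtain ⟨r, h1, h2, h3⟩ := key_lemma hPT hgeo p (c x) (c y) b hb (by linarith)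
    (hstrict x hx y hy hxy)
  have k1 : dist (c x) (c (a * x + b * y)) = b * dist (c x) (c y) := by
    rw [hc x hx _ hm, hc x hx y hy, show x - (a * x + b * y) = b * (x - y) by rw [ha']; ring,
      abs_mul, abs_of_pos hb]; ring
  have k2 : dist (c (a * x + b * y)) (c y) = (1 - b) * dist (c x) (c y) := by
    rw [hc _ hm y hy, hc x hx y hy, show (a * x + b * y) - y = a * (x - y) by rw [ha']; ring,
      abs_mul, abs_of_pos ha, ha']; ring
  rw [point_unique hPT hgeo _ _ _ _ b k1 k2 h1 h2, ha']
  exact h3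
end

section
/- Let X be a proper geodesic ptolemaic metric space. Then for all x,y ∈ X there exists a unique midpoint m(x,y) ∈ X, i.e. a unique point m with d(x,m) = d(m,y) = d(x,y)/2, and the resulting midpoint map m : X × X → X is continuous. -/
open Metric Set Filter Topology

namespace PTMid

/-- Symmetric second differences at a point of differentiability are `o(η)`. -/
lemma symm_diff {f : ℝ → ℝ} {τ : ℝ} (hf : DifferentiableAt ℝ f τ) {ε : ℝ} (hε : 0 < ε) :
    ∀ᶠ η in 𝓝[>] (0:ℝ), |f (τ + η) + f (τ - η) - 2 * f τ| ≤ ε * η := by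
  have h := (hasDerivAt_iff_isLittleO_nhds_zero.1 hf.hasDerivAt)
  have h1 := h.def (half_pos hε)
  have h2 : ∀ᶠ η in 𝓝 (0:ℝ), ‖f (τ + -η) - f τ - (-η) • deriv f τ‖ ≤ ε / 2 * ‖-η‖ := by
    have : Tendsto (fun η : ℝ => -η) (𝓝 0) (𝓝 0) := by
      simpa using (continuous_neg (G := ℝ)).tendsto 0
    exact this.eventually h1
  filter_upwards [nhdsWithin_le_nhds h1, nhdsWithin_le_nhds h2, self_mem_nhdsWithin]
    with η a b hη
  have hη : 0 < η := hη
  rw [norm_neg] at b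
  simp only [Real.norm_eq_abs, smul_eq_mul, abs_of_pos hη] at a b
  rw [← sub_eq_add_neg] at b
  rw [abs_le] at a b ⊢
  constructor <;> linarith [a.1, a.2, b.1, b.2]

variable {X : Type*} [MetricSpace X]

lemma ae_diff {e : ℝ → X} {R : NNReal} (he : LipschitzWith R e) (q : X) :
    ∀ᵐ t : ℝ, DifferentiableAt ℝ (fun s => dist q (e s)) t := by
  have : LipschitzWith (1 * R) (fun s => dist q (e s)) :=
    (LipschitzWith.dist_right q).comp he
  exact this.ae_differentiableAt

lemma dist_symm_diff (hPT : Ptolemaic X) {e : ℝ → X} {R : NNReal} (he : LipschitzWith R e)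
    {S : Set X} (hS : Dense S) {τ : ℝ}
    (hd : ∀ q ∈ S, DifferentiableAt ℝ (fun s => dist q (e s)) τ)
    {p : X} (hp : 0 < dist p (e τ)) {ε : ℝ} (hε : 0 < ε) :
    ∀ᶠ η in 𝓝[>] (0:ℝ),
      dist p (e (τ + η)) + dist p (e (τ - η)) - 2 * dist p (e τ) ≤ ε * η := by
  set D := dist p (e τ) with hD
  have hR : (0:ℝ) ≤ R := R.2
  obtain ⟨δ, hδ0, hδD, hδR⟩ : ∃ δ : ℝ, 0 < δ ∧ δ ≤ D / 2 ∧ 8 * R * δ ≤ ε * D := by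
    refine ⟨min (D / 2) (ε * D / (8 * R + 1)), by positivity, min_le_left _ _, ?_⟩
    have h1 : min (D / 2) (ε * D / (8 * R + 1)) ≤ ε * D / (8 * R + 1) := min_le_right _ _
    have h3 : 0 < min (D / 2) (ε * D / (8 * R + 1)) := by positivity
    rw [le_div_iff₀ (by positivity)] at h1
    linarith
  obtain ⟨q, hqS, hq⟩ := hS.exists_dist_lt p hδ0
  have hev := symm_diff (hd q hqS) (ε := ε / 4) (by positivity)
  filter_upwards [hev, self_mem_nhdsWithin] with η h1 hη
  have hη : 0 < η := hη
  have hqD : D / 2 ≤ dist q (e τ) := by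
    have := dist_triangle p q (e τ)
    linarith
  have key : ∀ s, dist p (e s) * dist q (e τ) ≤ D * dist q (e s) + R * |s - τ| * δ := by
    intro s
    have a := hPT p (e s) q (e τ)
    have b : dist (e s) (e τ) ≤ R * |s - τ| := by
      simpa [Real.dist_eq] using he.dist_le_mul s τ
    have c : dist p q * dist (e s) (e τ) ≤ δ * (R * |s - τ|) :=
      mul_le_mul hq.le b dist_nonneg hδ0.le
    rw [dist_comm (e s) q] at a
    linarith
  have k1 := key (τ + η)
  have k2 := key (τ - η)
  have e1 : |τ + η - τ| = η := by rw [add_sub_cancel_left, abs_of_pos hη]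
  have e2 : |τ - η - τ| = η := by rw [sub_sub_cancel_left, abs_neg, abs_of_pos hη]
  rw [e1] at k1
  rw [e2] at k2
  have h1' := (abs_le.1 h1).2
  have h3 : D * (dist q (e (τ + η)) + dist q (e (τ - η)) - 2 * dist q (e τ))
      ≤ D * (ε / 4 * η) := mul_le_mul_of_nonneg_left h1' hp.le
  have h4 : 8 * R * δ * η ≤ ε * D * η := mul_le_mul_of_nonneg_right hδR hη.le
  by_contra hcon
  push Not at hcon
  have h5 : ε * η * dist q (e τ) <
      (dist p (e (τ + η)) + dist p (e (τ - η)) - 2 * D) * dist q (e τ) :=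
    mul_lt_mul_of_pos_right hcon (by linarith)
  have h6 : ε * η * (D / 2) ≤ ε * η * dist q (e τ) :=
    mul_le_mul_of_nonneg_left hqD (by positivity)
  nlinarith

lemma exists_mid (hgeo : GeodesicMetricSpace X) (x y : X) :
    ∃ m : X, dist x m = dist x y / 2 ∧ dist m y = dist x y / 2 := by
  obtain ⟨c, h0, h1, h⟩ := hgeo x y
  refine ⟨c (1/2), ?_, ?_⟩
  · have := h 0 (by norm_num) (1/2) (by constructor <;> norm_num)
    rw [h0] at this
    rw [this, show |(0:ℝ) - 1/2| = 1/2 by rw [abs_of_neg] <;> norm_num]; ring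
  · have := h (1/2) (by constructor <;> norm_num) 1 (by norm_num)
    rw [h1] at this
    rw [this, show |(1/2:ℝ) - 1| = 1/2 by rw [abs_of_neg] <;> norm_num]; ring

lemma core [SecondCountableTopology X] (hPT : Ptolemaic X) (hgeo : GeodesicMetricSpace X)
    {x y : X} {R : NNReal} (hR : 0 < R) (hxy : dist x y = 2 * R) {e₁ e₂ : ℝ → X}
    (l₁ : LipschitzWith R e₁) (l₂ : LipschitzWith R e₂)
    (x₁ : ∀ u ∈ Icc (0:ℝ) 1, dist x (e₁ u) = R * u)
    (x₂ : ∀ u ∈ Icc (0:ℝ) 1, dist x (e₂ u) = R * u)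
    (y₁ : ∀ u ∈ Icc (0:ℝ) 1, dist y (e₁ u) = R * (2 - u))
    (y₂ : ∀ u ∈ Icc (0:ℝ) 1, dist y (e₂ u) = R * (2 - u)) :
    e₁ 1 = e₂ 1 := by
  by_contra hne
  have hR' : (0:ℝ) < R := hR
  set F : ℝ → ℝ := fun s => dist (e₁ s) (e₂ s) with hF
  have hFc : Continuous F := l₁.continuous.dist l₂.continuous
  have hFd : ∀ᵐ t : ℝ, DifferentiableAt ℝ F t := by
    have : LipschitzWith (R + R) F := by
      apply LipschitzWith.of_dist_le_mul
      intro s t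
      have a := l₁.dist_le_mul s t
      have b := l₂.dist_le_mul s t
      have := dist_dist_dist_le (e₁ s) (e₂ s) (e₁ t) (e₂ t)
      push_cast
      simp only [hF]
      linarith
    exact this.ae_differentiableAt
  obtain ⟨S, hSc, hS⟩ := TopologicalSpace.exists_countable_dense X
  have hd₁ : ∀ᵐ t : ℝ, ∀ q ∈ S, DifferentiableAt ℝ (fun s => dist q (e₁ s)) t :=
    (MeasureTheory.ae_ball_iff hSc).2 fun q _ => ae_diff l₁ q
  have hd₂ : ∀ᵐ t : ℝ, ∀ q ∈ S, DifferentiableAt ℝ (fun s => dist q (e₂ s)) t :=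
    (MeasureTheory.ae_ball_iff hSc).2 fun q _ => ae_diff l₂ q
  have hdense := MeasureTheory.Measure.dense_of_ae (hFd.and (hd₁.and hd₂))
  have hopen : IsOpen ({t | 0 < F t} ∩ Ioo (0:ℝ) 1) :=
    (isOpen_lt continuous_const hFc).inter isOpen_Ioo
  have hnon : ({t | 0 < F t} ∩ Ioo (0:ℝ) 1).Nonempty := by
    have h1 : ∀ᶠ t in 𝓝[<] (1:ℝ), 0 < F t :=
      nhdsWithin_le_nhds ((isOpen_lt continuous_const hFc).mem_nhds (dist_pos.2 hne))
    have h2 : ∀ᶠ t in 𝓝[<] (1:ℝ), t ∈ Ioo (0:ℝ) 1 := Ioo_mem_nhdsLT one_pos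
    obtain ⟨t, ht⟩ := (h1.and h2).exists
    exact ⟨t, ht⟩
  obtain ⟨τ, ⟨hFτ, hτ0, hτ1⟩, hdF, hq₁, hq₂⟩ := hdense.inter_open_nonempty _ hopen hnon
  simp only [Set.mem_ofPred_eq] at hFτ
  obtain ⟨p, hp1, hp2⟩ := exists_mid hgeo (e₁ τ) (e₂ τ)
  have hp1' : dist p (e₁ τ) = F τ / 2 := by rw [dist_comm]; exact hp1
  have hp2' : dist p (e₂ τ) = F τ / 2 := hp2
  have hτm : τ ∈ Icc (0:ℝ) 1 := ⟨hτ0.le, hτ1.le⟩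
  have hpx : dist x p ≤ R * τ := by
    have := hPT x p (e₁ τ) (e₂ τ)
    rw [x₁ τ hτm, x₂ τ hτm, hp1', hp2'] at this
    change dist x p * F τ ≤ _ at this
    nlinarith
  have hpy : dist y p ≤ R * (2 - τ) := by
    have := hPT y p (e₁ τ) (e₂ τ)
    rw [y₁ τ hτm, y₂ τ hτm, hp1', hp2'] at this
    change dist y p * F τ ≤ _ at this
    nlinarith
  have htri := dist_triangle_right x y p
  have hpx' : dist x p = R * τ := by linarith
  have hpy' : dist y p = R * (2 - τ) := by linarith
  have A₁ := dist_symm_diff hPT l₁ hS hq₁ (p := p) (by rw [hp1']; positivity)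
    (ε := F τ / 8) (by positivity)
  have A₂ := dist_symm_diff hPT l₂ hS hq₂ (p := p) (by rw [hp2']; positivity)
    (ε := F τ / 8) (by positivity)
  have A₃ := symm_diff hdF (ε := F τ / 8) (by positivity)
  have A₄ : ∀ᶠ η in 𝓝[>] (0:ℝ), η ∈ Ioo (0:ℝ) (min τ (1 - τ)) :=
    Ioo_mem_nhdsGT (lt_min hτ0 (by linarith))
  obtain ⟨η, B₁, B₂, B₃, hη, hη'⟩ := (A₁.and (A₂.and (A₃.and A₄))).exists
  have hητ : η < τ := lt_of_lt_of_le hη' (min_le_left _ _)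
  have hητ' : η < 1 - τ := lt_of_lt_of_le hη' (min_le_right _ _)
  have mm : τ - η ∈ Icc (0:ℝ) 1 := ⟨by linarith, by linarith⟩
  have mp : τ + η ∈ Icc (0:ℝ) 1 := ⟨by linarith, by linarith⟩
  have C₁ : F (τ - η) * (R * τ) ≤
      R * (τ - η) * (dist p (e₁ (τ - η)) + dist p (e₂ (τ - η))) := by
    have := hPT (e₁ (τ - η)) (e₂ (τ - η)) p x
    rw [dist_comm p x, dist_comm (e₁ (τ - η)) x, dist_comm (e₂ (τ - η)) x,
      dist_comm (e₁ (τ - η)) p, dist_comm (e₂ (τ - η)) p,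
      x₁ _ mm, x₂ _ mm, hpx'] at this
    change F (τ - η) * _ ≤ _ at this
    linarith
  have C₂ : F (τ + η) * (R * (2 - τ)) ≤
      R * (2 - (τ + η)) * (dist p (e₁ (τ + η)) + dist p (e₂ (τ + η))) := by
    have := hPT (e₁ (τ + η)) (e₂ (τ + η)) p y
    rw [dist_comm p y, dist_comm (e₁ (τ + η)) y, dist_comm (e₂ (τ + η)) y,
      dist_comm (e₁ (τ + η)) p, dist_comm (e₂ (τ + η)) p,
      y₁ _ mp, y₂ _ mp, hpy'] at this
    change F (τ + η) * _ ≤ _ at this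
    linarith
  have F1 : 0 ≤ F (τ - η) := dist_nonneg
  have F2 : 0 ≤ F (τ + η) := dist_nonneg
  have D₁ : F (τ - η) * (1 + η / 2) ≤ dist p (e₁ (τ - η)) + dist p (e₂ (τ - η)) := by
    have h1 : (τ - η) * (1 + η / 2) ≤ τ := by nlinarith
    have h2 : F (τ - η) * ((τ - η) * (1 + η / 2)) ≤ F (τ - η) * τ :=
      mul_le_mul_of_nonneg_left h1 F1
    have h3 : R * (F (τ - η) * τ) ≤
      R * ((τ - η) * (dist p (e₁ (τ - η)) + dist p (e₂ (τ - η)))) := by linarith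
    have h4 := le_of_mul_le_mul_left h3 hR'
    refine le_of_mul_le_mul_left ?_ (sub_pos.2 hητ)
    linarith
  have D₂ : F (τ + η) * (1 + η / 2) ≤ dist p (e₁ (τ + η)) + dist p (e₂ (τ + η)) := by
    have h1 : (2 - (τ + η)) * (1 + η / 2) ≤ 2 - τ := by nlinarith
    have h2 : F (τ + η) * ((2 - (τ + η)) * (1 + η / 2)) ≤ F (τ + η) * (2 - τ) :=
      mul_le_mul_of_nonneg_left h1 F2
    have h3 : R * (F (τ + η) * (2 - τ)) ≤
      R * ((2 - (τ + η)) * (dist p (e₁ (τ + η)) + dist p (e₂ (τ + η)))) := by linarith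
    have h4 := le_of_mul_le_mul_left h3 hR'
    refine le_of_mul_le_mul_left ?_ (show 0 < 2 - (τ + η) by linarith)
    linarith
  rw [hp1'] at B₁
  rw [hp2'] at B₂
  have B₃' := (abs_le.1 B₃).1
  have h7 : (2 * F τ - F τ / 8 * η) * (1 + η / 2) ≤ (F (τ + η) + F (τ - η)) * (1 + η / 2) :=
    mul_le_mul_of_nonneg_right (by linarith) (by positivity)
  have h8 : 0 < F τ * η := mul_pos hFτ hη
  have h9 : F τ * η * η ≤ F τ * η * 1 := mul_le_mul_of_nonneg_left (by linarith) h8.le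
  nlinarith

/-- A Lipschitz path from `x` to a midpoint. -/
lemma path (hgeo : GeodesicMetricSpace X) {x y m : X} {R : NNReal} (hxy : dist x y = 2 * R)
    (hxm : dist x m = R) (hmy : dist m y = R) :
    ∃ e : ℝ → X, e 1 = m ∧ LipschitzWith R e ∧
      (∀ u ∈ Icc (0:ℝ) 1, dist x (e u) = R * u) ∧
      (∀ u ∈ Icc (0:ℝ) 1, dist y (e u) = R * (2 - u)) := by
  obtain ⟨c, h0, h1, h⟩ := hgeo x m
  rw [hxm] at h
  have hx : ∀ u ∈ Icc (0:ℝ) 1, dist x (c u) = R * u := by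
    intro u hu
    have := h 0 (by norm_num) u hu
    rwa [h0, zero_sub, abs_neg, abs_of_nonneg hu.1] at this
  have hm : ∀ u ∈ Icc (0:ℝ) 1, dist (c u) m = R * (1 - u) := by
    intro u hu
    have := h u hu 1 (by norm_num)
    rwa [h1, abs_sub_comm, abs_of_nonneg (by linarith [hu.2])] at this
  have hpr : ∀ u ∈ Icc (0:ℝ) 1, ((projIcc (0:ℝ) 1 zero_le_one u : Icc (0:ℝ) 1) : ℝ) = u := by
    intro u hu
    rw [projIcc_of_mem zero_le_one hu]
  refine ⟨fun s => c (projIcc (0:ℝ) 1 zero_le_one s), ?_, ?_, ?_, ?_⟩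
  · simp only [hpr 1 (by norm_num), h1]
  · apply LipschitzWith.of_dist_le_mul
    intro s t
    rw [h _ (projIcc (0:ℝ) 1 zero_le_one s).2 _ (projIcc (0:ℝ) 1 zero_le_one t).2]
    have := (LipschitzWith.projIcc (zero_le_one (α := ℝ))).dist_le_mul s t
    rw [Subtype.dist_eq, Real.dist_eq] at this
    simp only [NNReal.coe_one, one_mul] at this
    exact mul_le_mul_of_nonneg_left this R.2
  · intro u hu
    simp only [hpr u hu]
    exact hx u hu
  · intro u hu
    simp only [hpr u hu]
    have a := dist_triangle (c u) m y
    have b := dist_triangle x (c u) y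
    rw [dist_comm y]
    have := hx u hu
    have := hm u hu
    linarith

lemma unique [SecondCountableTopology X] (hPT : Ptolemaic X) (hgeo : GeodesicMetricSpace X)
    {x y m m' : X} (h1 : dist x m = dist x y / 2) (h2 : dist m y = dist x y / 2)
    (h1' : dist x m' = dist x y / 2) (h2' : dist m' y = dist x y / 2) : m = m' := by
  rcases eq_or_ne x y with rfl | hne
  · rw [dist_self, zero_div] at h1 h1'
    rw [← dist_eq_zero.1 h1, ← dist_eq_zero.1 h1']
  · have hpos : 0 < dist x y := dist_pos.2 hne
    let R : NNReal := ⟨dist x y / 2, by positivity⟩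
    have hRc : (R : ℝ) = dist x y / 2 := rfl
    have hR : 0 < R := by
      rw [← NNReal.coe_pos, hRc]; positivity
    have hxy : dist x y = 2 * R := by rw [hRc]; ring
    obtain ⟨e₁, a, l₁, x₁, y₁⟩ := path hgeo hxy h1 h2
    obtain ⟨e₂, b, l₂, x₂, y₂⟩ := path hgeo hxy h1' h2'
    rw [← a, ← b]
    exact core hPT hgeo hR hxy l₁ l₂ x₁ x₂ y₁ y₂

end PTMid

/-- **Unique midpoints and continuity of the midpoint map in a proper geodesic
PT space.** -/
theorem unique_continuous_midpoints
    (X : Type*) [MetricSpace X] [ProperSpace X]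
    (hPT : Ptolemaic X) (hgeo : GeodesicMetricSpace X) :
    (∀ x y : X, ∃! m : X, dist x m = dist x y / 2 ∧ dist m y = dist x y / 2) ∧
    ∃ m : X × X → X, Continuous m ∧
      ∀ x y : X, dist x (m (x, y)) = dist x y / 2 ∧
        dist (m (x, y)) y = dist x y / 2 := by
  constructor
  · intro x y
    obtain ⟨m, h1, h2⟩ := PTMid.exists_mid hgeo x y
    exact ⟨m, ⟨h1, h2⟩, fun m' h => PTMid.unique hPT hgeo h.1 h.2 h1 h2⟩
  · choose f hf using fun z : X × X => PTMid.exists_mid hgeo z.1 z.2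
    refine ⟨f, ?_, fun x y => hf (x, y)⟩
    apply SeqContinuous.continuous
    intro u z hu
    apply tendsto_of_subseq_tendsto
    intro ns hns
    have hv : Tendsto (fun n => u (ns n)) atTop (𝓝 z) := hu.comp hns
    have hv1 := (continuous_fst.tendsto z).comp hv
    have hv2 := (continuous_snd.tendsto z).comp hv
    have hb : Bornology.IsBounded (range fun n => f (u (ns n))) := by
      obtain ⟨C, hC⟩ := ((hv1.dist (tendsto_const_nhds (x := z.1))).bddAbove_range)
      obtain ⟨C', hC'⟩ := ((hv1.dist hv2).bddAbove_range)
      refine (isBounded_closedBall (x := z.1) (r := C + C' / 2)).subset ?_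
      rintro _ ⟨n, rfl⟩
      have a : dist (u (ns n)).1 z.1 ≤ C := hC ⟨n, rfl⟩
      have b : dist (u (ns n)).1 (u (ns n)).2 ≤ C' := hC' ⟨n, rfl⟩
      have c := dist_triangle_left (f (u (ns n))) z.1 (u (ns n)).1
      have d := (hf (u (ns n))).1
      rw [mem_closedBall]
      linarith
    obtain ⟨a, -, φ, hφ, hlim⟩ := tendsto_subseq_of_bounded hb (fun n => mem_range_self n)
    refine ⟨φ, ?_⟩
    have w1 := hv1.comp hφ.tendsto_atTop
    have w2 := hv2.comp hφ.tendsto_atTop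
    have L := (w1.dist w2).div_const 2
    have e1 := tendsto_nhds_unique ((w1.dist hlim).congr fun n => (hf (u (ns (φ n)))).1) L
    have e2 := tendsto_nhds_unique ((hlim.dist w2).congr fun n => (hf (u (ns (φ n)))).2) L
    have : a = f z := PTMid.unique hPT hgeo e1 e2 (hf z).1 (hf z).2
    rw [← this]
    exact hlim
end
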